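/- arXiv:0801.0300 — 2 statements merged into one kernel-verified Lean document; each statement's English description precedes it below -/
import Mathlib

section
/- (Complete local characterisation of metrisability) Let A₀, A₁, A₂, A₃ be real analytic. Then (A₀,A₁,A₂,A₃) is metrisable in a sufficiently small neighbourhood of p ∈ U if and only if the 21×6 matrix M_max, whose rows are V together with all symmetrised iterated derivatives D_{(a₁}⋯D_{a_j)}V for 1 ≤ j ≤ 5, has rank smaller than 6 on a neighbourhood of p, and there exists a real-analytic map W = (W₁,…,W₆) into the kernel of M_max on that neighbourhood with W₁W₃ − W₂² ≠ 0 at p. -/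
/-!
After rescaling by a power of the discriminant, metrics correspond to the nondegenerate solutions
of a linear system for `(a, b, c)`, the Liouville system. Its prolongation is a connection of rank
six whose curvature is `s ↦ (0, …, 0, V · s)`.

A metric therefore gives a parallel section `s`. It is analytic, being transported along rays, and
`V · s = 0`; differentiating, `s` is killed by all the derivatives of `V`, hence by `M_max`.

Conversely let `W` be a field in the kernel of `M_max`. By polarisation the rows of `M_max` control
the iterated derivatives of `V` of order at most five in every fixed direction `v`. On the line
through `p` along `v` these are six rows killed by `W`. Linear dependence over formal power series
in the line parameter then shows that the value `W p` is killed by the derivatives at `p` of every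
order. So, for the extension `s` of `W p` that is parallel along rays, the analytic function `V · s`
vanishes identically. The curvature kills `s`, which makes `s` parallel, and its first three
components solve the Liouville system.
-/

noncomputable section

open Matrix

/-- Partial derivative in the first (x) variable. -/
def pdx (f : ℝ × ℝ → ℝ) : ℝ × ℝ → ℝ :=
  fun p => deriv (fun t => f (t, p.2)) p.1

/-- Partial derivative in the second (y) variable. -/
def pdy (f : ℝ × ℝ → ℝ) : ℝ × ℝ → ℝ :=
  fun p => deriv (fun t => f (p.1, t)) p.2

/-- `pd 0 = ∂ₓ`, `pd 1 = ∂_y`. -/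
def pd : Fin 2 → (ℝ × ℝ → ℝ) → (ℝ × ℝ → ℝ) := ![pdx, pdy]

/-- The Liouville linear system associated to `(A0, A1, A2, A3)`, holding on `U`. -/
def LiouvilleSystem (U : Set (ℝ × ℝ)) (A0 A1 A2 A3 ψ1 ψ2 ψ3 : ℝ × ℝ → ℝ) : Prop :=
  ∀ p ∈ U,
    pdx ψ1 p = (2/3) * A1 p * ψ1 p - 2 * A0 p * ψ2 p ∧
    pdy ψ3 p = 2 * A3 p * ψ2 p - (2/3) * A2 p * ψ3 p ∧
    pdy ψ1 p + 2 * pdx ψ2 p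
      = (4/3) * A2 p * ψ1 p - (2/3) * A1 p * ψ2 p - 2 * A0 p * ψ3 p ∧
    pdx ψ3 p + 2 * pdy ψ2 p
      = 2 * A3 p * ψ1 p - (4/3) * A1 p * ψ3 p + (2/3) * A2 p * ψ2 p

/-- `(A0, A1, A2, A3)` is metrisable near `p` (within `U`). -/
def MetrisableNear (U : Set (ℝ × ℝ)) (A0 A1 A2 A3 : ℝ × ℝ → ℝ) (p : ℝ × ℝ) : Prop :=
  ∃ V : Set (ℝ × ℝ), IsOpen V ∧ p ∈ V ∧ V ⊆ U ∧
    ∃ E F G : ℝ × ℝ → ℝ,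
      ContDiffOn ℝ (⊤ : ℕ∞) E V ∧ ContDiffOn ℝ (⊤ : ℕ∞) F V ∧ ContDiffOn ℝ (⊤ : ℕ∞) G V ∧
      (∀ q ∈ V, E q * G q - (F q) ^ 2 ≠ 0) ∧
      (∀ q ∈ V,
        A0 q = (E q * pdy E q - 2 * E q * pdx F q + F q * pdx E q)
                 / (2 * (E q * G q - (F q) ^ 2)) ∧
        A1 q = (3 * F q * pdy E q + G q * pdx E q - 2 * F q * pdx F q - 2 * E q * pdx G q)
                 / (2 * (E q * G q - (F q) ^ 2)) ∧
        A2 q = (2 * F q * pdy F q + 2 * G q * pdy E q - 3 * F q * pdx G q - E q * pdy G q)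
                 / (2 * (E q * G q - (F q) ^ 2)) ∧
        A3 q = (2 * G q * pdy F q - G q * pdx G q - F q * pdy G q)
                 / (2 * (E q * G q - (F q) ^ 2)))

end

noncomputable section

/-- Liouville's first projective invariant `L₁`. -/
def Lio1 (A0 A1 A2 A3 : ℝ × ℝ → ℝ) : ℝ × ℝ → ℝ := fun p =>
  (2/3) * pdx (pdy A1) p - (1/3) * pdx (pdx A2) p - pdy (pdy A0) p
    + A0 p * pdy A2 p + A2 p * pdy A0 p - A3 p * pdx A0 p - 2 * A0 p * pdx A3 p
    - (2/3) * A1 p * pdy A1 p + (1/3) * A1 p * pdx A2 p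

/-- Liouville's second projective invariant `L₂`. -/
def Lio2 (A0 A1 A2 A3 : ℝ × ℝ → ℝ) : ℝ × ℝ → ℝ := fun p =>
  (2/3) * pdx (pdy A2) p - (1/3) * pdy (pdy A1) p - pdx (pdx A3) p
    - A3 p * pdx A1 p - A1 p * pdx A3 p + A0 p * pdy A3 p + 2 * A3 p * pdy A0 p
    + (2/3) * A2 p * pdx A2 p - (1/3) * A2 p * pdy A1 p

/-- The row vector `V = (V₁,…,V₆)`. -/
def Vrow (A0 A1 A2 A3 : ℝ × ℝ → ℝ) : ℝ × ℝ → Fin 6 → ℝ := fun p =>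
  ![2 * pdy (Lio2 A0 A1 A2 A3) p + 4 * A2 p * Lio2 A0 A1 A2 A3 p
      + 8 * A3 p * Lio1 A0 A1 A2 A3 p,
    -2 * pdy (Lio1 A0 A1 A2 A3) p - 2 * pdx (Lio2 A0 A1 A2 A3) p
      - (4/3) * A1 p * Lio2 A0 A1 A2 A3 p + (4/3) * A2 p * Lio1 A0 A1 A2 A3 p,
    2 * pdx (Lio1 A0 A1 A2 A3) p - 8 * A0 p * Lio2 A0 A1 A2 A3 p
      - 4 * A1 p * Lio1 A0 A1 A2 A3 p,
    -5 * Lio2 A0 A1 A2 A3 p,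
    -5 * Lio1 A0 A1 A2 A3 p,
    0]

/-- The connection matrix `Ω₁`. -/
def Om1 (A0 A1 A2 A3 : ℝ × ℝ → ℝ) : ℝ × ℝ → Matrix (Fin 6) (Fin 6) ℝ := fun p =>
  Matrix.of
  ![![-(2/3) * A1 p, 2 * A0 p, 0, 0, 0, 0],
    ![0, 0, 0, -(1/2 : ℝ), 0, 0],
    ![-2 * A3 p, -(2/3) * A2 p, (4/3) * A1 p, 0, 1, 0],
    ![-(4/3) * pdx A2 p + 4 * A0 p * A3 p + (2/3) * pdy A1 p,
      -2 * pdy A0 p + (2/3) * pdx A1 p + 4 * A2 p * A0 p - (4/9) * (A1 p) ^ 2,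
      2 * pdx A0 p - 4 * A0 p * A1 p,
      -(1/3) * A1 p, -3 * A0 p, 0],
    ![0, 0, 0, 0, 0, -1],
    ![-(4/3) * pdx (pdy A2) p - (20/3) * A0 p * A2 p * A3 p + (2/3) * pdy (pdy A1) p
        + 4 * A3 p * pdy A0 p - 2 * A0 p * pdy A3 p - (16/9) * A2 p * pdx A2 p
        + (8/9) * A2 p * pdy A1 p,
      (2/3) * pdx (pdy A1) p - (4/3) * A1 p * pdy A1 p + 2 * A0 p * pdy A2 p
        - 2 * pdy (pdy A0) p + 4 * A2 p * pdy A0 p + 4 * A3 p * pdx A0 p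
        + 6 * A0 p * pdx A3 p + (8/9) * A1 p * pdx A2 p
        + (4/3) * A0 p * A1 p * A3 p - (4/3) * A0 p * (A2 p) ^ 2,
      2 * pdx (pdy A0) p + (2/3) * A0 p * pdx A2 p - (4/3) * A2 p * pdx A0 p
        - 4 * A1 p * pdy A0 p - (4/3) * A0 p * pdy A1 p
        + (8/3) * A0 p * A1 p * A2 p + 4 * A3 p * (A0 p) ^ 2,
      (4/3) * pdx A2 p - pdy A1 p + 5 * A0 p * A3 p,
      (1/3) * pdx A1 p - 4 * pdy A0 p + 3 * A2 p * A0 p - (2/9) * (A1 p) ^ 2,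
      -(1/3) * A1 p]]

/-- The connection matrix `Ω₂`. -/
def Om2 (A0 A1 A2 A3 : ℝ × ℝ → ℝ) : ℝ × ℝ → Matrix (Fin 6) (Fin 6) ℝ := fun p =>
  Matrix.of
  ![![-(4/3) * A2 p, (2/3) * A1 p, 2 * A0 p, 1, 0, 0],
    ![0, 0, 0, 0, -(1/2 : ℝ), 0],
    ![0, -2 * A3 p, (2/3) * A2 p, 0, 0, 0],
    ![0, 0, 0, 0, 0, -1],
    ![-2 * pdy A3 p - 4 * A3 p * A2 p,
      2 * pdx A3 p - (2/3) * pdy A2 p + 4 * A1 p * A3 p - (4/9) * (A2 p) ^ 2,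
      (4/3) * pdy A1 p - (2/3) * pdx A2 p + 4 * A0 p * A3 p,
      3 * A3 p, (1/3) * A2 p, 0],
    ![-2 * pdx (pdy A3) p - 4 * A2 p * pdx A3 p - (4/3) * A3 p * pdx A2 p
        + (2/3) * A3 p * pdy A1 p - (4/3) * A1 p * pdy A3 p
        - 4 * A0 p * (A3 p) ^ 2 - (8/3) * A1 p * A2 p * A3 p,
      2 * pdx (pdx A3) p - (4/3) * A2 p * pdx A2 p - (4/3) * A0 p * A2 p * A3 p
        - (2/3) * pdx (pdy A2) p + 4 * A1 p * pdx A3 p + 4 * A0 p * pdy A3 p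
        + 6 * A3 p * pdy A0 p + (4/3) * A3 p * (A1 p) ^ 2 + 2 * A3 p * pdx A1 p
        + (8/9) * A2 p * pdy A1 p,
      -(2/3) * pdx (pdx A2) p + (8/9) * A1 p * pdx A2 p + 4 * A0 p * pdx A3 p
        - 2 * A3 p * pdx A0 p - (16/9) * A1 p * pdy A1 p + (4/3) * pdx (pdy A1) p
        + (20/3) * A0 p * A1 p * A3 p,
      4 * pdx A3 p - (1/3) * pdy A2 p + 3 * A1 p * A3 p - (2/9) * (A2 p) ^ 2,
      pdx A2 p - (4/3) * pdy A1 p + 5 * A0 p * A3 p,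
      (1/3) * A2 p]]

/-- `Ω` indexed by a direction. -/
def Om (A0 A1 A2 A3 : ℝ × ℝ → ℝ) : Fin 2 → ℝ × ℝ → Matrix (Fin 6) (Fin 6) ℝ :=
  ![Om1 A0 A1 A2 A3, Om2 A0 A1 A2 A3]

/-- The operator `D_a W = ∂_a W − W·Ω_a` on row-vector-valued functions. -/
def Dop (A0 A1 A2 A3 : ℝ × ℝ → ℝ) (a : Fin 2) (W : ℝ × ℝ → Fin 6 → ℝ) :
    ℝ × ℝ → Fin 6 → ℝ := fun p =>
  (fun i => pd a (fun q => W q i) p) - Matrix.vecMul (W p) (Om A0 A1 A2 A3 a p)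

/-- Iterated derivative `D_{a₁} ⋯ D_{a_j} W` (the head of the list acts last/outermost). -/
def DIter (A0 A1 A2 A3 : ℝ × ℝ → ℝ) (l : List (Fin 2)) (W : ℝ × ℝ → Fin 6 → ℝ) :
    ℝ × ℝ → Fin 6 → ℝ :=
  l.foldr (Dop A0 A1 A2 A3) W

/-- Symmetrised iterated derivative `D_{(a₁} ⋯ D_{a_j)} V` of the vector `V`. -/
def DSym (A0 A1 A2 A3 : ℝ × ℝ → ℝ) (l : List (Fin 2)) : ℝ × ℝ → Fin 6 → ℝ := fun p =>
  ((l.permutations.length : ℝ))⁻¹ •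
    (l.permutations.map (fun m => DIter A0 A1 A2 A3 m (Vrow A0 A1 A2 A3) p)).sum

/-- The `6 × 6` matrix `M([Γ])` with rows `V, D₁V, D₂V, D₁D₁V, (1/2)(D₁D₂V + D₂D₁V), D₂D₂V`. -/
def Mmat (A0 A1 A2 A3 : ℝ × ℝ → ℝ) : ℝ × ℝ → Matrix (Fin 6) (Fin 6) ℝ := fun p =>
  Matrix.of
  ![Vrow A0 A1 A2 A3 p,
    DIter A0 A1 A2 A3 [0] (Vrow A0 A1 A2 A3) p,
    DIter A0 A1 A2 A3 [1] (Vrow A0 A1 A2 A3) p,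
    DIter A0 A1 A2 A3 [0, 0] (Vrow A0 A1 A2 A3) p,
    (1/2 : ℝ) • (DIter A0 A1 A2 A3 [0, 1] (Vrow A0 A1 A2 A3) p
      + DIter A0 A1 A2 A3 [1, 0] (Vrow A0 A1 A2 A3) p),
    DIter A0 A1 A2 A3 [1, 1] (Vrow A0 A1 A2 A3) p]

end

noncomputable section

/-- The `21 × 6` matrix `M_max` whose rows are `V` together with all symmetrised iterated
derivatives `D_{(a₁}⋯D_{a_j)}V` for `1 ≤ j ≤ 5`; the row `(j, k)` is the symmetrised
derivative of order `j` with `k` indices equal to `2`. -/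
def Mmax (A0 A1 A2 A3 : ℝ × ℝ → ℝ) :
    ℝ × ℝ → Matrix ((j : Fin 6) × Fin (j.1 + 1)) (Fin 6) ℝ := fun p =>
  Matrix.of fun jk i =>
    DSym A0 A1 A2 A3
      (List.replicate (jk.2 : ℕ) (1 : Fin 2) ++
        List.replicate ((jk.1 : ℕ) - (jk.2 : ℕ)) (0 : Fin 2)) p i

end

namespace ProjectiveMetrisability

noncomputable section

open Set Filter
open scoped ContDiff Topology

section Curves

open scoped unitInterval

variable {E F G : Type*} [NormedAddCommGroup E] [NormedSpace ℝ E]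
  [NormedAddCommGroup F] [NormedSpace ℝ F] [NormedAddCommGroup G] [NormedSpace ℝ G]

/-- The bounded operator sending `g` to the curve `τ ↦ τ ^ k • g` on the unit interval. -/
def monomialCurve (G : Type*) [NormedAddCommGroup G] [NormedSpace ℝ G] (k : ℕ) :
    G →L[ℝ] C(I, G) :=
  LinearMap.mkContinuous
    { toFun := fun g => ⟨fun τ => (τ : ℝ) ^ k • g, by fun_prop⟩
      map_add' := fun a b => by ext τ; simp
      map_smul' := fun c a => by ext τ; simp [smul_comm c] } 1 fun g => by
    refine (ContinuousMap.norm_le _ (by positivity)).2 fun τ => ?_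
    change ‖(τ : ℝ) ^ k • g‖ ≤ 1 * ‖g‖
    rw [norm_smul, norm_pow, Real.norm_of_nonneg τ.2.1]
    gcongr
    exact pow_le_one₀ τ.2.1 τ.2.2

theorem monomialCurve_apply (k : ℕ) (g : G) (τ : I) :
    monomialCurve G k g τ = (τ : ℝ) ^ k • g := rfl

theorem monomialCurve_zero_apply (g : G) (τ : I) : monomialCurve G 0 g τ = g := by
  rw [monomialCurve_apply, pow_zero, one_smul]

theorem norm_monomialCurve_le (k : ℕ) : ‖monomialCurve G k‖ ≤ 1 :=
  LinearMap.mkContinuous_norm_le _ zero_le_one _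

theorem exists_analyticAt_rays [CompleteSpace G] {f : E → G} {p : E} (hf : AnalyticAt ℝ f p) :
    ∃ Φ : E → C(I, G), AnalyticAt ℝ Φ 0 ∧
      ∀ᶠ v in 𝓝 0, ∀ τ : I, Φ v τ = f (p + (τ : ℝ) • v) := by
  obtain ⟨P, r, hP⟩ := hf
  let Q : FormalMultilinearSeries ℝ E C(I, G) :=
    fun k => (monomialCurve G k).compContinuousMultilinearMap (P k)
  have hQP (k : ℕ) : ‖Q k‖ ≤ ‖P k‖ :=
    (ContinuousLinearMap.norm_compContinuousMultilinearMap_le _ _).trans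
      (mul_le_of_le_one_left (norm_nonneg _) (norm_monomialCurve_le k))
  have hrad : r ≤ Q.radius := hP.r_le.trans (FormalMultilinearSeries.radius_le_of_le hQP)
  have hQ := Q.hasFPowerSeriesOnBall (hP.r_pos.trans_le hrad)
  refine ⟨Q.sum, hQ.analyticAt, ?_⟩
  filter_upwards [Metric.eball_mem_nhds (0 : E) hP.r_pos] with v hv τ
  have hτ : (τ : ℝ) • v ∈ Metric.eball (0 : E) r := by
    rw [Metric.mem_eball, edist_zero_right] at hv ⊢
    refine lt_of_le_of_lt ?_ hv
    rw [enorm_smul]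
    exact mul_le_of_le_one_left' (by simp [Real.enorm_of_nonneg τ.2.1, τ.2.2])
  have hsum := (ContinuousMap.evalCLM ℝ τ).hasSum
    (hQ.hasSum (Metric.eball_subset_eball hrad hv))
  rw [zero_add] at hsum
  refine hsum.unique ?_
  convert hP.hasSum hτ using 2 with n
  change (τ : ℝ) ^ n • P n (fun _ => v) = _
  rw [(P n).map_smul_univ (fun _ => (τ : ℝ)) (fun _ => v), Fin.prod_const]

/-- Pointwise application of operator-valued curves to vector-valued curves. -/
def applyCurve (G F : Type*) [NormedAddCommGroup G] [NormedSpace ℝ G]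
    [NormedAddCommGroup F] [NormedSpace ℝ F] :
    C(I, G →L[ℝ] F) →L[ℝ] C(I, G) →L[ℝ] C(I, F) :=
  LinearMap.mkContinuous₂
    (LinearMap.mk₂ ℝ (fun (a : C(I, G →L[ℝ] F)) (x : C(I, G)) =>
        (⟨fun τ => a τ (x τ), by fun_prop⟩ : C(I, F)))
      (fun a b x => by ext; simp) (fun c a x => by ext; simp)
      (fun a x y => by ext; simp) (fun c a x => by ext; simp)) 1 fun a x => by
    refine (ContinuousMap.norm_le _ (by positivity)).2 fun τ => ?_
    rw [one_mul]
    exact (a τ).le_of_opNorm_le_of_le (a.norm_coe_le_norm τ) (x.norm_coe_le_norm τ)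

theorem applyCurve_apply (a : C(I, G →L[ℝ] F)) (x : C(I, G)) (τ : I) :
    applyCurve G F a x τ = a τ (x τ) := rfl

theorem continuous_projIcc_comp {X : Type*} [TopologicalSpace X] (x : C(I, X)) :
    Continuous fun τ : ℝ => x (projIcc 0 1 zero_le_one τ) :=
  x.continuous.comp continuous_projIcc

/-- Integration from `0` as a bounded operator on curves; the curve is extended beyond the unit
interval by its end values. -/
def primitiveCurve (F : Type*) [NormedAddCommGroup F] [NormedSpace ℝ F] :
    C(I, F) →L[ℝ] C(I, F) :=
  LinearMap.mkContinuous
    { toFun := fun x => ⟨fun t => ∫ τ in (0 : ℝ)..t, x (projIcc 0 1 zero_le_one τ),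
        (intervalIntegral.continuous_primitive
          (fun a b => (continuous_projIcc_comp x).intervalIntegrable a b) 0).comp
            continuous_subtype_val⟩
      map_add' := fun x y => by
        ext t
        exact intervalIntegral.integral_add
          ((continuous_projIcc_comp x).intervalIntegrable _ _)
          ((continuous_projIcc_comp y).intervalIntegrable _ _)
      map_smul' := fun c x => by
        ext t
        exact intervalIntegral.integral_smul c _ } 1 fun x => by
    refine (ContinuousMap.norm_le _ (by positivity)).2 fun t => ?_
    refine (intervalIntegral.norm_integral_le_of_norm_le_const
      fun τ _ => x.norm_coe_le_norm _).trans ?_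
    rw [sub_zero, abs_of_nonneg t.2.1, one_mul]
    exact mul_le_of_le_one_right (norm_nonneg _) t.2.2

/-- The Volterra operator `x ↦ (t ↦ ∫₀ᵗ a x)`: the curves `x` with `x - volterra F a x` constant
are the solutions of `x' = a x`. -/
def volterra (F : Type*) [NormedAddCommGroup F] [NormedSpace ℝ F] :
    C(I, F →L[ℝ] F) →L[ℝ] C(I, F) →L[ℝ] C(I, F) :=
  (ContinuousLinearMap.compL ℝ C(I, F) C(I, F) C(I, F) (primitiveCurve F)).comp (applyCurve F F)

theorem volterra_apply (a : C(I, F →L[ℝ] F)) (x : C(I, F)) (t : I) :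
    volterra F a x t = ∫ τ in (0 : ℝ)..t, applyCurve F F a x (projIcc 0 1 zero_le_one τ) := rfl

theorem sub_volterra_eq_of_hasDerivAt [CompleteSpace F] {a : C(I, F →L[ℝ] F)} {x : C(I, F)}
    {y : ℝ → F} (hxy : ∀ t : I, x t = y t) (hy : ∀ t : I, HasDerivAt y (a t (y t)) t) :
    x - volterra F a x = monomialCurve F 0 (y 0) := by
  ext1 t
  have hint : volterra F a x t = y t - y 0 := by
    rw [volterra_apply]
    refine intervalIntegral.integral_eq_sub_of_hasDerivAt (fun τ hτ => ?_)
      ((continuous_projIcc_comp _).intervalIntegrable _ _)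
    rw [uIcc_of_le t.2.1] at hτ
    have hτI : τ ∈ I := ⟨hτ.1, hτ.2.trans t.2.2⟩
    rw [projIcc_of_mem zero_le_one hτI, applyCurve_apply, hxy]
    exact hy ⟨τ, hτI⟩
  rw [ContinuousMap.sub_apply, hint, hxy, monomialCurve_zero_apply, sub_sub_cancel]

theorem exists_hasDerivAt_of_sub_volterra_eq [CompleteSpace F] {a : C(I, F →L[ℝ] F)}
    {x : C(I, F)} {w : F} (hx : x - volterra F a x = monomialCurve F 0 w) :
    ∃ y : ℝ → F, y 0 = w ∧ ∀ t : I, HasDerivAt y (a t (y t)) t := by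
  let y (t : ℝ) : F := w + ∫ τ in (0 : ℝ)..t, applyCurve F F a x (projIcc 0 1 zero_le_one τ)
  have hyx (t : I) : y t = x t := by
    have h := congrArg (fun z : C(I, F) => z t) hx
    simp only [ContinuousMap.sub_apply, monomialCurve_zero_apply, sub_eq_iff_eq_add] at h
    exact h.symm
  refine ⟨y, by simp [y], fun t => ?_⟩
  have h := (((continuous_projIcc_comp (applyCurve F F a x)).integral_hasStrictDerivAt
    0 t).hasDerivAt).const_add w
  rwa [projIcc_val, applyCurve_apply, ← hyx] at h

theorem exists_analyticAt_resolvent {X : Type*} [NormedAddCommGroup X] [NormedSpace ℝ X]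
    [CompleteSpace X] {K : E → X →L[ℝ] X} (hK : AnalyticAt ℝ K 0) (hK0 : K 0 = 0) (u : X) :
    ∃ x : E → X, AnalyticAt ℝ x 0 ∧ ∀ᶠ v in 𝓝 0, ∀ y, y - K v y = u ↔ y = x v := by
  have hinv : AnalyticAt ℝ (fun v => Ring.inverse (1 - K v)) 0 := by
    have h := analyticAt_inverse_one_sub ℝ (X →L[ℝ] X)
    rw [← hK0] at h
    exact h.comp hK
  refine ⟨fun v => Ring.inverse (1 - K v) u,
    ((ContinuousLinearMap.apply ℝ X u).analyticAt _).comp hinv, ?_⟩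
  have hunit : ∀ᶠ v in 𝓝 (0 : E), IsUnit (1 - K v) :=
    (continuousAt_const.sub hK.continuousAt).eventually_mem
      (s := {a | IsUnit a}) (Units.isOpen.mem_nhds (by simp [hK0]))
  filter_upwards [hunit] with v hv y
  constructor
  · rintro rfl
    change y = (Ring.inverse (1 - K v) * (1 - K v)) y
    rw [Ring.inverse_mul_cancel _ hv, one_apply_eq_self]
  · rintro rfl
    change ((1 - K v) * Ring.inverse (1 - K v)) u = u
    rw [Ring.mul_inverse_cancel _ hv, one_apply_eq_self]

end Curves

section Connection

set_option maxSynthPendingDepth 3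

variable {E F G : Type*} [NormedAddCommGroup E] [NormedSpace ℝ E]
  [NormedAddCommGroup F] [NormedSpace ℝ F] [NormedAddCommGroup G] [NormedSpace ℝ G]

/-- The covariant derivative `∇_v s = ds(v) + A(v) s` of a section `s` of the trivial bundle with
fibre `F`, for the connection with connection form `A`, in the constant direction `v`. -/
def covDeriv (A : E → E →L[ℝ] F →L[ℝ] F) (v : E) (s : E → F) : E → F :=
  fun q => fderiv ℝ s q v + A q v (s q)

/-- The dual covariant derivative `dR(v) - R ∘ A(v)` of a field `R` of linear maps out of the
fibre. -/
def dualDeriv (A : E → E →L[ℝ] F →L[ℝ] F) (v : E) (R : E → F →L[ℝ] G) : E → F →L[ℝ] G :=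
  fun q => fderiv ℝ R q v - (R q).comp (A q v)

/-- The curvature `dA + A ∧ A` of the connection form `A`. -/
def curvature (A : E → E →L[ℝ] F →L[ℝ] F) (q u v : E) : F →L[ℝ] F :=
  fderiv ℝ A q u v - fderiv ℝ A q v u + (A q u).comp (A q v) - (A q v).comp (A q u)

variable {A : E → E →L[ℝ] F →L[ℝ] F} {s : E → F} {R : E → F →L[ℝ] G} {p q : E}

theorem fderiv_pairing (hR : DifferentiableAt ℝ R q) (hs : DifferentiableAt ℝ s q) (v : E) :
    fderiv ℝ (fun z => R z (s z)) q v = dualDeriv A v R q (s q) + R q (covDeriv A v s q) := by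
  rw [fderiv_clm_apply hR hs]
  simp only [dualDeriv, covDeriv, add_apply, sub_apply, ContinuousLinearMap.comp_apply,
    ContinuousLinearMap.flip_apply, map_add]
  abel

/-- The covariant derivative of `s` as a one-form. -/
def totalCovDeriv (A : E → E →L[ℝ] F →L[ℝ] F) (s : E → F) : E → E →L[ℝ] F :=
  fun q => fderiv ℝ s q + (A q).flip (s q)

theorem totalCovDeriv_apply (v : E) : totalCovDeriv A s q v = covDeriv A v s q := rfl

theorem differentiableAt_totalCovDeriv (hA : DifferentiableAt ℝ A q) (hs : ContDiffAt ℝ 2 s q) :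
    DifferentiableAt ℝ (totalCovDeriv A s) q := by
  have hflip : DifferentiableAt ℝ (fun z => (A z).flip) q :=
    (ContinuousLinearMap.flipₗᵢ ℝ E F F).toContinuousLinearEquiv.differentiableAt.comp q hA
  exact ((hs.fderiv_right (m := 1) (by norm_num)).differentiableAt one_ne_zero).add
    (hflip.clm_apply (hs.differentiableAt two_ne_zero))

theorem differentiableAt_covDeriv (hA : DifferentiableAt ℝ A q) (hs : ContDiffAt ℝ 2 s q) (v : E) :
    DifferentiableAt ℝ (covDeriv A v s) q :=
  (differentiableAt_totalCovDeriv hA hs).clm_apply (differentiableAt_const v)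

theorem fderiv_covDeriv (hA : DifferentiableAt ℝ A q) (hs : ContDiffAt ℝ 2 s q) (u v : E) :
    fderiv ℝ (covDeriv A v s) q u
      = fderiv ℝ (fderiv ℝ s) q u v + (A q v (fderiv ℝ s q u) + fderiv ℝ A q u v (s q)) := by
  have hs1 : DifferentiableAt ℝ s q := hs.differentiableAt two_ne_zero
  have hs2 : DifferentiableAt ℝ (fderiv ℝ s) q :=
    (hs.fderiv_right (m := 1) (by norm_num)).differentiableAt one_ne_zero
  have hv : DifferentiableAt ℝ (fun _ : E => v) q := differentiableAt_const v
  change fderiv ℝ (fun z => fderiv ℝ s z v + A z v (s z)) q u = _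
  rw [fderiv_fun_add (hs2.clm_apply hv) ((hA.clm_apply hv).clm_apply hs1),
    fderiv_clm_apply hs2 hv, fderiv_clm_apply (hA.clm_apply hv) hs1, fderiv_clm_apply hA hv]
  simp

theorem covDeriv_comm (hA : DifferentiableAt ℝ A q) (hs : ContDiffAt ℝ 2 s q) (u v : E) :
    covDeriv A u (covDeriv A v s) q - covDeriv A v (covDeriv A u s) q
      = curvature A q u v (s q) := by
  have hsymm : fderiv ℝ (fderiv ℝ s) q u v = fderiv ℝ (fderiv ℝ s) q v u :=
    hs.isSymmSndFDerivAt (by simp) u v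
  rw [covDeriv.eq_def A u, covDeriv.eq_def A v (covDeriv A u s), fderiv_covDeriv hA hs,
    fderiv_covDeriv hA hs]
  simp only [covDeriv, curvature, add_apply, sub_apply, ContinuousLinearMap.comp_apply,
    map_add, hsymm]
  abel

theorem covDeriv_radial (hA : DifferentiableAt ℝ A q) (hs : ContDiffAt ℝ 2 s q) (u : E) :
    covDeriv A u (fun z => covDeriv A (z - p) s z) q
      = covDeriv A u s q + covDeriv A u (covDeriv A (q - p) s) q := by
  have htotal := differentiableAt_totalCovDeriv hA hs
  have hradial : fderiv ℝ (fun z => totalCovDeriv A s z (z - p)) q u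
      = totalCovDeriv A s q u + fderiv ℝ (fun z => totalCovDeriv A s z (q - p)) q u := by
    rw [fderiv_clm_apply htotal (by fun_prop), fderiv_clm_apply htotal (by fun_prop)]
    simp [fderiv_sub_const]
  simp only [totalCovDeriv_apply] at hradial
  rw [covDeriv.eq_def A u, hradial, add_assoc]
  rfl

theorem covDeriv_congr {s' : E → F} (h : s =ᶠ[𝓝 q] s') (v : E) :
    covDeriv A v s q = covDeriv A v s' q := by
  rw [covDeriv, covDeriv, h.fderiv_eq, h.eq_of_nhds]

theorem covDeriv_smul (c : ℝ) (v : E) : covDeriv A (c • v) s q = c • covDeriv A v s q := by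
  simp only [covDeriv, map_smul, smul_apply, smul_add]

theorem covDeriv_zero (v : E) : covDeriv A v (0 : E → F) = 0 := by
  ext q
  simp [covDeriv]

theorem analyticAt_clm_apply {f : E → F →L[ℝ] G} (hf : AnalyticAt ℝ f q)
    (hs : AnalyticAt ℝ s q) : AnalyticAt ℝ (fun z => f z (s z)) q :=
  ((ContinuousLinearMap.id ℝ (F →L[ℝ] G)).analyticAt_bilinear _).comp₂ hf hs

theorem analyticAt_dualDeriv [CompleteSpace G] (hA : AnalyticAt ℝ A q) (hR : AnalyticAt ℝ R q)
    (v : E) : AnalyticAt ℝ (dualDeriv A v R) q :=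
  (analyticAt_clm_apply hR.fderiv analyticAt_const).sub
    (((ContinuousLinearMap.compL ℝ F F G).analyticAt_bilinear _).comp₂ hR
      (analyticAt_clm_apply hA analyticAt_const))

theorem analyticAt_dualDeriv_iterate [CompleteSpace G] (hA : AnalyticAt ℝ A q)
    (hR : AnalyticAt ℝ R q) (v : E) (n : ℕ) : AnalyticAt ℝ ((dualDeriv A v)^[n] R) q := by
  induction n with
  | zero => exact hR
  | succ n ih =>
    rw [Function.iterate_succ_apply']
    exact analyticAt_dualDeriv hA ih v

/-- `y` is the parallel transport, for `d + A`, along the segment `t ↦ p + t • v`,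
`0 ≤ t ≤ 1`. -/
def IsParallelTransport (A : E → E →L[ℝ] F →L[ℝ] F) (p v : E) (y : ℝ → F) : Prop :=
  ∀ t ∈ Icc (0 : ℝ) 1, HasDerivAt y (-(A (p + t • v) v (y t))) t

theorem IsParallelTransport.rescale {v : E} {y : ℝ → F} (hy : IsParallelTransport A p v y)
    {c : ℝ} (hc : c ∈ Icc (0 : ℝ) 1) : IsParallelTransport A p (c • v) (fun t => y (t * c)) := by
  intro t ht
  have hd : HasDerivAt (fun t => y (t * c)) _ t :=
    (hy (t * c) ⟨mul_nonneg ht.1 hc.1, mul_le_one₀ ht.2 hc.1 hc.2⟩).scomp t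
      (h := fun t => t * c) ((hasDerivAt_id t).mul_const c)
  rwa [one_mul, mul_smul, smul_neg, ← smul_apply, ← map_smul] at hd

theorem isParallelTransport_zero (v : E) : IsParallelTransport A p v 0 := fun t _ => by
  simp

theorem hasDerivAt_comp_line {f : E → F} {v : E} {t : ℝ}
    (hf : DifferentiableAt ℝ f (p + t • v)) :
    HasDerivAt (fun t : ℝ => f (p + t • v)) (fderiv ℝ f (p + t • v) v) t := by
  have hline : HasDerivAt (fun t : ℝ => p + t • v) v t := by
    simpa using ((hasDerivAt_id t).smul_const v).const_add p
  exact hf.hasFDerivAt.comp_hasDerivAt t hline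

theorem isParallelTransport_of_covDeriv_eq_zero {v : E}
    (hs : ∀ t ∈ Icc (0 : ℝ) 1, DifferentiableAt ℝ s (p + t • v))
    (hpar : ∀ t ∈ Icc (0 : ℝ) 1, covDeriv A v s (p + t • v) = 0) :
    IsParallelTransport A p v (fun t => s (p + t • v)) := by
  intro t ht
  rw [← eq_neg_of_add_eq_zero_left (hpar t ht)]
  exact hasDerivAt_comp_line (hs t ht)

theorem tendsto_sub_self_nhds {E : Type*} [NormedAddCommGroup E] (p : E) :
    Tendsto (fun q => q - p) (𝓝 p) (𝓝 0) :=
  tendsto_sub_nhds_zero_iff.2 tendsto_id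

theorem eventually_forall_segment {P : E → Prop} (hP : ∀ᶠ q in 𝓝 p, P q) :
    ∀ᶠ v in 𝓝 (0 : E), ∀ t ∈ Icc (0 : ℝ) 1, P (p + t • v) := by
  obtain ⟨ε, hε, hball⟩ := Metric.eventually_nhds_iff_ball.1 hP
  filter_upwards [Metric.ball_mem_nhds (0 : E) hε] with v hv t ht
  refine hball _ ?_
  rw [mem_ball_zero_iff] at hv
  rw [mem_ball_iff_norm, add_sub_cancel_left, norm_smul, Real.norm_of_nonneg ht.1]
  exact (mul_le_of_le_one_left (norm_nonneg v) ht.2).trans_lt hv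

open scoped unitInterval in
theorem exists_analyticAt_connectionCurve [CompleteSpace F] (hA : AnalyticAt ℝ A p) :
    ∃ a : E → C(I, F →L[ℝ] F), AnalyticAt ℝ a 0 ∧ a 0 = 0 ∧
      ∀ᶠ v in 𝓝 (0 : E), ∀ (t : I) (z : F), a v t z = -(A (p + (t : ℝ) • v) v z) := by
  obtain ⟨Φ, hΦ, hΦA⟩ := exists_analyticAt_rays hA
  refine ⟨fun v => -applyCurve E (F →L[ℝ] F) (Φ v) (monomialCurve E 0 v),
    (((applyCurve E (F →L[ℝ] F)).analyticAt_bilinear (_, _)).comp₂ hΦ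
      ((monomialCurve E 0).analyticAt 0)).neg, by simp, ?_⟩
  filter_upwards [hΦA] with v hv t z
  change -(Φ v t (monomialCurve E 0 v t) z) = _
  rw [monomialCurve_zero_apply, hv]

open scoped unitInterval in
theorem exists_analyticAt_transport [CompleteSpace F] (hA : AnalyticAt ℝ A p) (w : F) :
    ∃ sol : E → F, AnalyticAt ℝ sol 0 ∧ ∀ᶠ v in 𝓝 (0 : E),
      (∀ y, IsParallelTransport A p v y → y 0 = w → y 1 = sol v) ∧
        ∃ y, IsParallelTransport A p v y ∧ y 0 = w := by
  obtain ⟨a, ha, ha0, haA⟩ := exists_analyticAt_connectionCurve hA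
  have hK : AnalyticAt ℝ (fun v => volterra F (a v)) 0 := ((volterra F).analyticAt _).comp ha
  obtain ⟨x, hx, hxv⟩ := exists_analyticAt_resolvent hK (by rw [ha0, map_zero])
    (monomialCurve F 0 w)
  refine ⟨fun v => x v 1,
    ((ContinuousMap.evalCLM ℝ (1 : I) : C(I, F) →L[ℝ] F).analyticAt (x 0)).comp hx, ?_⟩
  filter_upwards [hxv, haA] with v hxv haA
  constructor
  · intro y hy hy0
    have hyc : ContinuousOn y I := fun t ht => (hy t ht).continuousAt.continuousWithinAt
    let Y : C(I, F) := ⟨fun t => y t, continuousOn_iff_continuous_domRestrict.1 hyc⟩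
    have hY : Y - volterra F (a v) Y = monomialCurve F 0 (y 0) :=
      sub_volterra_eq_of_hasDerivAt (fun _ => rfl) fun t => by rw [haA]; exact hy t t.2
    rw [hy0] at hY
    exact congrArg (fun z : C(I, F) => z 1) ((hxv Y).1 hY)
  · obtain ⟨y, hy0, hy⟩ := exists_hasDerivAt_of_sub_volterra_eq ((hxv _).2 rfl)
    refine ⟨y, fun t ht => ?_, hy0⟩
    rw [← haA ⟨t, ht⟩]
    exact hy ⟨t, ht⟩

theorem IsParallelTransport.covDeriv_eq_zero {v : E} {y : ℝ → F} (hy : IsParallelTransport A p v y)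
    (hys : ∀ t ∈ Icc (0 : ℝ) 1, y t = s (p + t • v)) {t : ℝ} (ht : t ∈ Ioo (0 : ℝ) 1)
    (hs : DifferentiableAt ℝ s (p + t • v)) : covDeriv A v s (p + t • v) = 0 := by
  have heq : y =ᶠ[𝓝 t] fun t => s (p + t • v) := by
    filter_upwards [Icc_mem_nhds ht.1 ht.2] with τ hτ using hys τ hτ
  have hderiv := (hy t (Ioo_subset_Icc_self ht)).unique
    ((hasDerivAt_comp_line hs).congr_of_eventuallyEq heq)
  rw [heq.eq_of_nhds] at hderiv
  rw [covDeriv, ← hderiv, neg_add_cancel]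

theorem exists_radiallyParallel [CompleteSpace F] (hA : AnalyticAt ℝ A p) (w : F) :
    ∃ s : E → F, AnalyticAt ℝ s p ∧ s p = w ∧ (∀ᶠ q in 𝓝 p, covDeriv A (q - p) s q = 0) ∧
      ∀ᶠ q in 𝓝 p, ∀ y, IsParallelTransport A p (q - p) y → y 0 = w → y 1 = s q := by
  obtain ⟨sol, hsol, h⟩ := exists_analyticAt_transport hA w
  let s (q : E) : F := sol (q - p)
  have hs : AnalyticAt ℝ s p :=
    AnalyticAt.comp (g := sol) (by rwa [sub_self]) (analyticAt_id.sub analyticAt_const)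
  refine ⟨s, hs, ?_, ?_, (tendsto_sub_self_nhds p).eventually (h.mono fun v hv => hv.1)⟩
  · obtain ⟨huniq, y, hy, hy0⟩ := h.self_of_nhds
    have hrest := huniq _ (by simpa using hy.rescale (c := 0) (by simp)) (by simpa using hy0)
    simpa [s, hy0] using hrest.symm
  -- The transport along `2 • (q - p)` passes through `q` at the interior time `1 / 2`.
  have hdouble : Tendsto (fun q => (2 : ℝ) • (q - p)) (𝓝 p) (𝓝 0) := by
    simpa using (tendsto_sub_self_nhds p).const_smul (2 : ℝ)
  filter_upwards [hdouble.eventually (eventually_forall_segment h),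
    hs.eventually_analyticAt] with q hq hsq
  obtain ⟨y, hy, hy0⟩ := (hq 1 (by simp)).2
  simp only [one_smul, zero_add] at hy hq
  have hmid : p + (1 / 2 : ℝ) • (2 : ℝ) • (q - p) = q := by
    rw [smul_smul]; norm_num
  have hzero := hy.covDeriv_eq_zero (s := s) (t := 1 / 2)
    (fun t ht => by simpa [s] using (hq t ht).1 _ (hy.rescale ht) (by simpa using hy0))
    (by norm_num) (by rw [hmid]; exact hsq.differentiableAt)
  rw [hmid, covDeriv_smul] at hzero
  exact (smul_eq_zero_iff_right two_ne_zero).1 hzero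

theorem eventually_eq_zero_of_add_covDeriv_eq_zero [CompleteSpace F] (hA : AnalyticAt ℝ A p)
    {η : E → F} (hη : ∀ᶠ q in 𝓝 p, DifferentiableAt ℝ η q)
    (heuler : ∀ᶠ q in 𝓝 p, η q + covDeriv A (q - p) η q = 0) : ∀ᶠ q in 𝓝 p, η q = 0 := by
  obtain ⟨s, -, -, -, huniq⟩ := exists_radiallyParallel hA (0 : F)
  filter_upwards [huniq, (tendsto_sub_self_nhds p).eventually
    (eventually_forall_segment (hη.and heuler))] with q hq hseg
  -- By the equation for `η`, the curve `t • η (p + t • (q - p))` is a transport starting at `0`.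
  have hy : IsParallelTransport A p (q - p) fun t => t • η (p + t • (q - p)) := by
    intro t ht
    obtain ⟨hdiff, hzero⟩ := hseg t ht
    have hderiv := (hasDerivAt_id' t).smul (hasDerivAt_comp_line hdiff)
    rw [add_sub_cancel_left, covDeriv_smul, covDeriv, smul_add, ← add_assoc] at hzero
    rwa [one_smul, add_comm, eq_neg_of_add_eq_zero_left hzero, ← map_smul] at hderiv
  have hy1 := hq _ hy (zero_smul ℝ _)
  rw [← hq 0 (isParallelTransport_zero _) rfl] at hy1
  simpa using hy1

theorem covDeriv_eq_zero_of_radiallyParallel [CompleteSpace F] (hA : AnalyticAt ℝ A p)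
    (hs : AnalyticAt ℝ s p) (hpar : ∀ᶠ q in 𝓝 p, covDeriv A (q - p) s q = 0)
    (hcurv : ∀ᶠ q in 𝓝 p, ∀ u v, curvature A q u v (s q) = 0) (u : E) :
    ∀ᶠ q in 𝓝 p, covDeriv A u s q = 0 := by
  refine eventually_eq_zero_of_add_covDeriv_eq_zero hA (η := covDeriv A u s) ?_ ?_
  · filter_upwards [hA.eventually_analyticAt, hs.eventually_analyticAt] with q hAq hsq
    exact differentiableAt_covDeriv hAq.differentiableAt hsq.contDiffAt u
  filter_upwards [hpar.eventually_nhds, hcurv, hA.eventually_analyticAt,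
    hs.eventually_analyticAt] with q hq hRq hAq hsq
  have hcomm := covDeriv_comm hAq.differentiableAt hsq.contDiffAt u (q - p)
  rw [hRq, sub_eq_zero] at hcomm
  rw [← hcomm, ← covDeriv_radial hAq.differentiableAt hsq.contDiffAt, covDeriv_congr (s' := 0) hq,
    covDeriv_zero, Pi.zero_apply]

theorem analyticAt_of_covDeriv_eq_zero [CompleteSpace F] (hA : AnalyticAt ℝ A p)
    (hs : ∀ᶠ q in 𝓝 p, DifferentiableAt ℝ s q)
    (hpar : ∀ᶠ q in 𝓝 p, ∀ v, covDeriv A v s q = 0) : AnalyticAt ℝ s p := by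
  obtain ⟨s', hs', -, -, huniq⟩ := exists_radiallyParallel hA (s p)
  refine hs'.congr ?_
  filter_upwards [huniq, (tendsto_sub_self_nhds p).eventually
    (eventually_forall_segment (hs.and hpar))] with q hq hseg
  have hy := isParallelTransport_of_covDeriv_eq_zero (fun t ht => (hseg t ht).1)
    fun t ht => (hseg t ht).2 (q - p)
  simpa using (hq _ hy (by simp)).symm

end Connection

section Radial

set_option maxSynthPendingDepth 3

variable {E F G : Type*} [NormedAddCommGroup E] [NormedSpace ℝ E]
  [NormedAddCommGroup F] [NormedSpace ℝ F] [NormedAddCommGroup G] [NormedSpace ℝ G]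
variable {A : E → E →L[ℝ] F →L[ℝ] F} {s : E → F} {R : E → F →L[ℝ] G} {p q : E}

theorem covDeriv_self_eq_zero_of_radiallyParallel (hA : DifferentiableAt ℝ A p)
    (hs : ContDiffAt ℝ 2 s p) (hpar : ∀ᶠ q in 𝓝 p, covDeriv A (q - p) s q = 0) (v : E) :
    covDeriv A v s p = 0 := by
  have hradial := covDeriv_radial (p := p) hA hs v
  have hzero : covDeriv A (p - p) s = 0 := by
    ext z
    simp [covDeriv]
  rw [covDeriv_congr (s' := 0) hpar, hzero, covDeriv_zero, Pi.zero_apply, add_zero] at hradial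
  exact hradial.symm

theorem tendsto_line (p v : E) : Tendsto (fun t : ℝ => p + t • v) (𝓝 0) (𝓝 p) := by
  have hline : Continuous fun t : ℝ => p + t • v := by fun_prop
  simpa using hline.tendsto 0

theorem eventually_covDeriv_line_eq_zero (hA : DifferentiableAt ℝ A p) (hs : ContDiffAt ℝ 2 s p)
    (hpar : ∀ᶠ q in 𝓝 p, covDeriv A (q - p) s q = 0) (v : E) :
    ∀ᶠ t in 𝓝 (0 : ℝ), covDeriv A v s (p + t • v) = 0 := by
  filter_upwards [(tendsto_line p v).eventually hpar] with t ht
  rw [add_sub_cancel_left, covDeriv_smul] at ht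
  rcases smul_eq_zero.1 ht with rfl | ht
  · simpa using covDeriv_self_eq_zero_of_radiallyParallel hA hs hpar v
  · exact ht

theorem iteratedDeriv_pairing_line [CompleteSpace F] [CompleteSpace G] (hA : AnalyticAt ℝ A p)
    (hR : AnalyticAt ℝ R p) (hs : AnalyticAt ℝ s p)
    (hpar : ∀ᶠ q in 𝓝 p, covDeriv A (q - p) s q = 0) (v : E) (n : ℕ) :
    ∀ᶠ t in 𝓝 (0 : ℝ), iteratedDeriv n (fun t : ℝ => R (p + t • v) (s (p + t • v))) t
      = (dualDeriv A v)^[n] R (p + t • v) (s (p + t • v)) := by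
  induction n with
  | zero => simp
  | succ n ih =>
    have hdiff : ∀ᶠ q in 𝓝 p, DifferentiableAt ℝ ((dualDeriv A v)^[n] R) q ∧
        DifferentiableAt ℝ s q := by
      filter_upwards [(analyticAt_dualDeriv_iterate hA hR v n).eventually_analyticAt,
        hs.eventually_analyticAt] with q hq hsq using ⟨hq.differentiableAt, hsq.differentiableAt⟩
    filter_upwards [ih.eventually_nhds, (tendsto_line p v).eventually hdiff,
      eventually_covDeriv_line_eq_zero hA.differentiableAt hs.contDiffAt hpar v] with t ht hd hpart
    rw [iteratedDeriv_succ, EventuallyEq.deriv_eq ht,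
      (hasDerivAt_comp_line (hd.1.clm_apply hd.2)).deriv, fderiv_pairing hd.1 hd.2, hpart, map_zero,
      add_zero, Function.iterate_succ_apply']

theorem eventually_eq_zero_of_iteratedDeriv_eq_zero [CompleteSpace G] {g : ℝ → G} {x : ℝ}
    (hg : AnalyticAt ℝ g x) (h0 : ∀ n, iteratedDeriv n g x = 0) : ∀ᶠ t in 𝓝 x, g t = 0 := by
  rw [← analyticOrderAt_eq_top, ENat.eq_top_iff_forall_ge]
  exact fun n => (natCast_le_analyticOrderAt_iff_iteratedDeriv_eq_zero hg).2 fun i _ => h0 i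

theorem eventually_eq_zero_of_iteratedDeriv_line [CompleteSpace G] {f : E → G}
    (hf : AnalyticAt ℝ f p) (h0 : ∀ v n, iteratedDeriv n (fun t : ℝ => f (p + t • v)) 0 = 0) :
    ∀ᶠ q in 𝓝 p, f q = 0 := by
  obtain ⟨ε, hε, hball⟩ := Metric.eventually_nhds_iff_ball.1 hf.eventually_analyticAt
  filter_upwards [Metric.ball_mem_nhds p hε] with q hq
  let line : ℝ →ᵃ[ℝ] E := AffineMap.lineMap p q
  have hline (t : ℝ) : line t = p + t • (q - p) := by
    rw [AffineMap.lineMap_apply, vsub_eq_sub, vadd_eq_add, add_comm]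
  have hg : AnalyticOnNhd ℝ (fun t : ℝ => f (p + t • (q - p))) (line ⁻¹' Metric.ball p ε) := by
    intro t ht
    rw [mem_preimage, hline] at ht
    exact (hball _ ht).comp_of_eq
      (analyticAt_const.add (analyticAt_id.smul analyticAt_const)) rfl
  have hp : (0 : ℝ) ∈ line ⁻¹' Metric.ball p ε := by simpa [line] using hε
  have hzero := hg.eqOn_zero_of_preconnected_of_eventuallyEq_zero
    ((convex_ball p ε).affine_preimage line).isPreconnected hp
    (eventually_eq_zero_of_iteratedDeriv_eq_zero (hg 0 hp) (h0 (q - p)))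
    (show (1 : ℝ) ∈ line ⁻¹' Metric.ball p ε by simpa [line] using hq)
  simpa using hzero

theorem eventually_pairing_eq_zero_of_dualDeriv_iterate [CompleteSpace F] [CompleteSpace G]
    (hA : AnalyticAt ℝ A p) (hR : AnalyticAt ℝ R p) (hs : AnalyticAt ℝ s p)
    (hpar : ∀ᶠ q in 𝓝 p, covDeriv A (q - p) s q = 0)
    (h0 : ∀ v n, (dualDeriv A v)^[n] R p (s p) = 0) : ∀ᶠ q in 𝓝 p, R q (s q) = 0 := by
  refine eventually_eq_zero_of_iteratedDeriv_line (analyticAt_clm_apply hR hs) fun v n => ?_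
  rw [(iteratedDeriv_pairing_line hA hR hs hpar v n).self_of_nhds, zero_smul, add_zero, h0]

theorem exists_parallel_section [CompleteSpace F] [CompleteSpace G] (hA : AnalyticAt ℝ A p)
    (hR : AnalyticAt ℝ R p)
    (hcurv : ∀ᶠ q in 𝓝 p, ∀ z, R q z = 0 → ∀ u v, curvature A q u v z = 0) {w : F}
    (hw : ∀ v n, (dualDeriv A v)^[n] R p w = 0) :
    ∃ s : E → F, AnalyticAt ℝ s p ∧ s p = w ∧ ∀ u, ∀ᶠ q in 𝓝 p, covDeriv A u s q = 0 := by
  obtain ⟨s, hs, rfl, hpar, -⟩ := exists_radiallyParallel hA w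
  refine ⟨s, hs, rfl, covDeriv_eq_zero_of_radiallyParallel hA hs hpar ?_⟩
  filter_upwards [hcurv, eventually_pairing_eq_zero_of_dualDeriv_iterate hA hR hs hpar hw]
    with q hq hRq using hq (s q) hRq

end Radial

section DifferentialModule

open scoped Matrix
open Submodule

variable {R M : Type*} [CommRing R] [AddCommGroup M] [Module R M]

theorem exists_smul_mem_span_of_sum_eq_zero {N : ℕ} {f : ℕ → M} {v : Fin N → R} (hv : v ≠ 0)
    (hsum : ∑ i, v i • f i = 0) :
    ∃ j < N, ∃ c : R, c ≠ 0 ∧ c • f j ∈ span R (f '' Iio j) := by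
  classical
  obtain ⟨i₀, hi₀⟩ := Function.ne_iff.1 hv
  obtain ⟨j, hj, hmax⟩ := (Finset.univ.filter fun i => v i ≠ 0).exists_maximal
    ⟨i₀, by simpa using hi₀⟩
  simp only [Finset.mem_filter, Finset.mem_univ, true_and] at hj hmax
  refine ⟨j, j.2, v j, hj, ?_⟩
  rw [← Finset.add_sum_erase _ _ (Finset.mem_univ j)] at hsum
  rw [eq_neg_of_add_eq_zero_left hsum]
  refine neg_mem (sum_mem fun i hi => ?_)
  rcases lt_or_gt_of_ne (Finset.ne_of_mem_erase hi) with hij | hji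
  · exact smul_mem _ _ (subset_span ⟨i, hij, rfl⟩)
  · have hvi : v i = 0 := by
      by_contra hvi
      exact hji.not_ge (hmax hvi hji.le)
    rw [hvi, zero_smul]
    exact zero_mem _

variable [IsDomain R] {δ : R → R} {D : M →+ M} {r : M}

theorem exists_smul_iterate_mem_span (hD : ∀ (c : R) (m : M), D (c • m) = δ c • m + c • D m)
    {c : R} (hc : c ≠ 0) {j : ℕ} (hj : c • D^[j] r ∈ span R ((fun i => D^[i] r) '' Iio j))
    (n : ℕ) : ∃ e : R, e ≠ 0 ∧ e • D^[n] r ∈ span R ((fun i => D^[i] r) '' Iio j) := by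
  set S := span R ((fun i => D^[i] r) '' Iio j)
  have hstable : ∀ m ∈ S, c • D m ∈ S := by
    intro m hm
    induction hm using span_induction with
    | mem m hm =>
      obtain ⟨i, hi, rfl⟩ := hm
      simp only [← Function.iterate_succ_apply' D]
      rcases Nat.lt_or_eq_of_le (Nat.succ_le_of_lt hi) with hij | rfl
      · exact smul_mem _ _ (subset_span ⟨i + 1, hij, rfl⟩)
      · exact hj
    | zero => simp
    | add m m' _ _ hm hm' => simpa only [map_add, smul_add] using add_mem hm hm'
    | smul a m hmS hm =>
      rw [hD, smul_add, smul_smul, smul_comm c a]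
      exact add_mem (smul_mem _ _ hmS) (smul_mem _ _ hm)
  induction n with
  | zero =>
    rcases Nat.eq_zero_or_pos j with rfl | hpos
    · exact ⟨c, hc, hj⟩
    · exact ⟨1, one_ne_zero, by rw [one_smul]; exact subset_span ⟨0, hpos, rfl⟩⟩
  | succ n ih =>
    obtain ⟨e, he, heS⟩ := ih
    refine ⟨e * (c * e), mul_ne_zero he (mul_ne_zero hc he), ?_⟩
    have hleibniz : (e * (c * e)) • D^[n + 1] r
        = e • c • D (e • D^[n] r) - (c * δ e) • e • D^[n] r := by
      rw [hD, Function.iterate_succ_apply']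
      module
    rw [hleibniz]
    exact sub_mem (smul_mem _ _ (hstable _ heS)) (smul_mem _ _ heS)

-- The `N` rows `D^[i] r`, `i < N`, are linearly dependent since they share the kernel vector `w`.
-- The first one depending on its predecessors makes every later one depend on them too.
theorem dotProduct_iterate_eq_zero {N : ℕ} {D : (Fin N → R) →+ (Fin N → R)} {r w : Fin N → R}
    (hD : ∀ (c : R) (m : Fin N → R), D (c • m) = δ c • m + c • D m) (hw : w ≠ 0)
    (hr : ∀ i < N, D^[i] r ⬝ᵥ w = 0) (n : ℕ) : D^[n] r ⬝ᵥ w = 0 := by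
  let B : Matrix (Fin N) (Fin N) R := Matrix.of fun i => D^[i] r
  have hBw : B *ᵥ w = 0 := funext fun i => hr i i.2
  obtain ⟨v, hv, hvB⟩ := Matrix.exists_vecMul_eq_zero_iff.2
    (Matrix.exists_mulVec_eq_zero_iff.1 ⟨w, hw, hBw⟩)
  rw [Matrix.vecMul_eq_sum] at hvB
  obtain ⟨j, hjN, c, hc, hj⟩ := exists_smul_mem_span_of_sum_eq_zero (f := fun i => D^[i] r) hv hvB
  obtain ⟨e, he, heS⟩ := exists_smul_iterate_mem_span hD hc hj n
  have hker : span R ((fun i => D^[i] r) '' Iio j)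
      ≤ LinearMap.ker ((dotProductBilin R R).flip w) := by
    rw [span_le]
    rintro _ ⟨i, hi, rfl⟩
    exact hr i (lt_trans hi hjN)
  have hew : (e • D^[n] r) ⬝ᵥ w = 0 := hker heS
  rw [smul_dotProduct, smul_eq_mul] at hew
  exact (mul_eq_zero.1 hew).resolve_left he

end DifferentialModule

section TaylorSeries

open scoped Nat PowerSeries PowerSeries.WithPiTopology
open PowerSeries (coeff)

/-- The formal Taylor series at `0` of a function that is smooth there. -/
def taylorSeries (f : ℝ → ℝ) : ℝ⟦X⟧ := PowerSeries.mk fun n => iteratedDeriv n f 0 / n !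

variable {f g : ℝ → ℝ}

theorem coeff_taylorSeries (f : ℝ → ℝ) (n : ℕ) :
    coeff n (taylorSeries f) = iteratedDeriv n f 0 / n ! :=
  PowerSeries.coeff_mk _ _

theorem constantCoeff_taylorSeries (f : ℝ → ℝ) :
    PowerSeries.constantCoeff (taylorSeries f) = f 0 := by
  rw [← PowerSeries.coeff_zero_eq_constantCoeff_apply, coeff_taylorSeries]
  simp

theorem taylorSeries_congr (h : f =ᶠ[𝓝 0] g) : taylorSeries f = taylorSeries g := by
  ext n
  rw [coeff_taylorSeries, coeff_taylorSeries, h.iteratedDeriv_eq]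

theorem taylorSeries_zero : taylorSeries 0 = 0 := by
  ext n
  rw [coeff_taylorSeries, Pi.zero_def, iteratedDeriv_const]
  simp

theorem taylorSeries_deriv (f : ℝ → ℝ) :
    taylorSeries (deriv f) = PowerSeries.derivative ℝ (taylorSeries f) := by
  ext n
  rw [PowerSeries.coeff_derivative, coeff_taylorSeries, coeff_taylorSeries, iteratedDeriv_succ',
    Nat.factorial_succ]
  push_cast
  field_simp

theorem taylorSeries_sub (hf : ContDiffAt ℝ ∞ f 0) (hg : ContDiffAt ℝ ∞ g 0) :
    taylorSeries (fun t => f t - g t) = taylorSeries f - taylorSeries g := by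
  ext n
  simp only [map_sub, coeff_taylorSeries, ← sub_div]
  exact congrArg (· / (n ! : ℝ)) (iteratedDeriv_fun_sub (hf.of_le (mod_cast le_top))
    (hg.of_le (mod_cast le_top)))

theorem taylorSeries_sum {ι : Type*} (s : Finset ι) {f : ι → ℝ → ℝ}
    (hf : ∀ i ∈ s, ContDiffAt ℝ ∞ (f i) 0) :
    taylorSeries (fun t => ∑ i ∈ s, f i t) = ∑ i ∈ s, taylorSeries (f i) := by
  ext n
  simp only [map_sum, coeff_taylorSeries, ← Finset.sum_div]
  exact congrArg (· / (n ! : ℝ)) (iteratedDeriv_fun_sum fun i hi =>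
    (hf i hi).of_le (mod_cast le_top))

theorem taylorSeries_mul (hf : ContDiffAt ℝ ∞ f 0) (hg : ContDiffAt ℝ ∞ g 0) :
    taylorSeries (fun t => f t * g t) = taylorSeries f * taylorSeries g := by
  ext n
  rw [PowerSeries.coeff_mul, coeff_taylorSeries, iteratedDeriv_fun_mul
    (hf.of_le (mod_cast le_top)) (hg.of_le (mod_cast le_top)), Finset.sum_div,
    Finset.Nat.sum_antidiagonal_eq_sum_range_succ_mk]
  refine Finset.sum_congr rfl fun i hi => ?_
  rw [coeff_taylorSeries, coeff_taylorSeries,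
    Nat.cast_choose ℝ (Nat.lt_succ_iff.1 (Finset.mem_range.1 hi))]
  field_simp

end TaylorSeries

section FormalKernel

open scoped Matrix PowerSeries

variable {N : ℕ}

/-- The formal covariant derivative `r' - r a` of a row vector `r` of power series. -/
def formalDeriv (a : Matrix (Fin N) (Fin N) ℝ⟦X⟧) : (Fin N → ℝ⟦X⟧) →+ (Fin N → ℝ⟦X⟧) where
  toFun r := fun j => PowerSeries.derivative ℝ (r j) - (r ᵥ* a) j
  map_zero' := by
    ext1 j
    simp
  map_add' r r' := by
    ext1 j
    simp only [Pi.add_apply, map_add, Matrix.add_vecMul]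
    ring

theorem formalDeriv_apply (a : Matrix (Fin N) (Fin N) ℝ⟦X⟧) (r : Fin N → ℝ⟦X⟧) (j : Fin N) :
    formalDeriv a r j = PowerSeries.derivative ℝ (r j) - (r ᵥ* a) j := rfl

theorem formalDeriv_smul (a : Matrix (Fin N) (Fin N) ℝ⟦X⟧) (c : ℝ⟦X⟧) (r : Fin N → ℝ⟦X⟧) :
    formalDeriv a (c • r) = PowerSeries.derivative ℝ c • r + c • formalDeriv a r := by
  ext1 j
  simp only [formalDeriv_apply, Matrix.smul_vecMul, Pi.add_apply, Pi.smul_apply, smul_eq_mul,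
    Derivation.leibniz]
  ring

theorem taylorSeries_dotProduct {f g : ℝ → Fin N → ℝ} (hf : ∀ i, ContDiffAt ℝ ∞ (fun t => f t i) 0)
    (hg : ∀ i, ContDiffAt ℝ ∞ (fun t => g t i) 0) :
    taylorSeries (fun t => f t ⬝ᵥ g t)
      = (fun i => taylorSeries fun t => f t i) ⬝ᵥ fun i => taylorSeries fun t => g t i := by
  simp only [dotProduct, taylorSeries_sum Finset.univ fun i _ => (hf i).mul (hg i),
    taylorSeries_mul (hf _) (hg _)]

theorem dotProduct_eq_zero_of_linear_recurrence {r : ℕ → ℝ → Fin N → ℝ}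
    {a : ℝ → Matrix (Fin N) (Fin N) ℝ} {w : ℝ → Fin N → ℝ}
    (hr : ∀ n j, ContDiffAt ℝ ∞ (fun t => r n t j) 0)
    (ha : ∀ i j, ContDiffAt ℝ ∞ (fun t => a t i j) 0) (hw : ∀ i, ContDiffAt ℝ ∞ (fun t => w t i) 0)
    (hrec : ∀ n j, ∀ᶠ t in 𝓝 0, r (n + 1) t j = deriv (fun t => r n t j) t - (r n t ᵥ* a t) j)
    (hw0 : w 0 ≠ 0) (hrw : ∀ n < N, ∀ᶠ t in 𝓝 0, r n t ⬝ᵥ w t = 0) (n : ℕ) : r n 0 ⬝ᵥ w 0 = 0 := by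
  let rT (n : ℕ) (j : Fin N) : ℝ⟦X⟧ := taylorSeries fun t => r n t j
  let aT : Matrix (Fin N) (Fin N) ℝ⟦X⟧ := Matrix.of fun i j => taylorSeries fun t => a t i j
  let wT (i : Fin N) : ℝ⟦X⟧ := taylorSeries fun t => w t i
  have hiterate (n : ℕ) : (formalDeriv aT)^[n] (rT 0) = rT n := by
    induction n with
    | zero => rfl
    | succ n ih =>
      ext1 j
      have hprod : ContDiffAt ℝ ∞ (fun t => (r n t ᵥ* a t) j) 0 :=
        ContDiffAt.sum (s := Finset.univ) fun i _ => (hr n i).mul (ha i j)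
      have hderiv : ContDiffAt ℝ ∞ (deriv fun t => r n t j) 0 :=
        ((hr n j).fderiv_right (m := ∞) (by simp)).clm_apply contDiffAt_const
      rw [Function.iterate_succ_apply', ih, formalDeriv_apply]
      change _ = taylorSeries _
      rw [taylorSeries_congr (hrec n j),
        taylorSeries_sub hderiv hprod, taylorSeries_deriv]
      exact congrArg (_ - ·) (taylorSeries_dotProduct (hr n) fun i => ha i j).symm
  have hpairing (n : ℕ) : rT n ⬝ᵥ wT = taylorSeries fun t => r n t ⬝ᵥ w t :=
    (taylorSeries_dotProduct (hr n) hw).symm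
  have hwT : wT ≠ 0 := by
    refine fun h => hw0 (funext fun i => ?_)
    rw [← constantCoeff_taylorSeries fun t => w t i]
    exact congrArg _ (congrFun h i)
  have hzero := dotProduct_iterate_eq_zero (formalDeriv_smul aT) hwT (r := rT 0)
    (fun i hi => by
      rw [hiterate, hpairing, taylorSeries_congr (hrw i hi)]
      exact taylorSeries_zero) n
  rw [hiterate, hpairing] at hzero
  simpa only [constantCoeff_taylorSeries, map_zero] using congrArg PowerSeries.constantCoeff hzero

variable {E : Type*} [NormedAddCommGroup E] [NormedSpace ℝ E]
  {A : E → E →L[ℝ] (Fin N → ℝ) →L[ℝ] (Fin N → ℝ)} {R : E → (Fin N → ℝ) →L[ℝ] ℝ}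
  {W : E → Fin N → ℝ} {p : E}

theorem clm_apply_eq_dotProduct (L : (Fin N → ℝ) →L[ℝ] ℝ) (x : Fin N → ℝ) :
    L x = (fun i => L (Pi.single i 1)) ⬝ᵥ x := by
  conv_lhs => rw [pi_eq_sum_univ' x, map_sum]
  simp only [map_smul, smul_eq_mul, dotProduct, mul_comm]

theorem dualDeriv_iterate_apply_eq_zero (hA : AnalyticAt ℝ A p) (hR : AnalyticAt ℝ R p)
    (hW : AnalyticAt ℝ W p) (hWp : W p ≠ 0) (v : E)
    (hRW : ∀ n < N, ∀ᶠ q in 𝓝 p, (dualDeriv A v)^[n] R q (W q) = 0) (n : ℕ) :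
    (dualDeriv A v)^[n] R p (W p) = 0 := by
  have hline {f : E → ℝ} (hf : AnalyticAt ℝ f p) : ContDiffAt ℝ ∞ (fun t : ℝ => f (p + t • v)) 0 :=
    (AnalyticAt.comp_of_eq hf (analyticAt_const.add (analyticAt_id.smul analyticAt_const))
      (by simp)).contDiffAt
  have hRn := analyticAt_dualDeriv_iterate hA hR v
  have h := dotProduct_eq_zero_of_linear_recurrence
    (r := fun n t i => (dualDeriv A v)^[n] R (p + t • v) (Pi.single i 1))
    (a := fun t => Matrix.of fun i j => A (p + t • v) v (Pi.single j 1) i)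
    (w := fun t => W (p + t • v))
    (fun n i => hline (analyticAt_clm_apply (hRn n) analyticAt_const))
    (fun i j => hline (analyticAt_pi_iff.1
      (analyticAt_clm_apply (analyticAt_clm_apply hA analyticAt_const) analyticAt_const) i))
    (fun i => hline (analyticAt_pi_iff.1 hW i))
    (fun n j => ?_) (by simpa using hWp) (fun n hn => ?_) n
  · rwa [← clm_apply_eq_dotProduct, zero_smul, add_zero] at h
  · filter_upwards [(tendsto_line p v).eventually (hRn n).eventually_analyticAt] with t ht
    have hd : DifferentiableAt ℝ ((dualDeriv A v)^[n] R) (p + t • v) := ht.differentiableAt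
    rw [(hasDerivAt_comp_line (hd.clm_apply (differentiableAt_const _))).deriv,
      fderiv_clm_apply hd (differentiableAt_const _), Function.iterate_succ_apply', dualDeriv,
      sub_apply, ContinuousLinearMap.comp_apply, clm_apply_eq_dotProduct _ (A _ _ _)]
    simp [Matrix.vecMul]
  · filter_upwards [(tendsto_line p v).eventually (hRW n hn)] with t ht
    rwa [← clm_apply_eq_dotProduct]

end FormalKernel

theorem sum_map_permutations'_cons {ι M : Type*} [AddCommMonoid M] (f : List ι → M) (a : ι)
    (l : List ι) :
    ((a :: l).permutations'.map f).sum
      = (l.permutations'.map fun m => ((m.permutations'Aux a).map f).sum).sum := by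
  rw [List.permutations', List.flatMap_def, List.map_flatten, List.sum_flatten, List.map_map,
    List.map_map]
  rfl

section Words

open scoped Nat

variable {ι K M M' : Type*} [Fintype ι] [CommSemiring K] [AddCommMonoid M] [Module K M]
  [AddCommMonoid M'] [Module K M']

/-- The sum of `c a₁ ⋯ c aₙ • f [a₁, …, aₙ]` over all words of length `n`: the value at the
vector `c` of the homogeneous form of degree `n` with coefficients `f`. -/
def wordSum (c : ι → K) : (List ι → M) → ℕ → M
  | f, 0 => f []
  | f, n + 1 => ∑ a, c a • wordSum c (fun l => f (a :: l)) n

variable {c : ι → K} {f g : List ι → M}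

theorem wordSum_zero (c : ι → K) (f : List ι → M) : wordSum c f 0 = f [] := rfl

theorem wordSum_succ (c : ι → K) (f : List ι → M) (n : ℕ) :
    wordSum c f (n + 1) = ∑ a, c a • wordSum c (fun l => f (a :: l)) n := rfl

theorem wordSum_congr {n : ℕ} (h : ∀ l, l.length = n → f l = g l) :
    wordSum c f n = wordSum c g n := by
  induction n generalizing f g with
  | zero => exact h [] rfl
  | succ n ih =>
    exact Finset.sum_congr rfl fun a _ => congrArg (c a • ·)
      (ih fun l hl => h (a :: l) (congrArg (· + 1) hl))

theorem wordSum_const_zero (n : ℕ) : wordSum c (fun _ => (0 : M)) n = 0 := by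
  induction n with
  | zero => rfl
  | succ n ih => simp only [wordSum_succ, ih, smul_zero, Finset.sum_const_zero]

theorem wordSum_add (n : ℕ) :
    wordSum c (fun l => f l + g l) n = wordSum c f n + wordSum c g n := by
  induction n generalizing f g with
  | zero => rfl
  | succ n ih => simp only [wordSum_succ, ih, smul_add, Finset.sum_add_distrib]

theorem map_wordSum (L : M →ₗ[K] M') (n : ℕ) :
    L (wordSum c f n) = wordSum c (fun l => L (f l)) n := by
  induction n generalizing f with
  | zero => rfl
  | succ n ih => simp only [wordSum_succ, map_sum, map_smul, ih]

theorem sum_smul_wordSum_permutations'Aux (f : List ι → M) (n : ℕ) :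
    ∑ a, c a • wordSum c (fun l => ((l.permutations'Aux a).map f).sum) n
      = (n + 1) • wordSum c f (n + 1) := by
  induction n generalizing f with
  | zero => simp [wordSum_zero, wordSum_succ]
  | succ n ih =>
    have hcons (a : ι) : wordSum c (fun l => ((l.permutations'Aux a).map f).sum) (n + 1)
        = wordSum c (fun l => f (a :: l)) (n + 1) + ∑ b, c b • wordSum c
          (fun l => ((l.permutations'Aux a).map fun m => f (b :: m)).sum) n := by
      simp only [wordSum_succ c _ n, List.permutations'Aux, List.map_cons, List.sum_cons,
        List.map_map, Function.comp_def, wordSum_add, smul_add, Finset.sum_add_distrib]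
    calc ∑ a, c a • wordSum c (fun l => ((l.permutations'Aux a).map f).sum) (n + 1)
        = wordSum c f (n + 2) + ∑ b, c b • ∑ a, c a • wordSum c
            (fun l => ((l.permutations'Aux a).map fun m => f (b :: m)).sum) n := by
          simp only [hcons, smul_add, Finset.sum_add_distrib, ← wordSum_succ, Finset.smul_sum]
          rw [Finset.sum_comm]
          simp only [smul_comm (c _) (c _)]
      _ = wordSum c f (n + 2) + (n + 1) • wordSum c f (n + 2) := by
          simp only [ih, smul_comm (c _) (n + 1), ← Finset.smul_sum, ← wordSum_succ]
      _ = (n + 1 + 1) • wordSum c f (n + 1 + 1) :=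
          (succ_nsmul' _ _).symm

theorem wordSum_permutations' (f : List ι → M) (n : ℕ) :
    wordSum c (fun l => (l.permutations'.map f).sum) n = n ! • wordSum c f n := by
  induction n generalizing f with
  | zero => simp [wordSum_zero]
  | succ n ih =>
    calc wordSum c (fun l => (l.permutations'.map f).sum) (n + 1)
        = ∑ a, c a • n ! • wordSum c (fun l => ((l.permutations'Aux a).map f).sum) n := by
          rw [wordSum_succ]
          simp only [sum_map_permutations'_cons, ih]
      _ = n ! • (n + 1) • wordSum c f (n + 1) := by
          simp only [smul_comm (c _) n !, ← Finset.smul_sum, sum_smul_wordSum_permutations'Aux]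
      _ = (n + 1)! • wordSum c f (n + 1) := by
          rw [Nat.factorial_succ, mul_comm, mul_smul]

end Words

theorem wordSum_eq_zero_of_sum_permutations_eq_zero {ι K M : Type*} [Fintype ι] [Field K]
    [CharZero K] [AddCommGroup M] [Module K M] {f : List ι → M} {n : ℕ}
    (hf : ∀ l : List ι, l.length = n → (l.permutations.map f).sum = 0) (c : ι → K) :
    wordSum c f n = 0 := by
  have hfact : (n.factorial : K) • wordSum c f n = 0 := by
    rw [Nat.cast_smul_eq_nsmul, ← wordSum_permutations', ← wordSum_const_zero (c := c) n]
    refine wordSum_congr fun l hl => ?_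
    exact (((l.permutations_perm_permutations'.map f).sum_eq).symm).trans (hf l hl)
  exact (smul_eq_zero.1 hfact).resolve_left (Nat.cast_ne_zero.2 n.factorial_ne_zero)

section PartialDerivatives

/-- The coordinate directions of the plane, `pd a` being the derivative along `coordDir a`. -/
def coordDir : Fin 2 → ℝ × ℝ := ![(1, 0), (0, 1)]

theorem eq_sum_smul_coordDir (v : ℝ × ℝ) : v = ∑ a, ![v.1, v.2] a • coordDir a := by
  ext <;> simp [coordDir]

theorem pdx_eq_pd : pdx = pd 0 := rfl

theorem pdy_eq_pd : pdy = pd 1 := rfl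

variable {f g : ℝ × ℝ → ℝ} {q : ℝ × ℝ} {a b : Fin 2}

theorem pd_eq_lineDeriv (a : Fin 2) (f : ℝ × ℝ → ℝ) (q : ℝ × ℝ) :
    pd a f q = lineDeriv ℝ f q (coordDir a) := by
  fin_cases a
  · simpa [coordDir, lineDeriv, pd, pdx, Prod.add_def] using
      (deriv_comp_const_add (fun t => f (t, q.2)) q.1 0).symm
  · simpa [coordDir, lineDeriv, pd, pdy, Prod.add_def] using
      (deriv_comp_const_add (fun t => f (q.1, t)) q.2 0).symm

theorem pd_eq_fderiv (hf : DifferentiableAt ℝ f q) : pd a f q = fderiv ℝ f q (coordDir a) :=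
  (pd_eq_lineDeriv a f q).trans hf.lineDeriv_eq_fderiv

theorem pd_congr (h : f =ᶠ[𝓝 q] g) : pd a f q = pd a g q := by
  rw [pd_eq_lineDeriv, pd_eq_lineDeriv, h.lineDeriv_eq]

theorem pd_const (c : ℝ) : pd a (fun _ => c) q = 0 := by
  rw [pd_eq_fderiv (differentiableAt_const c), fderiv_fun_const]
  rfl

theorem pd_neg (hf : DifferentiableAt ℝ f q) : pd a (fun z => -f z) q = -pd a f q := by
  rw [pd_eq_fderiv hf.fun_neg, pd_eq_fderiv hf, fderiv_fun_neg]
  rfl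

theorem pd_add (hf : DifferentiableAt ℝ f q) (hg : DifferentiableAt ℝ g q) :
    pd a (fun z => f z + g z) q = pd a f q + pd a g q := by
  rw [pd_eq_fderiv (hf.fun_add hg), pd_eq_fderiv hf, pd_eq_fderiv hg, fderiv_fun_add hf hg]
  rfl

theorem pd_sub (hf : DifferentiableAt ℝ f q) (hg : DifferentiableAt ℝ g q) :
    pd a (fun z => f z - g z) q = pd a f q - pd a g q := by
  rw [pd_eq_fderiv (hf.fun_sub hg), pd_eq_fderiv hf, pd_eq_fderiv hg, fderiv_fun_sub hf hg]
  rfl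

theorem pd_mul (hf : DifferentiableAt ℝ f q) (hg : DifferentiableAt ℝ g q) :
    pd a (fun z => f z * g z) q = pd a f q * g q + f q * pd a g q := by
  rw [pd_eq_fderiv (hf.fun_mul hg), pd_eq_fderiv hf, pd_eq_fderiv hg, fderiv_fun_mul hf hg]
  simp only [add_apply, smul_apply, smul_eq_mul]
  ring

theorem pd_const_mul (hf : DifferentiableAt ℝ f q) (c : ℝ) (a : Fin 2) :
    pd a (fun z => c * f z) q = c * pd a f q := by
  rw [pd_mul (differentiableAt_const c) hf, pd_const, zero_mul, zero_add]

theorem pd_comp {φ : ℝ → ℝ} {φ' : ℝ} (hφ : HasDerivAt φ φ' (f q)) (hf : DifferentiableAt ℝ f q) :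
    pd a (fun z => φ (f z)) q = φ' * pd a f q := by
  have hcomp := hφ.comp_hasFDerivAt q hf.hasFDerivAt
  rw [pd_eq_fderiv hf]
  refine (pd_eq_fderiv hcomp.differentiableAt).trans ?_
  exact congrArg (· (coordDir a)) hcomp.fderiv

theorem pd_sq (hf : DifferentiableAt ℝ f q) :
    pd a (fun z => f z ^ 2) q = 2 * f q * pd a f q := by
  simpa using pd_comp (hasDerivAt_pow 2 (f q)) hf

theorem eventually_pd_eq_fderiv (hf : ContDiffAt ℝ 1 f q) :
    pd a f =ᶠ[𝓝 q] fun z => fderiv ℝ f z (coordDir a) := by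
  filter_upwards [hf.eventually (by simp)] with z hz
    using pd_eq_fderiv (hz.differentiableAt one_ne_zero)

theorem contDiffAt_pd (hf : ContDiffAt ℝ ∞ f q) : ContDiffAt ℝ ∞ (pd a f) q :=
  ((hf.fderiv_right (m := ∞) (by simp)).clm_apply contDiffAt_const).congr_of_eventuallyEq
    (eventually_pd_eq_fderiv (hf.of_le (by simp)))

@[fun_prop]
theorem analyticAt_pd (hf : AnalyticAt ℝ f q) : AnalyticAt ℝ (pd a f) q :=
  (analyticAt_clm_apply hf.fderiv analyticAt_const).congr
    (eventually_pd_eq_fderiv hf.contDiffAt).symm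

theorem pd_comm (hf : ContDiffAt ℝ 2 f q) : pd a (pd b f) q = pd b (pd a f) q := by
  have hd : DifferentiableAt ℝ (fderiv ℝ f) q :=
    (hf.fderiv_right (m := 1) (by norm_num)).differentiableAt one_ne_zero
  have hpd (a b : Fin 2) :
      pd a (pd b f) q = fderiv ℝ (fderiv ℝ f) q (coordDir a) (coordDir b) := by
    rw [pd_congr (eventually_pd_eq_fderiv (hf.of_le (by norm_num))),
      pd_eq_fderiv (hd.clm_apply (differentiableAt_const _)),
      fderiv_clm_apply hd (differentiableAt_const _)]
    simp
  rw [hpd, hpd]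
  exact hf.isSymmSndFDerivAt (by simp) _ _

theorem eventually_pd_comm (hf : AnalyticAt ℝ f q) : pd a (pd b f) =ᶠ[𝓝 q] pd b (pd a f) := by
  filter_upwards [hf.eventually_analyticAt] with z hz using pd_comm hz.contDiffAt

end PartialDerivatives

theorem fderiv_coordDir_apply {ι : Type*} {s : ℝ × ℝ → ι → ℝ} {q : ℝ × ℝ}
    (hs : DifferentiableAt ℝ s q) (a : Fin 2) (i : ι) :
    fderiv ℝ s q (coordDir a) i = pd a (fun z => s z i) q := by
  rw [pd_eq_fderiv (differentiableAt_pi.1 hs i), fderiv_apply hs]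
  rfl

section MatrixConnection

variable {ι : Type*} [Fintype ι]

/-- The action of square matrices on column vectors, as a continuous bilinear map. -/
def mulVecCLM (ι : Type*) [Fintype ι] : (ι → ι → ℝ) →L[ℝ] (ι → ℝ) →L[ℝ] (ι → ℝ) :=
  LinearMap.toContinuousBilinearMap
    (Matrix.mulVecBilin ℝ ℝ : Matrix ι ι ℝ →ₗ[ℝ] (ι → ℝ) →ₗ[ℝ] ι → ℝ)

/-- The action of row vectors on column vectors, as a continuous bilinear map. -/
def dotProductCLM (ι : Type*) [Fintype ι] : (ι → ℝ) →L[ℝ] (ι → ℝ) →L[ℝ] ℝ :=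
  (dotProductBilin ℝ ℝ).toContinuousBilinearMap

/-- The connection form `Ω₁ dx + Ω₂ dy` on the plane. -/
def connForm (Ω : Fin 2 → ℝ × ℝ → Matrix ι ι ℝ) : ℝ × ℝ → ℝ × ℝ →L[ℝ] (ι → ℝ) →L[ℝ] (ι → ℝ) :=
  fun q => (ContinuousLinearMap.fst ℝ ℝ ℝ).smulRight (mulVecCLM ι (Ω 0 q))
    + (ContinuousLinearMap.snd ℝ ℝ ℝ).smulRight (mulVecCLM ι (Ω 1 q))

/-- The row field `R` as a field of linear forms on column vectors. -/
def rowForm (R : ℝ × ℝ → ι → ℝ) : ℝ × ℝ → (ι → ℝ) →L[ℝ] ℝ := fun q => dotProductCLM ι (R q)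

theorem rowForm_apply (R : ℝ × ℝ → ι → ℝ) (q : ℝ × ℝ) (x : ι → ℝ) : rowForm R q x = R q ⬝ᵥ x := rfl

variable {Ω : Fin 2 → ℝ × ℝ → Matrix ι ι ℝ} {R s : ℝ × ℝ → ι → ℝ} {q : ℝ × ℝ}

theorem mulVecCLM_apply (M : ι → ι → ℝ) (x : ι → ℝ) (i : ι) :
    mulVecCLM ι M x i = ∑ j, M i j * x j := rfl

theorem connForm_coordDir (a : Fin 2) (q : ℝ × ℝ) :
    connForm Ω q (coordDir a) = mulVecCLM ι (Ω a q) := by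
  fin_cases a <;> simp [connForm, coordDir]

set_option maxSynthPendingDepth 3 in
theorem analyticAt_connForm (hΩ : ∀ a i j, AnalyticAt ℝ (fun z => Ω a z i j) q) :
    AnalyticAt ℝ (connForm Ω) q := by
  have hmat (a : Fin 2) : AnalyticAt ℝ (fun z => mulVecCLM ι (Ω a z)) q :=
    ((mulVecCLM ι).analyticAt _).comp
      (AnalyticAt.pi fun i => AnalyticAt.pi fun j => hΩ a i j)
  have hsmul (c : ℝ × ℝ →L[ℝ] ℝ) (a : Fin 2) :
      AnalyticAt ℝ (fun z => c.smulRight (mulVecCLM ι (Ω a z))) q :=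
    ((ContinuousLinearMap.smulRightL ℝ (ℝ × ℝ) ((ι → ℝ) →L[ℝ] ι → ℝ) c).analyticAt _).comp
      (hmat a)
  exact (hsmul _ 0).add (hsmul _ 1)

theorem analyticAt_rowForm (hR : AnalyticAt ℝ R q) : AnalyticAt ℝ (rowForm R) q :=
  ((dotProductCLM ι).analyticAt _).comp hR

theorem covDeriv_connForm_apply (hs : DifferentiableAt ℝ s q) (a : Fin 2) (i : ι) :
    covDeriv (connForm Ω) (coordDir a) s q i
      = pd a (fun z => s z i) q + ∑ j, Ω a q i j * s q j := by
  rw [covDeriv, connForm_coordDir, Pi.add_apply, fderiv_coordDir_apply hs]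
  rfl

theorem dualDeriv_connForm (hR : DifferentiableAt ℝ R q) (a : Fin 2) :
    dualDeriv (connForm Ω) (coordDir a) (rowForm R) q
      = dotProductCLM ι ((fun i => pd a (fun z => R z i) q) - Matrix.vecMul (R q) (Ω a q)) := by
  have hfderiv : fderiv ℝ (rowForm R) q (coordDir a)
      = dotProductCLM ι (fun i => pd a (fun z => R z i) q) := by
    have hcomp := ((dotProductCLM ι).hasFDerivAt.comp q hR.hasFDerivAt).fderiv
    refine (congrArg (· (coordDir a)) hcomp).trans (congrArg (dotProductCLM ι) ?_)
    exact funext fun i => fderiv_coordDir_apply hR a i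
  have hcomp : (rowForm R q).comp (mulVecCLM ι (Ω a q))
      = dotProductCLM ι (Matrix.vecMul (R q) (Ω a q)) :=
    ContinuousLinearMap.ext fun x => Matrix.dotProduct_mulVec (R q) (Ω a q) x
  rw [dualDeriv, connForm_coordDir, hfderiv, hcomp, ← map_sub]

theorem fderiv_connForm_coordDir (hΩ : ∀ a i j, AnalyticAt ℝ (fun z => Ω a z i j) q) (a b : Fin 2) :
    fderiv ℝ (connForm Ω) q (coordDir a) (coordDir b)
      = mulVecCLM ι (fun i j => pd a (fun z => Ω b z i j) q) := by
  have hΩb : DifferentiableAt ℝ (fun z i j => Ω b z i j) q :=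
    differentiableAt_pi.2 fun i => differentiableAt_pi.2 fun j => (hΩ b i j).differentiableAt
  have hcomp := ((mulVecCLM ι).hasFDerivAt.comp q hΩb.hasFDerivAt).fderiv
  have hconn : (fun z => connForm Ω z (coordDir b)) = fun z => mulVecCLM ι (Ω b z) :=
    funext fun z => connForm_coordDir b z
  have happly := fderiv_clm_apply (analyticAt_connForm hΩ).differentiableAt
    (differentiableAt_const (coordDir b))
  rw [hconn] at happly
  have heval := congrArg (· (coordDir a)) (happly.symm.trans hcomp)
  have hentries : fderiv ℝ (fun z i j => Ω b z i j) q (coordDir a)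
      = fun i j => pd a (fun z => Ω b z i j) q := by
    ext i j
    rw [← fderiv_coordDir_apply (differentiableAt_pi.1 hΩb i), fderiv_apply hΩb]
    rfl
  simpa [hentries] using heval

theorem curvature_connForm_apply (hΩ : ∀ a i j, AnalyticAt ℝ (fun z => Ω a z i j) q)
    (x : ι → ℝ) (i : ι) :
    curvature (connForm Ω) q (coordDir 0) (coordDir 1) x i
      = ∑ j, (pd 0 (fun z => Ω 1 z i j) q - pd 1 (fun z => Ω 0 z i j) q
        + ∑ k, (Ω 0 q i k * Ω 1 q k j - Ω 1 q i k * Ω 0 q k j)) * x j := by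
  have hmul (a b : Fin 2) : mulVecCLM ι (Ω a q) (mulVecCLM ι (Ω b q) x) i
      = ∑ j, (∑ k, Ω a q i k * Ω b q k j) * x j :=
    congrFun (Matrix.mulVec_mulVec x (Ω a q) (Ω b q)) i
  simp only [curvature, fderiv_connForm_coordDir hΩ, connForm_coordDir, add_apply, sub_apply,
    ContinuousLinearMap.comp_apply, Pi.add_apply, Pi.sub_apply, mulVecCLM_apply, hmul,
    ← Finset.sum_add_distrib, ← Finset.sum_sub_distrib]
  exact Finset.sum_congr rfl fun j _ => by
    rw [Finset.sum_sub_distrib]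
    ring

end MatrixConnection

theorem curvature_plane {F : Type*} [NormedAddCommGroup F] [NormedSpace ℝ F]
    (A : ℝ × ℝ → ℝ × ℝ →L[ℝ] F →L[ℝ] F) (q u v : ℝ × ℝ) :
    curvature A q u v
      = (u.1 * v.2 - u.2 * v.1) • curvature A q (coordDir 0) (coordDir 1) := by
  conv_lhs => rw [eq_sum_smul_coordDir u, eq_sum_smul_coordDir v]
  ext x
  simp only [curvature, Fin.sum_univ_two, Matrix.cons_val_zero, Matrix.cons_val_one, map_add,
    map_smul, add_apply, sub_apply, smul_apply, ContinuousLinearMap.comp_apply]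
  module

section DirectionalWords

set_option maxSynthPendingDepth 3

variable {ι E F G : Type*} [Fintype ι] [NormedAddCommGroup E] [NormedSpace ℝ E]
  [NormedAddCommGroup F] [NormedSpace ℝ F] [NormedAddCommGroup G] [NormedSpace ℝ G]
  {A : E → E →L[ℝ] F →L[ℝ] F} {q : E}

theorem dualDeriv_congr {R R' : E → F →L[ℝ] G} (h : R =ᶠ[𝓝 q] R') (v : E) :
    dualDeriv A v R q = dualDeriv A v R' q := by
  rw [dualDeriv, dualDeriv, h.fderiv_eq, h.eq_of_nhds]

theorem dualDeriv_sum_smul {R : ι → E → F →L[ℝ] G} (hR : ∀ a, DifferentiableAt ℝ (R a) q)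
    (c : ι → ℝ) (v : E) :
    dualDeriv A v (fun z => ∑ a, c a • R a z) q = ∑ a, c a • dualDeriv A v (R a) q := by
  have hfderiv : fderiv ℝ (fun z => ∑ a, c a • R a z) q = ∑ a, c a • fderiv ℝ (R a) q := by
    rw [fderiv_fun_sum fun a _ => (hR a).fun_const_smul (c a)]
    exact Finset.sum_congr rfl fun a _ => fderiv_fun_const_smul (hR a) (c a)
  rw [dualDeriv, hfderiv]
  ext x
  simp [dualDeriv, smul_sub, Finset.sum_sub_distrib]

theorem dualDeriv_sum_smul_dir (R : E → F →L[ℝ] G) (c : ι → ℝ) (e : ι → E) :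
    dualDeriv A (∑ a, c a • e a) R q = ∑ a, c a • dualDeriv A (e a) R q := by
  ext x
  simp [dualDeriv, smul_sub, Finset.sum_sub_distrib]

variable {f : List ι → E → F →L[ℝ] G}

theorem differentiableAt_wordSum (hf : ∀ l, DifferentiableAt ℝ (f l) q) (c : ι → ℝ) (n : ℕ) :
    DifferentiableAt ℝ (fun z => wordSum c (fun l => f l z) n) q := by
  induction n generalizing f with
  | zero => exact hf []
  | succ n ih =>
    exact DifferentiableAt.fun_sum fun a _ => (ih fun l => hf (a :: l)).fun_const_smul (c a)

theorem dualDeriv_wordSum (hf : ∀ l, DifferentiableAt ℝ (f l) q) (c : ι → ℝ) (v : E) (n : ℕ) :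
    dualDeriv A v (fun z => wordSum c (fun l => f l z) n) q
      = wordSum c (fun l => dualDeriv A v (f l) q) n := by
  induction n generalizing f with
  | zero => rfl
  | succ n ih =>
    have hdiff (a : ι) := differentiableAt_wordSum (fun l => hf (a :: l)) c n
    exact (dualDeriv_sum_smul hdiff c v).trans
      (Finset.sum_congr rfl fun a _ => congrArg (c a • ·) (ih fun l => hf (a :: l)))

theorem dualDeriv_iterate_eventuallyEq_wordSum {e : ι → E}
    (hf : ∀ᶠ z in 𝓝 q, ∀ l, DifferentiableAt ℝ (f l) z)
    (hcons : ∀ᶠ z in 𝓝 q, ∀ a l, f (a :: l) z = dualDeriv A (e a) (f l) z) (c : ι → ℝ) (n : ℕ) :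
    (dualDeriv A (∑ a, c a • e a))^[n] (f []) =ᶠ[𝓝 q] fun z => wordSum c (fun l => f l z) n := by
  induction n with
  | zero => exact .rfl
  | succ n ih =>
    rw [Function.iterate_succ_apply']
    filter_upwards [ih.eventuallyEq_nhds, hf, hcons] with z hz hfz hconsz
    rw [dualDeriv_congr hz, dualDeriv_sum_smul_dir]
    refine Eq.trans (Finset.sum_congr rfl fun a _ => ?_) (wordSum_succ c (f · z) n).symm
    rw [dualDeriv_wordSum hfz, wordSum_congr fun l _ => (hconsz a l).symm]

end DirectionalWords

section ProjectiveConnection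

/-- The coefficients of the projective structure are real analytic at `q`. -/
structure AnalyticCoeffsAt (A0 A1 A2 A3 : ℝ × ℝ → ℝ) (q : ℝ × ℝ) : Prop where
  coeff₀ : AnalyticAt ℝ A0 q
  coeff₁ : AnalyticAt ℝ A1 q
  coeff₂ : AnalyticAt ℝ A2 q
  coeff₃ : AnalyticAt ℝ A3 q

variable {A0 A1 A2 A3 : ℝ × ℝ → ℝ} {q : ℝ × ℝ}

theorem AnalyticCoeffsAt.eventually (h : AnalyticCoeffsAt A0 A1 A2 A3 q) :
    ∀ᶠ z in 𝓝 q, AnalyticCoeffsAt A0 A1 A2 A3 z := by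
  filter_upwards [h.coeff₀.eventually_analyticAt, h.coeff₁.eventually_analyticAt,
    h.coeff₂.eventually_analyticAt, h.coeff₃.eventually_analyticAt] with z h₀ h₁ h₂ h₃
    using ⟨h₀, h₁, h₂, h₃⟩

theorem AnalyticCoeffsAt.om (h : AnalyticCoeffsAt A0 A1 A2 A3 q) (a : Fin 2) (i j : Fin 6) :
    AnalyticAt ℝ (fun z => Om A0 A1 A2 A3 a z i j) q := by
  obtain ⟨h₀, h₁, h₂, h₃⟩ := h
  fin_cases a <;> fin_cases i <;> fin_cases j <;>
    simp only [Om, Om1, Om2, pdx_eq_pd, pdy_eq_pd, Matrix.of_apply, Matrix.cons_val,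
      Fin.zero_eta, Fin.mk_one, Fin.reduceFinMk] <;>
    fun_prop

theorem AnalyticCoeffsAt.lio1 (h : AnalyticCoeffsAt A0 A1 A2 A3 q) :
    AnalyticAt ℝ (Lio1 A0 A1 A2 A3) q := by
  obtain ⟨h₀, h₁, h₂, h₃⟩ := h
  unfold Lio1
  rw [pdx_eq_pd, pdy_eq_pd]
  fun_prop

theorem AnalyticCoeffsAt.lio2 (h : AnalyticCoeffsAt A0 A1 A2 A3 q) :
    AnalyticAt ℝ (Lio2 A0 A1 A2 A3) q := by
  obtain ⟨h₀, h₁, h₂, h₃⟩ := h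
  unfold Lio2
  rw [pdx_eq_pd, pdy_eq_pd]
  fun_prop

theorem AnalyticCoeffsAt.vrow (h : AnalyticCoeffsAt A0 A1 A2 A3 q) :
    AnalyticAt ℝ (Vrow A0 A1 A2 A3) q := by
  have hL₁ := h.lio1
  have hL₂ := h.lio2
  obtain ⟨h₀, h₁, h₂, h₃⟩ := h
  refine AnalyticAt.pi fun i => ?_
  fin_cases i <;>
    simp only [Vrow, pdx_eq_pd, pdy_eq_pd, Matrix.cons_val, Fin.zero_eta, Fin.mk_one,
      Fin.reduceFinMk] <;>
    fun_prop

theorem AnalyticCoeffsAt.dop (h : AnalyticCoeffsAt A0 A1 A2 A3 q) {R : ℝ × ℝ → Fin 6 → ℝ}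
    (hR : AnalyticAt ℝ R q) (a : Fin 2) : AnalyticAt ℝ (Dop A0 A1 A2 A3 a R) q := by
  have hRi := analyticAt_pi_iff.1 hR
  refine AnalyticAt.pi fun i => (analyticAt_pd (hRi i)).fun_sub ?_
  exact Finset.analyticAt_fun_sum Finset.univ fun k _ => (hRi k).fun_mul (h.om a k i)

theorem AnalyticCoeffsAt.dIter (h : AnalyticCoeffsAt A0 A1 A2 A3 q) (l : List (Fin 2)) :
    AnalyticAt ℝ (DIter A0 A1 A2 A3 l (Vrow A0 A1 A2 A3)) q := by
  induction l with
  | nil => exact h.vrow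
  | cons a l ih => exact h.dop ih a

@[fun_prop]
theorem differentiableAt_pd {f : ℝ × ℝ → ℝ} {a : Fin 2} (hf : AnalyticAt ℝ f q) :
    DifferentiableAt ℝ (pd a f) q :=
  (analyticAt_pd hf).differentiableAt

set_option maxHeartbeats 1600000 in
-- The 36 entries are polynomial identities in the derivatives of the coefficients.
theorem om_curvature (h : AnalyticCoeffsAt A0 A1 A2 A3 q) (i j : Fin 6) :
    pd 0 (fun z => Om A0 A1 A2 A3 1 z i j) q - pd 1 (fun z => Om A0 A1 A2 A3 0 z i j) q
      + ∑ k, (Om A0 A1 A2 A3 0 q i k * Om A0 A1 A2 A3 1 q k j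
        - Om A0 A1 A2 A3 1 q i k * Om A0 A1 A2 A3 0 q k j)
      = if i = 5 then Vrow A0 A1 A2 A3 q j else 0 := by
  have swap {A : ℝ × ℝ → ℝ} (hA : AnalyticAt ℝ A q) : pd 1 (pd 0 A) q = pd 0 (pd 1 A) q :=
    pd_comm hA.contDiffAt
  have swap_under (a : Fin 2) {A : ℝ × ℝ → ℝ} (hA : AnalyticAt ℝ A q) :
      pd a (pd 1 (pd 0 A)) q = pd a (pd 0 (pd 1 A)) q := pd_congr (eventually_pd_comm hA)
  obtain ⟨h₀, h₁, h₂, h₃⟩ := h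
  have d₀ := h₀.differentiableAt
  have d₁ := h₁.differentiableAt
  have d₂ := h₂.differentiableAt
  have d₃ := h₃.differentiableAt
  fin_cases i <;> fin_cases j <;>
  · simp only [Om, Om1, Om2, Vrow, Lio1.eq_unfold, Lio2.eq_unfold, pdx_eq_pd, pdy_eq_pd,
      Fin.sum_univ_six, Matrix.of_apply, Matrix.cons_val, Fin.zero_eta, Fin.mk_one,
      Fin.reduceFinMk, Fin.reduceEq, if_true, if_false, Fin.isValue]
    simp (disch := fun_prop) only [pd_add, pd_sub, pd_mul, pd_sq, pd_neg, pd_const, swap,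
      swap_under]
    ring

end ProjectiveConnection

section ProjectiveWords
variable {A0 A1 A2 A3 : ℝ × ℝ → ℝ} {q : ℝ × ℝ} {x : Fin 6 → ℝ}

theorem AnalyticCoeffsAt.curvature_apply (h : AnalyticCoeffsAt A0 A1 A2 A3 q) (u v : ℝ × ℝ)
    (x : Fin 6 → ℝ) :
    curvature (connForm (Om A0 A1 A2 A3)) q u v x
      = (u.1 * v.2 - u.2 * v.1) • Pi.single 5 (Vrow A0 A1 A2 A3 q ⬝ᵥ x) := by
  rw [curvature_plane, smul_apply]
  congr 1
  ext i
  rw [curvature_connForm_apply h.om]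
  simp only [om_curvature h, ite_mul, zero_mul, Pi.single_apply, Finset.sum_ite_irrel,
    Finset.sum_const_zero, dotProduct]

theorem rowForm_dIter_cons (h : AnalyticCoeffsAt A0 A1 A2 A3 q) (a : Fin 2) (l : List (Fin 2)) :
    rowForm (DIter A0 A1 A2 A3 (a :: l) (Vrow A0 A1 A2 A3)) q
      = dualDeriv (connForm (Om A0 A1 A2 A3)) (coordDir a)
          (rowForm (DIter A0 A1 A2 A3 l (Vrow A0 A1 A2 A3))) q :=
  (dualDeriv_connForm (h.dIter l).differentiableAt a).symm

theorem dualDeriv_iterate_rowForm_vrow (h : AnalyticCoeffsAt A0 A1 A2 A3 q) (v : ℝ × ℝ) (n : ℕ) :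
    (dualDeriv (connForm (Om A0 A1 A2 A3)) v)^[n] (rowForm (Vrow A0 A1 A2 A3)) q
      = wordSum ![v.1, v.2]
          (fun l => rowForm (DIter A0 A1 A2 A3 l (Vrow A0 A1 A2 A3)) q) n := by
  have hdiff : ∀ᶠ z in 𝓝 q, ∀ l, DifferentiableAt ℝ
      (rowForm (DIter A0 A1 A2 A3 l (Vrow A0 A1 A2 A3))) z := by
    filter_upwards [h.eventually] with z hz l
      using (analyticAt_rowForm (hz.dIter l)).differentiableAt
  have hcons := h.eventually.mono fun z hz a l => rowForm_dIter_cons hz a l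
  conv_lhs => rw [eq_sum_smul_coordDir v]
  exact (dualDeriv_iterate_eventuallyEq_wordSum hdiff hcons _ n).eq_of_nhds

theorem dSym_dotProduct (l : List (Fin 2)) (q : ℝ × ℝ) (x : Fin 6 → ℝ) :
    DSym A0 A1 A2 A3 l q ⬝ᵥ x = (l.permutations.length : ℝ)⁻¹ *
      (l.permutations.map fun m => DIter A0 A1 A2 A3 m (Vrow A0 A1 A2 A3) q ⬝ᵥ x).sum := by
  rw [DSym, smul_dotProduct, smul_eq_mul]
  congr 1
  exact (map_list_sum ((dotProductBilin ℝ ℝ).flip x) _).trans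
    (congrArg List.sum (List.map_map ..))

theorem mmax_mulVec_eq_zero (hx : ∀ l, DIter A0 A1 A2 A3 l (Vrow A0 A1 A2 A3) q ⬝ᵥ x = 0) :
    Matrix.mulVec (Mmax A0 A1 A2 A3 q) x = 0 :=
  funext fun jk => (dSym_dotProduct _ q x).trans (by simp [hx])

theorem perm_replicate_append_replicate (l : List (Fin 2)) :
    (List.replicate (l.count 1) (1 : Fin 2) ++ List.replicate (l.length - l.count 1) 0).Perm l := by
  have hlength : l.count 0 + l.count 1 = l.length := by
    simpa using Multiset.sum_count_eq_card (s := Finset.univ) (m := (l : Multiset (Fin 2)))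
  refine List.perm_iff_count.2 fun b => ?_
  fin_cases b
  · simp [List.count_replicate, ← hlength]
  · simp [List.count_replicate]

theorem sum_permutations_eq_zero_of_mmax_mulVec (hx : Matrix.mulVec (Mmax A0 A1 A2 A3 q) x = 0)
    (l : List (Fin 2)) (hl : l.length < 6) :
    (l.permutations.map fun m => DIter A0 A1 A2 A3 m (Vrow A0 A1 A2 A3) q ⬝ᵥ x).sum = 0 := by
  have hrow := congrFun hx ⟨⟨l.length, hl⟩, ⟨l.count 1, Nat.lt_succ_of_le List.count_le_length⟩⟩
  have hsum := (mul_eq_zero.1 ((dSym_dotProduct _ q x).symm.trans hrow)).resolve_left <| by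
    rw [List.length_permutations]
    positivity
  exact ((perm_replicate_append_replicate l).permutations.map _).sum_eq.symm.trans hsum

theorem dualDeriv_iterate_vrow_apply_eq_zero (h : AnalyticCoeffsAt A0 A1 A2 A3 q)
    (hx : Matrix.mulVec (Mmax A0 A1 A2 A3 q) x = 0) (v : ℝ × ℝ) {n : ℕ} (hn : n < 6) :
    (dualDeriv (connForm (Om A0 A1 A2 A3)) v)^[n] (rowForm (Vrow A0 A1 A2 A3)) q x = 0 := by
  rw [dualDeriv_iterate_rowForm_vrow h]
  refine (map_wordSum (ContinuousLinearMap.apply ℝ ℝ x).toLinearMap n).trans ?_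
  refine wordSum_eq_zero_of_sum_permutations_eq_zero (fun l hl => ?_) _
  exact sum_permutations_eq_zero_of_mmax_mulVec hx l (hl ▸ hn)

end ProjectiveWords

section Weights

/-- The discriminant `ac - b²` of the quadratic form `a dx² + 2b dx dy + c dy²`. -/
def discr (a b c : ℝ × ℝ → ℝ) : ℝ × ℝ → ℝ := fun z => a z * c z - b z ^ 2

/-- The weight `|ac - b²|^(2e)` by which metrics and solutions of the Liouville system differ:
`e = -1/3` turns a metric into a solution, `e = -1` a solution into a metric. Writing it as a power
of the square keeps it smooth whatever the sign of the discriminant. -/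
def discrWeight (e : ℝ) (a b c : ℝ × ℝ → ℝ) : ℝ × ℝ → ℝ := fun z => (discr a b c z ^ 2) ^ e

/-- The quadratic form `a dx² + 2b dx dy + c dy²` is smooth and nondegenerate at `q`. -/
structure SmoothNondegenerateAt (a b c : ℝ × ℝ → ℝ) (q : ℝ × ℝ) : Prop where
  left : ContDiffAt ℝ ∞ a q
  middle : ContDiffAt ℝ ∞ b q
  right : ContDiffAt ℝ ∞ c q
  discr_ne_zero : discr a b c q ≠ 0

variable {a b c : ℝ × ℝ → ℝ} {q : ℝ × ℝ}

namespace SmoothNondegenerateAt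

theorem contDiffAt_discr (h : SmoothNondegenerateAt a b c q) : ContDiffAt ℝ ∞ (discr a b c) q :=
  (h.left.mul h.right).sub (h.middle.pow 2)

theorem contDiffAt_discrWeight (h : SmoothNondegenerateAt a b c q) (e : ℝ) :
    ContDiffAt ℝ ∞ (discrWeight e a b c) q :=
  (h.contDiffAt_discr.pow 2).rpow_const_of_ne (pow_ne_zero 2 h.discr_ne_zero)

theorem discrWeight_ne_zero (h : SmoothNondegenerateAt a b c q) (e : ℝ) :
    discrWeight e a b c q ≠ 0 :=
  (Real.rpow_pos_of_pos (sq_pos_of_ne_zero h.discr_ne_zero) e).ne'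

theorem rescale (h : SmoothNondegenerateAt a b c q) (e : ℝ) :
    SmoothNondegenerateAt (fun z => a z * discrWeight e a b c z)
      (fun z => b z * discrWeight e a b c z) (fun z => c z * discrWeight e a b c z) q where
  left := h.left.mul (h.contDiffAt_discrWeight e)
  middle := h.middle.mul (h.contDiffAt_discrWeight e)
  right := h.right.mul (h.contDiffAt_discrWeight e)
  discr_ne_zero := by
    have hdiscr : discr (fun z => a z * discrWeight e a b c z)
        (fun z => b z * discrWeight e a b c z) (fun z => c z * discrWeight e a b c z) q
        = discr a b c q * discrWeight e a b c q ^ 2 := by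
      simp only [discr]
      ring
    rw [hdiscr]
    exact mul_ne_zero h.discr_ne_zero (pow_ne_zero 2 (h.discrWeight_ne_zero e))

theorem pd_discr (h : SmoothNondegenerateAt a b c q) (i : Fin 2) :
    pd i (discr a b c) q = pd i a q * c q + a q * pd i c q - 2 * b q * pd i b q := by
  have ha := h.left.differentiableAt (by simp)
  have hb := h.middle.differentiableAt (by simp)
  have hc := h.right.differentiableAt (by simp)
  unfold discr
  rw [pd_sub (ha.fun_mul hc) (hb.fun_pow 2), pd_mul ha hc, pd_sq hb]

theorem pd_discrWeight_mul_discr (h : SmoothNondegenerateAt a b c q) (e : ℝ) (i : Fin 2) :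
    pd i (discrWeight e a b c) q * discr a b c q
      = 2 * e * discrWeight e a b c q
        * (pd i a q * c q + a q * pd i c q - 2 * b q * pd i b q) := by
  have hne := h.discr_ne_zero
  have hpow : HasDerivAt (fun t : ℝ => (t ^ 2) ^ e)
      (2 * e * discrWeight e a b c q / discr a b c q) (discr a b c q) := by
    convert (hasDerivAt_pow 2 (discr a b c q)).rpow_const (p := e)
      (.inl (pow_ne_zero 2 hne)) using 1
    rw [Real.rpow_sub_one (pow_ne_zero 2 hne), discrWeight]
    field_simp
    ring
  rw [← h.pd_discr]
  unfold discrWeight at hpow ⊢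
  rw [pd_comp hpow (h.contDiffAt_discr.differentiableAt (by simp))]
  field_simp

theorem pd_rescale {f : ℝ × ℝ → ℝ} (h : SmoothNondegenerateAt a b c q) (e : ℝ)
    (hf : ContDiffAt ℝ ∞ f q) (i : Fin 2) :
    pd i (fun z => f z * discrWeight e a b c z) q
      = pd i f q * discrWeight e a b c q + f q * pd i (discrWeight e a b c) q :=
  pd_mul (hf.differentiableAt (by simp))
    ((h.contDiffAt_discrWeight e).differentiableAt (by simp))

end SmoothNondegenerateAt

theorem metric_eqs_of_liouville_eqs {A0 A1 A2 A3 a b c ax ay bx b_y cx cy k kx ky : ℝ}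
    (hax : ax = (2 / 3) * A1 * a - 2 * A0 * b) (hcy : cy = 2 * A3 * b - (2 / 3) * A2 * c)
    (hay : ay + 2 * bx = (4 / 3) * A2 * a - (2 / 3) * A1 * b - 2 * A0 * c)
    (hcx : cx + 2 * b_y = 2 * A3 * a - (4 / 3) * A1 * c + (2 / 3) * A2 * b)
    (hdiscr : a * c - b ^ 2 ≠ 0) (hk : k ≠ 0)
    (hkx : kx * (a * c - b ^ 2) = -2 * k * (ax * c + a * cx - 2 * b * bx))
    (hky : ky * (a * c - b ^ 2) = -2 * k * (ay * c + a * cy - 2 * b * b_y)) :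
    A0 = (a * k * (ay * k + a * ky) - 2 * (a * k) * (bx * k + b * kx) + b * k * (ax * k + a * kx))
        / (2 * (a * k * (c * k) - (b * k) ^ 2)) ∧
    A1 = (3 * (b * k) * (ay * k + a * ky) + c * k * (ax * k + a * kx)
          - 2 * (b * k) * (bx * k + b * kx) - 2 * (a * k) * (cx * k + c * kx))
        / (2 * (a * k * (c * k) - (b * k) ^ 2)) ∧
    A2 = (2 * (b * k) * (b_y * k + b * ky) + 2 * (c * k) * (ay * k + a * ky)
          - 3 * (b * k) * (cx * k + c * kx) - a * k * (cy * k + c * ky))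
        / (2 * (a * k * (c * k) - (b * k) ^ 2)) ∧
    A3 = (2 * (c * k) * (b_y * k + b * ky) - c * k * (cx * k + c * kx) - b * k * (cy * k + c * ky))
        / (2 * (a * k * (c * k) - (b * k) ^ 2)) := by
  have hden : 2 * (a * k * (c * k) - (b * k) ^ 2) ≠ 0 := by
    have hfactor : 2 * (a * k * (c * k) - (b * k) ^ 2) = 2 * k ^ 2 * (a * c - b ^ 2) := by ring
    rw [hfactor]
    positivity
  obtain rfl : ay = (4 / 3) * A2 * a - (2 / 3) * A1 * b - 2 * A0 * c - 2 * bx := by linarith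
  obtain rfl : cx = 2 * A3 * a - (4 / 3) * A1 * c + (2 / 3) * A2 * b - 2 * b_y := by linarith
  subst hax hcy
  refine ⟨?_, ?_, ?_, ?_⟩ <;> rw [eq_div_iff hden] <;> apply mul_left_cancel₀ hdiscr
  · linear_combination (-k * a ^ 2) * hky + (k * a * b) * hkx
  · linear_combination (-3 * k * a * b) * hky + (k * (a * c + 2 * b ^ 2)) * hkx
  · linear_combination (-k * (2 * b ^ 2 + a * c)) * hky + (3 * k * b * c) * hkx
  · linear_combination (-k * b * c) * hky + (k * c ^ 2) * hkx

theorem liouville_eqs_of_metric_eqs {A0 A1 A2 A3 E F G Ex Ey Fx Fy Gx Gy r rx ry : ℝ}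
    (hdiscr : E * G - F ^ 2 ≠ 0)
    (h0 : A0 = (E * Ey - 2 * E * Fx + F * Ex) / (2 * (E * G - F ^ 2)))
    (h1 : A1 = (3 * F * Ey + G * Ex - 2 * F * Fx - 2 * E * Gx) / (2 * (E * G - F ^ 2)))
    (h2 : A2 = (2 * F * Fy + 2 * G * Ey - 3 * F * Gx - E * Gy) / (2 * (E * G - F ^ 2)))
    (h3 : A3 = (2 * G * Fy - G * Gx - F * Gy) / (2 * (E * G - F ^ 2)))
    (hrx : rx * (E * G - F ^ 2) = -(2 / 3) * r * (Ex * G + E * Gx - 2 * F * Fx))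
    (hry : ry * (E * G - F ^ 2) = -(2 / 3) * r * (Ey * G + E * Gy - 2 * F * Fy)) :
    Ex * r + E * rx = (2 / 3) * A1 * (E * r) - 2 * A0 * (F * r) ∧
    Gy * r + G * ry = 2 * A3 * (F * r) - (2 / 3) * A2 * (G * r) ∧
    Ey * r + E * ry + 2 * (Fx * r + F * rx)
      = (4 / 3) * A2 * (E * r) - (2 / 3) * A1 * (F * r) - 2 * A0 * (G * r) ∧
    Gx * r + G * rx + 2 * (Fy * r + F * ry)
      = 2 * A3 * (E * r) - (4 / 3) * A1 * (G * r) + (2 / 3) * A2 * (F * r) := by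
  have hden : 2 * (E * G - F ^ 2) ≠ 0 := mul_ne_zero two_ne_zero hdiscr
  rw [eq_div_iff hden] at h0 h1 h2 h3
  refine ⟨?_, ?_, ?_, ?_⟩ <;> apply mul_left_cancel₀ hdiscr
  · linear_combination E * hrx - (1/3) * E * r * h1 + F * r * h0
  · linear_combination G * hry - F * r * h3 + (1/3) * G * r * h2
  · linear_combination E * hry + 2 * F * hrx - (2 / 3) * E * r * h2 + (1/3) * F * r * h1
      + G * r * h0
  · linear_combination G * hrx + 2 * F * hry - E * r * h3 + (2 / 3) * G * r * h1
      - (1/3) * F * r * h2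

variable {U : Set (ℝ × ℝ)} {A0 A1 A2 A3 : ℝ × ℝ → ℝ} {p : ℝ × ℝ}

theorem metrisableNear_of_liouvilleSystem {V : Set (ℝ × ℝ)} (hV : IsOpen V) (hp : p ∈ V)
    (hVU : V ⊆ U) (hnd : ∀ q ∈ V, SmoothNondegenerateAt a b c q)
    (hL : LiouvilleSystem V A0 A1 A2 A3 a b c) :
    MetrisableNear U A0 A1 A2 A3 p := by
  have hrescale := fun q hq => (hnd q hq).rescale (-1)
  refine ⟨V, hV, hp, hVU, _, _, _, fun q hq => (hrescale q hq).left.contDiffWithinAt,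
    fun q hq => (hrescale q hq).middle.contDiffWithinAt,
    fun q hq => (hrescale q hq).right.contDiffWithinAt,
    fun q hq => (hrescale q hq).discr_ne_zero, fun q hq => ?_⟩
  obtain ⟨hax, hcy, hay, hcx⟩ := hL q hq
  have h := hnd q hq
  have hweight := h.pd_discrWeight_mul_discr (-1)
  unfold discr at hweight
  simp only [pdx_eq_pd, pdy_eq_pd] at hax hcy hay hcx ⊢
  simp only [h.pd_rescale (-1) h.left, h.pd_rescale (-1) h.middle, h.pd_rescale (-1) h.right]
  exact metric_eqs_of_liouville_eqs hax hcy hay hcx h.discr_ne_zero (h.discrWeight_ne_zero (-1))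
    (by linear_combination hweight 0) (by linear_combination hweight 1)

theorem exists_liouvilleSystem_of_metrisableNear (h : MetrisableNear U A0 A1 A2 A3 p) :
    ∃ V, IsOpen V ∧ p ∈ V ∧ V ⊆ U ∧ ∃ a b c : ℝ × ℝ → ℝ,
      (∀ q ∈ V, SmoothNondegenerateAt a b c q) ∧ LiouvilleSystem V A0 A1 A2 A3 a b c := by
  obtain ⟨V, hV, hp, hVU, E, F, G, hE, hF, hG, hdiscr, hmetric⟩ := h
  have hnd (q) (hq : q ∈ V) : SmoothNondegenerateAt E F G q :=
    ⟨hE.contDiffAt (hV.mem_nhds hq), hF.contDiffAt (hV.mem_nhds hq),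
      hG.contDiffAt (hV.mem_nhds hq), hdiscr q hq⟩
  refine ⟨V, hV, hp, hVU, _, _, _, fun q hq => (hnd q hq).rescale (-(1 / 3)), fun q hq => ?_⟩
  obtain ⟨h0, h1, h2, h3⟩ := hmetric q hq
  have h := hnd q hq
  have hweight := h.pd_discrWeight_mul_discr (-(1 / 3))
  unfold discr at hweight
  simp only [pdx_eq_pd, pdy_eq_pd] at h0 h1 h2 h3 ⊢
  simp only [h.pd_rescale _ h.left, h.pd_rescale _ h.middle, h.pd_rescale _ h.right]
  exact liouville_eqs_of_metric_eqs h.discr_ne_zero h0 h1 h2 h3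
    (by linear_combination hweight 0) (by linear_combination hweight 1)

end Weights

section Prolongation

variable {V : Set (ℝ × ℝ)} {A0 A1 A2 A3 : ℝ × ℝ → ℝ} {s : ℝ × ℝ → Fin 6 → ℝ} {q : ℝ × ℝ}

theorem liouvilleSystem_of_parallel (hs : ∀ q ∈ V, DifferentiableAt ℝ s q)
    (hpar : ∀ q ∈ V, ∀ a, covDeriv (connForm (Om A0 A1 A2 A3)) (coordDir a) s q = 0) :
    LiouvilleSystem V A0 A1 A2 A3 (fun z => s z 0) (fun z => s z 1) (fun z => s z 2) := by
  intro q hq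
  have hcomponent (a : Fin 2) (i : Fin 6) :
      pd a (fun z => s z i) q + ∑ j, Om A0 A1 A2 A3 a q i j * s q j = 0 :=
    (covDeriv_connForm_apply (hs q hq) a i).symm.trans (congrFun (hpar q hq a) i)
  have hx₀ := hcomponent 0 0
  have hx₁ := hcomponent 0 1
  have hx₂ := hcomponent 0 2
  have hy₀ := hcomponent 1 0
  have hy₁ := hcomponent 1 1
  have hy₂ := hcomponent 1 2
  simp only [Om, Om1, Om2, Fin.sum_univ_six, Matrix.of_apply, Matrix.cons_val]
    at hx₀ hx₁ hx₂ hy₀ hy₁ hy₂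
  rw [pdx_eq_pd, pdy_eq_pd]
  refine ⟨?_, ?_, ?_, ?_⟩
  · linear_combination hx₀
  · linear_combination hy₂
  · linear_combination hy₀ + 2 * hx₁
  · linear_combination hx₂ + 2 * hy₁

theorem sum_om_mul_covDeriv_eq_single (h : AnalyticCoeffsAt A0 A1 A2 A3 q)
    (hs : ContDiffAt ℝ 2 s q) {i : Fin 6}
    (hi : ∀ a, ∀ᶠ z in 𝓝 q, covDeriv (connForm (Om A0 A1 A2 A3)) (coordDir a) s z i = 0) :
    ∑ k, Om A0 A1 A2 A3 0 q i k * covDeriv (connForm (Om A0 A1 A2 A3)) (coordDir 1) s q k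
      - ∑ k, Om A0 A1 A2 A3 1 q i k * covDeriv (connForm (Om A0 A1 A2 A3)) (coordDir 0) s q k
      = Pi.single (M := fun _ => ℝ) 5 (Vrow A0 A1 A2 A3 q ⬝ᵥ s q) i := by
  have hA := (analyticAt_connForm h.om).differentiableAt
  have hsecond (a b : Fin 2) :
      covDeriv (connForm (Om A0 A1 A2 A3)) (coordDir a)
          (covDeriv (connForm (Om A0 A1 A2 A3)) (coordDir b) s) q i
        = ∑ k, Om A0 A1 A2 A3 a q i k
            * covDeriv (connForm (Om A0 A1 A2 A3)) (coordDir b) s q k := by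
    rw [covDeriv_connForm_apply (differentiableAt_covDeriv hA hs _), pd_congr (hi b), pd_const,
      zero_add]
  rw [← hsecond, ← hsecond, ← Pi.sub_apply, covDeriv_comm hA hs, h.curvature_apply]
  simp [coordDir]

-- For a section `s` with covariant derivatives `X` and `Y`, `hcompat` is the curvature identity;
-- the components `0, 2, 3, 4` in turn each kill a further entry, and `5` then gives `r = 0`.
theorem eq_zero_of_om_compatibility {X Y : ℝ × ℝ → Fin 6 → ℝ} {r : ℝ × ℝ → ℝ}
    (hcompat : ∀ i, (∀ q ∈ V, X q i = 0) → (∀ q ∈ V, Y q i = 0) → ∀ q ∈ V,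
      ∑ k, Om A0 A1 A2 A3 0 q i k * Y q k - ∑ k, Om A0 A1 A2 A3 1 q i k * X q k
        = Pi.single (M := fun _ => ℝ) 5 (r q) i)
    (hX : ∀ q ∈ V, X q 0 = 0 ∧ X q 1 = 0 ∧ X q 2 = 0 ∧ X q 4 = 0)
    (hY : ∀ q ∈ V, Y q 0 = 0 ∧ Y q 1 = 0 ∧ Y q 2 = 0 ∧ Y q 3 = 0) :
    (∀ q ∈ V, X q = 0 ∧ Y q = 0) ∧ ∀ q ∈ V, r q = 0 := by
  have hX₃ : ∀ q ∈ V, X q 3 = 0 := fun q hq => by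
    simpa [Fin.sum_univ_six, Om, Om1, Om2, hX q hq, hY q hq] using
      hcompat 0 (fun z hz => (hX z hz).1) (fun z hz => (hY z hz).1) q hq
  have hY₄ : ∀ q ∈ V, Y q 4 = 0 := fun q hq => by
    simpa [Fin.sum_univ_six, Om, Om1, Om2, hX q hq, hY q hq, hX₃ q hq] using
      hcompat 2 (fun z hz => (hX z hz).2.2.1) (fun z hz => (hY z hz).2.2.1) q hq
  have hX₅ : ∀ q ∈ V, X q 5 = 0 := fun q hq => by
    simpa [Fin.sum_univ_six, Om, Om1, Om2, hX q hq, hY q hq, hX₃ q hq, hY₄ q hq] using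
      hcompat 3 hX₃ (fun z hz => (hY z hz).2.2.2) q hq
  have hY₅ : ∀ q ∈ V, Y q 5 = 0 := fun q hq => by
    simpa [Fin.sum_univ_six, Om, Om1, Om2, hX q hq, hY q hq, hX₃ q hq, hY₄ q hq, hX₅ q hq] using
      hcompat 4 (fun z hz => (hX z hz).2.2.2) hY₄ q hq
  have hzero : ∀ q ∈ V, X q = 0 ∧ Y q = 0 := fun q hq => by
    obtain ⟨hX₀, hX₁, hX₂, hX₄⟩ := hX q hq
    obtain ⟨hY₀, hY₁, hY₂, hY₃⟩ := hY q hq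
    constructor <;> ext i <;> fin_cases i
    exacts [hX₀, hX₁, hX₂, hX₃ q hq, hX₄, hX₅ q hq, hY₀, hY₁, hY₂, hY₃, hY₄ q hq, hY₅ q hq]
  refine ⟨hzero, fun q hq => ?_⟩
  simpa [hzero q hq] using (hcompat 5 hX₅ hY₅ q hq).symm

/-- The prolongation of a solution `(a, b, c)` of the Liouville system: the additional components
are the derivatives of `b` not determined by `(a, b, c)`. -/
def prolong (a b c : ℝ × ℝ → ℝ) : ℝ × ℝ → Fin 6 → ℝ :=
  fun z => ![a z, b z, c z, 2 * pd 0 b z, 2 * pd 1 b z, 2 * pd 0 (pd 1 b) z]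

variable {a b c : ℝ × ℝ → ℝ}

theorem contDiffAt_prolong (ha : ContDiffAt ℝ ∞ a q) (hb : ContDiffAt ℝ ∞ b q)
    (hc : ContDiffAt ℝ ∞ c q) : ContDiffAt ℝ ∞ (prolong a b c) q := by
  refine contDiffAt_pi.2 fun i => ?_
  fin_cases i
  exacts [ha, hb, hc, contDiffAt_const.mul (contDiffAt_pd hb),
    contDiffAt_const.mul (contDiffAt_pd hb),
    contDiffAt_const.mul (contDiffAt_pd (contDiffAt_pd hb))]

theorem covDeriv_coordDir_zero_prolong (hL : LiouvilleSystem V A0 A1 A2 A3 a b c) (hq : q ∈ V)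
    (ha : ContDiffAt ℝ ∞ a q) (hb : ContDiffAt ℝ ∞ b q) (hc : ContDiffAt ℝ ∞ c q) :
    let X := covDeriv (connForm (Om A0 A1 A2 A3)) (coordDir 0) (prolong a b c) q
    X 0 = 0 ∧ X 1 = 0 ∧ X 2 = 0 ∧ X 4 = 0 := by
  obtain ⟨hax, -, -, hcx⟩ := hL q hq
  have hs := (contDiffAt_prolong ha hb hc).differentiableAt (by simp)
  have hb₁ : pd 0 (fun z => 2 * pd 1 b z) q = 2 * pd 0 (pd 1 b) q :=
    pd_const_mul ((contDiffAt_pd hb).differentiableAt (by simp)) 2 0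
  simp only [pdx_eq_pd, pdy_eq_pd] at hax hcx
  simp only [covDeriv_connForm_apply hs, Fin.sum_univ_six, prolong, Om, Om1, Matrix.of_apply,
    Matrix.cons_val, hb₁]
  refine ⟨?_, ?_, ?_, ?_⟩
  · linear_combination hax
  · ring
  · linear_combination hcx
  · ring

theorem covDeriv_coordDir_one_prolong (hL : LiouvilleSystem V A0 A1 A2 A3 a b c) (hq : q ∈ V)
    (ha : ContDiffAt ℝ ∞ a q) (hb : ContDiffAt ℝ ∞ b q) (hc : ContDiffAt ℝ ∞ c q) :
    let Y := covDeriv (connForm (Om A0 A1 A2 A3)) (coordDir 1) (prolong a b c) q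
    Y 0 = 0 ∧ Y 1 = 0 ∧ Y 2 = 0 ∧ Y 3 = 0 := by
  obtain ⟨-, hcy, hay, -⟩ := hL q hq
  have hs := (contDiffAt_prolong ha hb hc).differentiableAt (by simp)
  have hb₀ : pd 1 (fun z => 2 * pd 0 b z) q = 2 * pd 1 (pd 0 b) q :=
    pd_const_mul ((contDiffAt_pd hb).differentiableAt (by simp)) 2 1
  have hmixed : pd 1 (pd 0 b) q = pd 0 (pd 1 b) q := pd_comm (contDiffAt_infty.1 hb 2)
  simp only [pdx_eq_pd, pdy_eq_pd] at hcy hay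
  simp only [covDeriv_connForm_apply hs, Fin.sum_univ_six, prolong, Om, Om2, Matrix.of_apply,
    Matrix.cons_val, hb₀, hmixed]
  refine ⟨?_, ?_, ?_, ?_⟩
  · linear_combination hay
  · ring
  · linear_combination hcy
  · ring

theorem prolong_parallel_and_vrow_dotProduct_eq_zero (hV : IsOpen V)
    (hA : ∀ q ∈ V, AnalyticCoeffsAt A0 A1 A2 A3 q)
    (hnd : ∀ q ∈ V, SmoothNondegenerateAt a b c q)
    (hL : LiouvilleSystem V A0 A1 A2 A3 a b c) :
    (∀ q ∈ V, ∀ i,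
      covDeriv (connForm (Om A0 A1 A2 A3)) (coordDir i) (prolong a b c) q = 0) ∧
      ∀ q ∈ V, Vrow A0 A1 A2 A3 q ⬝ᵥ prolong a b c q = 0 := by
  have hs (q) (hq : q ∈ V) : ContDiffAt ℝ ∞ (prolong a b c) q :=
    contDiffAt_prolong (hnd q hq).left (hnd q hq).middle (hnd q hq).right
  obtain ⟨hpar, hvrow⟩ := eq_zero_of_om_compatibility
    (fun i hx hy q hq => sum_om_mul_covDeriv_eq_single (hA q hq) (contDiffAt_infty.1 (hs q hq) 2)
      (Fin.forall_fin_two.2 ⟨eventually_of_mem (hV.mem_nhds hq) hx,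
        eventually_of_mem (hV.mem_nhds hq) hy⟩))
    (fun q hq => covDeriv_coordDir_zero_prolong hL hq (hnd q hq).left (hnd q hq).middle
      (hnd q hq).right)
    (fun q hq => covDeriv_coordDir_one_prolong hL hq (hnd q hq).left (hnd q hq).middle
      (hnd q hq).right)
  exact ⟨fun q hq => Fin.forall_fin_two.2 (hpar q hq), hvrow⟩

end Prolongation

theorem rank_lt_card_of_mulVec_eq_zero {K m n : Type*} [Field K] [Fintype n]
    {M : Matrix m n K} {w : n → K} (hw : w ≠ 0) (h : M.mulVec w = 0) :
    M.rank < Fintype.card n := by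
  have hker : 0 < Module.finrank K M.mulVecLin.ker :=
    Module.finrank_pos_iff_exists_ne_zero.2 ⟨⟨w, h⟩, fun hzero => hw (congrArg Subtype.val hzero)⟩
  have hdim := M.mulVecLin.finrank_range_add_finrank_ker
  rw [Module.finrank_fintype_fun_eq_card] at hdim
  exact hdim ▸ Nat.lt_add_of_pos_right hker

theorem covDeriv_eq_zero_of_coordDir {F : Type*} [NormedAddCommGroup F] [NormedSpace ℝ F]
    {A : ℝ × ℝ → ℝ × ℝ →L[ℝ] F →L[ℝ] F} {s : ℝ × ℝ → F} {q : ℝ × ℝ}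
    (h : ∀ a, covDeriv A (coordDir a) s q = 0) (v : ℝ × ℝ) : covDeriv A v s q = 0 := by
  have hlinear : covDeriv A v s q = ∑ a, ![v.1, v.2] a • covDeriv A (coordDir a) s q := by
    conv_lhs => rw [eq_sum_smul_coordDir v]
    simp only [covDeriv, map_sum, map_smul, sum_apply, smul_apply, smul_add,
      Finset.sum_add_distrib]
  simp [hlinear, h]

section KernelFields

variable {U V : Set (ℝ × ℝ)} {A0 A1 A2 A3 : ℝ × ℝ → ℝ} {s W : ℝ × ℝ → Fin 6 → ℝ} {p : ℝ × ℝ}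

theorem dIter_dotProduct_eq_zero_of_parallel (hV : IsOpen V)
    (hA : ∀ q ∈ V, AnalyticCoeffsAt A0 A1 A2 A3 q) (hs : ∀ q ∈ V, DifferentiableAt ℝ s q)
    (hpar : ∀ q ∈ V, ∀ a, covDeriv (connForm (Om A0 A1 A2 A3)) (coordDir a) s q = 0)
    (hvrow : ∀ q ∈ V, Vrow A0 A1 A2 A3 q ⬝ᵥ s q = 0) (l : List (Fin 2)) :
    ∀ q ∈ V, DIter A0 A1 A2 A3 l (Vrow A0 A1 A2 A3) q ⬝ᵥ s q = 0 := by
  induction l with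
  | nil => exact hvrow
  | cons a l ih =>
    intro q hq
    have hzero : (fun z => rowForm (DIter A0 A1 A2 A3 l (Vrow A0 A1 A2 A3)) z (s z))
        =ᶠ[𝓝 q] fun _ => 0 := eventually_of_mem (hV.mem_nhds hq) ih
    have hleibniz := fderiv_pairing (A := connForm (Om A0 A1 A2 A3))
      (analyticAt_rowForm ((hA q hq).dIter l)).differentiableAt (hs q hq) (coordDir a)
    rw [hzero.fderiv_eq, hpar q hq, map_zero, add_zero, ← rowForm_dIter_cons (hA q hq)] at hleibniz
    simpa [rowForm_apply] using hleibniz.symm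

theorem exists_kernelField_of_metrisableNear (hA : AnalyticCoeffsAt A0 A1 A2 A3 p)
    (h : MetrisableNear U A0 A1 A2 A3 p) :
    ∃ V, IsOpen V ∧ p ∈ V ∧ V ⊆ U ∧ ∃ W : ℝ × ℝ → Fin 6 → ℝ,
      AnalyticOnNhd ℝ W V ∧ (∀ q ∈ V, (Mmax A0 A1 A2 A3 q).mulVec (W q) = 0) ∧
      ∀ q ∈ V, W q 0 * W q 2 - W q 1 ^ 2 ≠ 0 := by
  obtain ⟨V₀, hV₀, hp₀, hV₀U, a, b, c, hnd₀, hL₀⟩ := exists_liouvilleSystem_of_metrisableNear h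
  obtain ⟨V, hV, hVopen, hp⟩ := eventually_nhds_iff.1 (hA.eventually.and (hV₀.mem_nhds hp₀))
  have hL : LiouvilleSystem V A0 A1 A2 A3 a b c := fun q hq => hL₀ q (hV q hq).2
  have hnd (q) (hq : q ∈ V) : SmoothNondegenerateAt a b c q := hnd₀ q (hV q hq).2
  obtain ⟨hpar, hvrow⟩ :=
    prolong_parallel_and_vrow_dotProduct_eq_zero hVopen (fun q hq => (hV q hq).1) hnd hL
  have hdiff (q) (hq : q ∈ V) : DifferentiableAt ℝ (prolong a b c) q :=
    (contDiffAt_prolong (hnd q hq).left (hnd q hq).middle (hnd q hq).right).differentiableAt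
      (by simp)
  refine ⟨V, hVopen, hp, fun q hq => hV₀U (hV q hq).2, prolong a b c, fun q hq => ?_,
    fun q hq => mmax_mulVec_eq_zero fun l => dIter_dotProduct_eq_zero_of_parallel hVopen
      (fun z hz => (hV z hz).1) hdiff hpar hvrow l q hq, fun q hq => (hnd q hq).discr_ne_zero⟩
  have hVq := hVopen.mem_nhds hq
  exact analyticAt_of_covDeriv_eq_zero (analyticAt_connForm (hV q hq).1.om)
    (eventually_of_mem hVq hdiff)
    (eventually_of_mem hVq fun z hz => covDeriv_eq_zero_of_coordDir (hpar z hz))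

theorem exists_parallel_section_of_kernelField (hA : AnalyticCoeffsAt A0 A1 A2 A3 p)
    (hW : AnalyticAt ℝ W p) (hWp : W p ≠ 0)
    (hker : ∀ᶠ q in 𝓝 p, (Mmax A0 A1 A2 A3 q).mulVec (W q) = 0) :
    ∃ s : ℝ × ℝ → Fin 6 → ℝ, AnalyticAt ℝ s p ∧ s p = W p ∧
      ∀ v, ∀ᶠ q in 𝓝 p, covDeriv (connForm (Om A0 A1 A2 A3)) v s q = 0 := by
  refine exists_parallel_section (analyticAt_connForm hA.om) (analyticAt_rowForm hA.vrow) ?_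
    fun v n => dualDeriv_iterate_apply_eq_zero (analyticAt_connForm hA.om)
      (analyticAt_rowForm hA.vrow) hW hWp v (fun n hn => ?_) n
  · filter_upwards [hA.eventually] with q hq x hx u v
    rw [hq.curvature_apply, ← rowForm_apply, hx, Pi.single_zero, smul_zero]
  · filter_upwards [hA.eventually, hker] with q hq hx
      using dualDeriv_iterate_vrow_apply_eq_zero hq hx v hn

theorem metrisableNear_of_kernelField (hA : AnalyticCoeffsAt A0 A1 A2 A3 p) (hU : U ∈ 𝓝 p)
    (hW : AnalyticAt ℝ W p) (hker : ∀ᶠ q in 𝓝 p, (Mmax A0 A1 A2 A3 q).mulVec (W q) = 0)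
    (hWp : W p 0 * W p 2 - W p 1 ^ 2 ≠ 0) : MetrisableNear U A0 A1 A2 A3 p := by
  obtain ⟨s, hs, hsp, hpar⟩ := exists_parallel_section_of_kernelField hA hW
    (fun h => hWp (by simp [h])) hker
  have hdiscr : ∀ᶠ q in 𝓝 p, s q 0 * s q 2 - s q 1 ^ 2 ≠ 0 := by
    have hcont (i : Fin 6) : ContinuousAt (fun z => s z i) p :=
      continuousAt_pi.1 hs.continuousAt i
    refine (((hcont 0).fun_mul (hcont 2)).fun_sub ((hcont 1).fun_pow 2)).eventually_ne ?_
    simpa only [hsp] using hWp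
  obtain ⟨V, hV, hVopen, hp⟩ := eventually_nhds_iff.1
    (((eventually_all.2 fun a => hpar (coordDir a)).and hs.eventually_analyticAt).and
      (hdiscr.and hU))
  refine metrisableNear_of_liouvilleSystem hVopen hp (fun q hq => (hV q hq).2.2) (fun q hq => ?_)
    (liouvilleSystem_of_parallel (fun q hq => (hV q hq).1.2.differentiableAt)
      fun q hq => (hV q hq).1.1)
  have hsmooth := contDiffAt_pi.1 ((hV q hq).1.2.contDiffAt (n := ∞))
  exact ⟨hsmooth 0, hsmooth 1, hsmooth 2, (hV q hq).2.1⟩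

end KernelFields

end

end ProjectiveMetrisability

open ProjectiveMetrisability Filter in
theorem metrisable_iff_Mmax_general {U : Set (ℝ × ℝ)} {A0 A1 A2 A3 : ℝ × ℝ → ℝ} {p : ℝ × ℝ}
    (hA : AnalyticCoeffsAt A0 A1 A2 A3 p) :
    MetrisableNear U A0 A1 A2 A3 p ↔
      ∃ V : Set (ℝ × ℝ), IsOpen V ∧ p ∈ V ∧ V ⊆ U ∧
        (∀ q ∈ V, (Mmax A0 A1 A2 A3 q).rank < 6) ∧
        ∃ W : ℝ × ℝ → Fin 6 → ℝ,
          (∀ i : Fin 6, AnalyticOnNhd ℝ (fun q => W q i) V) ∧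
          (∀ q ∈ V, (Mmax A0 A1 A2 A3 q).mulVec (W q) = 0) ∧
          W p 0 * W p 2 - (W p 1) ^ 2 ≠ 0 := by
  constructor
  · intro h
    obtain ⟨V, hV, hp, hVU, W, hW, hker, hdiscr⟩ := exists_kernelField_of_metrisableNear hA h
    have hne (q) (hq : q ∈ V) : W q ≠ 0 := fun hzero => hdiscr q hq (by simp [hzero])
    exact ⟨V, hV, hp, hVU, fun q hq => rank_lt_card_of_mulVec_eq_zero (hne q hq) (hker q hq), W,
      fun i q hq => analyticAt_pi_iff.1 (hW q hq) i, hker, hdiscr p hp⟩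
  · rintro ⟨V, hV, hp, hVU, -, W, hW, hker, hdiscr⟩
    have hVp := hV.mem_nhds hp
    exact metrisableNear_of_kernelField hA (mem_of_superset hVp hVU)
      (AnalyticAt.pi fun i => hW i p hp) (eventually_of_mem hVp hker) hdiscr

/-- **Complete local characterisation of metrisability.** A real-analytic projective
structure is metrisable near `p` iff `M_max` has rank `< 6` near `p` and there is a
real-analytic kernel field `W` of `M_max` with `W₁W₃ − W₂² ≠ 0` at `p`. -/
theorem metrisable_iff_Mmax (U : Set (ℝ × ℝ)) (hU : IsOpen U) (hUconn : IsConnected U)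
    (A0 A1 A2 A3 : ℝ × ℝ → ℝ)
    (hA0 : AnalyticOnNhd ℝ A0 U) (hA1 : AnalyticOnNhd ℝ A1 U)
    (hA2 : AnalyticOnNhd ℝ A2 U) (hA3 : AnalyticOnNhd ℝ A3 U)
    (p : ℝ × ℝ) (hp : p ∈ U) :
    MetrisableNear U A0 A1 A2 A3 p ↔
      ∃ V : Set (ℝ × ℝ), IsOpen V ∧ p ∈ V ∧ V ⊆ U ∧
        (∀ q ∈ V, (Mmax A0 A1 A2 A3 q).rank < 6) ∧
        ∃ W : ℝ × ℝ → Fin 6 → ℝ,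
          (∀ i : Fin 6, AnalyticOnNhd ℝ (fun q => W q i) V) ∧
          (∀ q ∈ V, (Mmax A0 A1 A2 A3 q).mulVec (W q) = 0) ∧
          W p 0 * W p 2 - (W p 1) ^ 2 ≠ 0 :=
  metrisable_iff_Mmax_general ⟨hA0 p hp, hA1 p hp, hA2 p hp, hA3 p hp⟩
end

section
/- (Koenigs) Let A₀, A₁, A₂, A₃ be real analytic on a connected and simply connected open U ⊆ ℝ². Then the real vector space of real-analytic solutions (ψ₁,ψ₂,ψ₃) of the Liouville linear system on U is finite dimensional of dimension at most 6, and its dimension is never equal to 5; that is, the dimension is one of 0, 1, 2, 3, 4, 6. -/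
/-- A real-analytic solution of the Liouville linear system on `U`. -/
def AnalyticLiouvilleSol (U : Set (ℝ × ℝ)) (A0 A1 A2 A3 : ℝ × ℝ → ℝ)
    (Ψ : (ℝ × ℝ → ℝ) × (ℝ × ℝ → ℝ) × (ℝ × ℝ → ℝ)) : Prop :=
  AnalyticOnNhd ℝ Ψ.1 U ∧ AnalyticOnNhd ℝ Ψ.2.1 U ∧ AnalyticOnNhd ℝ Ψ.2.2 U ∧
    LiouvilleSystem U A0 A1 A2 A3 Ψ.1 Ψ.2.1 Ψ.2.2

open scoped Matrix

/-! ### Symmetric matrices -/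

/-- The symmetric matrices with entries in `R`, as a submodule. -/
def symmetricMatrices (ι R : Type*) [CommRing R] : Submodule R (Matrix ι ι R) where
  carrier := {M | M.IsSymm}
  zero_mem' := Matrix.isSymm_zero
  add_mem' hM hN := hM.add hN
  smul_mem' c _ hM := hM.smul c

/-- A symmetric matrix as a function of the unordered pair of its indices. -/
def symmetricMatricesEquivSym2 (ι R : Type*) [CommRing R] :
    symmetricMatrices ι R ≃ₗ[R] (Sym2 ι → R) where
  toFun M := Sym2.lift ⟨fun i j => M.1 i j, fun i j => M.2.apply j i⟩
  map_add' _ _ := funext <| Sym2.ind fun _ _ => rfl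
  map_smul' _ _ := funext <| Sym2.ind fun _ _ => rfl
  invFun f := ⟨Matrix.of fun i j => f s(i, j), Matrix.IsSymm.ext fun _ _ => congrArg f Sym2.eq_swap⟩
  left_inv _ := rfl
  right_inv _ := funext <| Sym2.ind fun _ _ => rfl

theorem finrank_symmetricMatrices (ι R : Type*) [Fintype ι] [CommRing R]
    [Nontrivial R] :
    Module.finrank R (symmetricMatrices ι R) = (Fintype.card ι + 1).choose 2 := by
  classical
  rw [(symmetricMatricesEquivSym2 ι R).finrank_eq, Module.finrank_fintype_fun_eq_card, Sym2.card]

theorem exists_dual_forall_mem_iff_of_finrank_add_one {K V : Type*} [Field K] [AddCommGroup V]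
    [Module K V] {W T : Submodule K V} [FiniteDimensional K T] (hWT : W ≤ T)
    (h : Module.finrank K W + 1 = Module.finrank K T) :
    ∃ f : V →ₗ[K] K, ∀ v ∈ T, v ∈ W ↔ f v = 0 := by
  have hW : Module.finrank K (W.submoduleOf T) + 1 = Module.finrank K T := by
    rwa [(Submodule.submoduleOfEquivOfLe hWT).finrank_eq]
  obtain ⟨g, hg, hWg⟩ := (W.submoduleOf T).exists_le_ker_of_lt_top
    (lt_top_iff_ne_top.2 fun htop => by rw [htop, finrank_top] at hW; lia)
  have hker := Submodule.eq_of_le_of_finrank_eq hWg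
    (by have := Module.Dual.finrank_ker_add_one_of_ne_zero hg; lia)
  obtain ⟨f, rfl⟩ := g.exists_extend
  exact ⟨f, fun v hv => SetLike.ext_iff.1 hker ⟨v, hv⟩⟩

/-- The symmetric product `u vᵀ + v uᵀ` of two vectors. -/
def symProd {ι R : Type*} [CommRing R] : (ι → R) →ₗ[R] (ι → R) →ₗ[R] Matrix ι ι R :=
  LinearMap.mk₂ R (fun u v => Matrix.vecMulVec u v + Matrix.vecMulVec v u)
    (fun _ _ _ => by rw [Matrix.add_vecMulVec, Matrix.vecMulVec_add]; abel)
    (fun _ _ _ => by rw [Matrix.smul_vecMulVec, Matrix.vecMulVec_smul, smul_add])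
    (fun _ _ _ => by rw [Matrix.add_vecMulVec, Matrix.vecMulVec_add]; abel)
    (fun _ _ _ => by rw [Matrix.smul_vecMulVec, Matrix.vecMulVec_smul, smul_add])

section SymProd

variable {ι R : Type*} [CommRing R]

theorem symProd_apply (u v : ι → R) :
    symProd u v = Matrix.vecMulVec u v + Matrix.vecMulVec v u :=
  rfl

theorem symProd_comm (u v : ι → R) : symProd u v = symProd v u := by
  rw [symProd_apply, symProd_apply, add_comm]

theorem isSymm_symProd (u v : ι → R) : (symProd u v).IsSymm := by
  rw [Matrix.IsSymm, symProd_apply, Matrix.transpose_add, Matrix.transpose_vecMulVec,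
    Matrix.transpose_vecMulVec, add_comm]

theorem two_smul_eq_sum_symProd [Fintype ι] [DecidableEq ι] {M : Matrix ι ι R}
    (hM : M.IsSymm) :
    (2 : R) • M = ∑ i, ∑ j, M i j • symProd (Pi.single i 1) (Pi.single j 1) := by
  ext k l
  simp [symProd_apply, Matrix.sum_apply, Matrix.vecMulVec_apply, Pi.single_apply,
    Finset.sum_add_distrib, two_mul, hM.apply]

/-- `adj (u vᵀ + v uᵀ) = -(u × v) (u × v)ᵀ`, and `u wᵀ + w uᵀ` maps `u × v` to `det (u, v, w) u`. -/
theorem symProd_mul_adjugate_symProd_mul_symProd (u v w : Fin 3 → R) :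
    symProd u w * (symProd u v).adjugate * symProd u w =
      -((Matrix.det ![u, v, w]) ^ 2 • Matrix.vecMulVec u u) := by
  have hadj : (symProd u v).adjugate =
      -Matrix.vecMulVec (crossProduct u v) (crossProduct u v) := by
    rw [Matrix.adjugate_fin_three, symProd_apply]
    ext i j
    fin_cases i <;> fin_cases j <;> simp [Matrix.vecMulVec_apply, cross_apply] <;> ring
  have hmul : symProd u w *ᵥ (crossProduct u v) = Matrix.det ![u, v, w] • u := by
    rw [← triple_product_eq_det, triple_product_permutation, triple_product_permutation,
      symProd_apply, Matrix.add_mulVec, Matrix.vecMulVec_mulVec, Matrix.vecMulVec_mulVec,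
      dot_self_cross]
    simp
  rw [hadj, Matrix.mul_neg, Matrix.neg_mul, Matrix.mul_vecMulVec, Matrix.vecMulVec_mul,
    ← Matrix.mulVec_transpose, (isSymm_symProd u w).eq, hmul, Matrix.smul_vecMulVec,
    Matrix.vecMulVec_smul, smul_smul, sq]

end SymProd

/-- A basis orthogonal for the bilinear form `(u, v) ↦ f (u vᵀ + v uᵀ)` gives enough elements of the
kernel of `f` to which the closure property can be applied. -/
theorem eq_zero_of_ker_closed_mul_adjugate_mul {K : Type*} [Field K] [Invertible (2 : K)]
    {f : Matrix (Fin 3) (Fin 3) K →ₗ[K] K}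
    (hf : ∀ Q S : Matrix (Fin 3) (Fin 3) K, Q.IsSymm → S.IsSymm → f Q = 0 → f S = 0 →
      f (S * Q.adjugate * S) = 0)
    {M : Matrix (Fin 3) (Fin 3) K} (hM : M.IsSymm) : f M = 0 := by
  let B : LinearMap.BilinForm K (Fin 3 → K) := symProd.compr₂ f
  obtain ⟨v', hv'⟩ := LinearMap.BilinForm.exists_orthogonal_basis (B := B)
    ⟨fun u v => congrArg f (symProd_comm u v)⟩
  obtain ⟨v, hv⟩ : ∃ v : Module.Basis (Fin 3) K (Fin 3 → K), ∀ i j, i ≠ j → B (v i) (v j) = 0 :=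
    ⟨v'.reindex (finCongr (Module.finrank_fin_fun K)), fun i j hij => by
      simpa using hv' (by simpa using hij)⟩
  have hdiag (i : Fin 3) : B (v i) (v i) = 0 := by
    obtain ⟨j, k, hij, hik, hjk⟩ : ∃ j k : Fin 3, i ≠ j ∧ i ≠ k ∧ j ≠ k := by decide +revert
    have hdet : Matrix.det ![v i, v j, v k] ≠ 0 := by
      have hind : LinearIndependent K (![v i, v j, v k] : Fin 3 → Fin 3 → K) := by
        convert v.linearIndependent.comp ![i, j, k] (by decide +revert) using 1
        ext a; fin_cases a <;> rfl
      exact (Matrix.isUnit_iff_isUnit_det _).1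
        (Matrix.linearIndependent_rows_iff_isUnit.1 hind) |>.ne_zero
    have hvv : f (Matrix.vecMulVec (v i) (v i)) = 0 := by
      have h := hf _ _ (isSymm_symProd (v i) (v j)) (isSymm_symProd (v i) (v k)) (hv i j hij)
        (hv i k hik)
      rw [symProd_mul_adjugate_symProd_mul_symProd, map_neg, map_smul, neg_eq_zero,
        smul_eq_mul] at h
      exact (mul_eq_zero.1 h).resolve_left (pow_ne_zero 2 hdet)
    simp [B, symProd_apply, hvv]
  have hB : B = 0 := v.ext fun i => v.ext fun j => by
    rcases eq_or_ne i j with rfl | hij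
    exacts [hdiag i, hv i j hij]
  have h2 : (2 : K) • f M = 0 := by
    rw [← map_smul, two_smul_eq_sum_symProd hM, map_sum]
    refine Finset.sum_eq_zero fun i _ => ?_
    rw [map_sum]
    refine Finset.sum_eq_zero fun j _ => ?_
    rw [map_smul, show f (symProd _ _) = 0 from LinearMap.congr_fun₂ hB _ _, smul_zero]
  exact (smul_eq_zero.1 h2).resolve_left (Invertible.ne_zero 2)

/-! ### Unique continuation -/

section UniqueContinuation

open Topology Asymptotics

variable {E F : Type*} [NormedAddCommGroup E] [NormedSpace ℝ E] [NormedAddCommGroup F]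
  [NormedSpace ℝ F] {Φ : E → F} {p : E}

theorem eventuallyEq_zero_of_fderiv_isBigO (hd : ∀ᶠ q in 𝓝 p, DifferentiableAt ℝ Φ q)
    (hO : fderiv ℝ Φ =O[𝓝 p] Φ) (h0 : Φ p = 0) : Φ =ᶠ[𝓝 p] 0 := by
  obtain ⟨C, hC⟩ := hO.bound
  obtain ⟨ε, hε, hball⟩ := Metric.mem_nhds_iff.1 (hd.and hC)
  refine Filter.eventuallyEq_of_mem (Metric.ball_mem_nhds p hε) fun q hq => ?_
  have hseg (t : ℝ) (ht : t ∈ Set.Icc (0 : ℝ) 1) : AffineMap.lineMap p q t ∈ Metric.ball p ε :=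
    (convex_ball p ε).lineMap_mem (Metric.mem_ball_self hε) hq ht
  have hderiv (t : ℝ) (ht : t ∈ Set.Icc (0 : ℝ) 1) :
      HasDerivAt (fun t => Φ (AffineMap.lineMap p q t))
        (fderiv ℝ Φ (AffineMap.lineMap p q t) (q - p)) t :=
    (hball (hseg t ht)).1.hasFDerivAt.comp_hasDerivAt t AffineMap.hasDerivAt_lineMap
  have hzero := eq_zero_of_abs_deriv_le_mul_abs_self_of_eq_zero_right (K := C * ‖q - p‖)
    (fun t ht => (hderiv t ht).continuousAt.continuousWithinAt)
    (fun t ht => (hderiv t (Set.Ico_subset_Icc_self ht)).hasDerivWithinAt)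
    (by rw [AffineMap.lineMap_apply_zero, h0])
    (fun t ht => calc
      _ ≤ ‖fderiv ℝ Φ (AffineMap.lineMap p q t)‖ * ‖q - p‖ := ContinuousLinearMap.le_opNorm _ _
      _ ≤ C * ‖Φ (AffineMap.lineMap p q t)‖ * ‖q - p‖ := by
        gcongr; exact (hball (hseg t (Set.Ico_subset_Icc_self ht))).2
      _ = C * ‖q - p‖ * ‖Φ (AffineMap.lineMap p q t)‖ := by ring)
    1 (Set.right_mem_Icc.2 zero_le_one)
  rwa [AffineMap.lineMap_apply_one] at hzero

theorem eqOn_zero_of_fderiv_isBigO {U : Set E} (hU : IsOpen U) (hUconn : IsPreconnected U)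
    (hd : DifferentiableOn ℝ Φ U) (hO : ∀ q ∈ U, fderiv ℝ Φ =O[𝓝 q] Φ) (hp : p ∈ U)
    (h0 : Φ p = 0) : Set.EqOn Φ 0 U := by
  have hlocal {q : E} (hq : q ∈ U) : Φ q = 0 → Φ =ᶠ[𝓝 q] 0 :=
    eventuallyEq_zero_of_fderiv_isBigO (hd.eventually_differentiableAt (hU.mem_nhds hq)) (hO q hq)
  have hsub : U ⊆ {q | Φ =ᶠ[𝓝 q] 0} := by
    refine hUconn.subset_of_closure_inter_subset isOpen_setOfPred_eventually_nhds
      ⟨p, hp, hlocal hp h0⟩ fun q ⟨hq, hqU⟩ => hlocal hqU ?_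
    exact isClosed_singleton.mem_of_frequently_of_tendsto
      ((mem_closure_iff_frequently.1 hq).mono fun _ => Filter.EventuallyEq.eq_of_nhds)
      (hd.continuousOn.continuousAt (hU.mem_nhds hqU))
  exact fun q hq => (hsub hq).self_of_nhds

theorem isBigO_of_isBigO_basis {α κ G : Type*} [Finite κ] [SeminormedAddCommGroup G] {l : Filter α}
    (b : Module.Basis κ ℝ E) {T : α → E →L[ℝ] F} {g : α → G}
    (h : ∀ k, (fun a => T a (b k)) =O[l] g) : T =O[l] g := by
  cases nonempty_fintype κ
  obtain ⟨C, -, hC⟩ := b.exists_opNorm_le (F := F)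
  have hT : T =O[l] fun a k => T a (b k) := IsBigO.of_bound C <| Filter.Eventually.of_forall
    fun a => hC (norm_nonneg _) fun k => norm_le_pi_norm (fun k => T a (b k)) k
  exact hT.trans (isBigO_pi.2 h)

end UniqueContinuation

/-! ### Smooth functions on an open set -/

section SmoothFunctions

open TopologicalSpace Topology Asymptotics
open scoped ContDiff

/-- The extension by zero of a function on an open set. -/
noncomputable def zeroExtend {E : Type*} [TopologicalSpace E] {X : Opens E} (f : X → ℝ) : E → ℝ :=
  Function.extend Subtype.val f 0

section Topological

variable {E : Type*} [TopologicalSpace E] {X : Opens E}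

theorem zeroExtend_apply (f : X → ℝ) (q : X) : zeroExtend f q = f q :=
  Subtype.val_injective.extend_apply _ _ _

theorem zeroExtend_eventuallyEq {f : X → ℝ} {g : E → ℝ} (h : ∀ q : X, f q = g q) (q : X) :
    zeroExtend f =ᶠ[𝓝 q.1] g := by
  filter_upwards [X.isOpen.mem_nhds q.2] with p hp
  exact (zeroExtend_apply f ⟨p, hp⟩).trans (h ⟨p, hp⟩)

end Topological

variable {E : Type*} [NormedAddCommGroup E] [NormedSpace ℝ E] {X : Opens E}

theorem contDiffOn_zeroExtend {n : WithTop ℕ∞} {f : X → ℝ} {g : E → ℝ}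
    (hg : ContDiffOn ℝ n g X) (h : ∀ q : X, f q = g q) : ContDiffOn ℝ n (zeroExtend f) X :=
  hg.congr fun p hp => (zeroExtend_eventuallyEq h ⟨p, hp⟩).eq_of_nhds

theorem fderiv_zeroExtend {f : X → ℝ} {g : E → ℝ} (h : ∀ q : X, f q = g q) (q : X) :
    fderiv ℝ (zeroExtend f) q = fderiv ℝ g q :=
  (zeroExtend_eventuallyEq h q).fderiv_eq

/-- The algebra of functions of class `C^n` on the open set `X`. Its elements are functions on the
subtype, so that functions agreeing on `X` are equal; differentiability refers to the extension by
zero. -/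
def smoothFunctions (n : WithTop ℕ∞) (X : Opens E) : Subalgebra ℝ (X → ℝ) where
  carrier := {f | ContDiffOn ℝ n (zeroExtend f) X}
  mul_mem' hf hg := contDiffOn_zeroExtend (hf.mul hg) fun q => by simp [zeroExtend_apply]
  add_mem' hf hg := contDiffOn_zeroExtend (hf.add hg) fun q => by simp [zeroExtend_apply]
  algebraMap_mem' c := contDiffOn_zeroExtend (g := fun _ => c) contDiffOn_const fun _ => rfl

namespace smoothFunctions

variable {n : WithTop ℕ∞}

/-- The restriction to `X` of a function of class `C^n` on `X`. -/
def restrict {g : E → ℝ} (hg : ContDiffOn ℝ n g X) : smoothFunctions n X :=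
  ⟨fun q => g q, contDiffOn_zeroExtend hg fun _ => rfl⟩

/-- The value at a point, as a homomorphism of algebras. -/
def evalAt (q : X) : smoothFunctions n X →ₐ[ℝ] ℝ :=
  (Pi.evalAlgHom ℝ (fun _ : X => ℝ) q).comp (smoothFunctions n X).val

theorem evalAt_apply (q : X) (f : smoothFunctions n X) : evalAt q f = f.1 q := rfl

theorem evalAt_restrict (q : X) {g : E → ℝ} (hg : ContDiffOn ℝ n g X) :
    evalAt q (restrict hg) = g q := rfl

theorem restrict_zeroExtend (f : smoothFunctions n X) :
    restrict (g := zeroExtend f.1) f.2 = f :=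
  Subtype.ext (funext fun q => zeroExtend_apply f.1 q)

theorem ext_evalAt {f g : smoothFunctions n X} (h : ∀ q, evalAt q f = evalAt q g) : f = g :=
  Subtype.ext (funext h)

theorem forall_evalAt_eq_iff {f g : smoothFunctions n X} :
    (∀ q, evalAt q f = evalAt q g) ↔ f = g :=
  ⟨ext_evalAt, fun h _ => h ▸ rfl⟩

theorem isLeftRegular_two : IsLeftRegular (2 : smoothFunctions n X) := by
  have h : IsUnit (algebraMap ℝ (smoothFunctions n X) 2) := (IsUnit.mk0 2 two_ne_zero).map _
  rw [map_ofNat] at h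
  exact h.isRegular.left

theorem sum_smul_eq_restrict_iff {ι : Type*} [Fintype ι] (c : ι → ℝ) (f : ι → smoothFunctions n X)
    {g : E → ℝ} (hg : ContDiffOn ℝ n g X) :
    ∑ i, c i • f i = restrict hg ↔ ∀ p ∈ X, g p = ∑ i, c i * zeroExtend (f i).1 p := by
  simp only [← forall_evalAt_eq_iff, Subtype.forall, map_sum, map_smul, smul_eq_mul,
    evalAt_restrict]
  refine forall₂_congr fun p hp => ?_
  rw [eq_comm]
  simp only [evalAt_apply, ← zeroExtend_apply (f _).1 ⟨p, hp⟩]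

variable [hn : Fact (∞ ≤ n)]

theorem natCast_le (k : ℕ) : (k : WithTop ℕ∞) ≤ n :=
  (WithTop.coe_le_coe.2 le_top).trans hn.out

theorem add_one_le : n + 1 ≤ n := by
  obtain h | h := hn.out.lt_or_eq
  · rw [WithTop.eq_top_iff_forall_gt.2 fun k => (WithTop.coe_le_coe.2 le_top).trans_lt h]
    rfl
  · rw [← h]
    rfl

theorem differentiableAt_of_contDiffOn {F : Type*} [NormedAddCommGroup F] [NormedSpace ℝ F]
    {g : E → F} (hg : ContDiffOn ℝ n g X) (q : X) : DifferentiableAt ℝ g q :=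
  (hg.contDiffAt (X.isOpen.mem_nhds q.2)).differentiableAt
    (zero_lt_one.trans_le (natCast_le 1)).ne'

theorem differentiableAt_zeroExtend (f : smoothFunctions n X) (q : X) :
    DifferentiableAt ℝ (zeroExtend f.1) q :=
  differentiableAt_of_contDiffOn f.2 q

theorem contDiffOn_fderiv_zeroExtend (f : smoothFunctions n X) :
    ContDiffOn ℝ n (fderiv ℝ (zeroExtend f.1)) X :=
  ContDiffOn.fderiv_of_isOpen f.2 X.isOpen add_one_le

/-- The directional derivative in the direction `v`. -/
noncomputable def dirDeriv (v : E) : Derivation ℝ (smoothFunctions n X) (smoothFunctions n X) :=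
  Derivation.mk'
    { toFun f := restrict ((contDiffOn_fderiv_zeroExtend f).clm_apply (contDiffOn_const (c := v)))
      map_add' f g := by
        ext q
        have h : fderiv ℝ (zeroExtend (f.1 + g.1)) q =
            fderiv ℝ (zeroExtend f.1 + zeroExtend g.1) q :=
          fderiv_zeroExtend (fun q => by simp [zeroExtend_apply]) q
        simp [restrict, h, fderiv_add (differentiableAt_zeroExtend f q)
          (differentiableAt_zeroExtend g q)]
      map_smul' c f := by
        ext q
        have h : fderiv ℝ (zeroExtend (c • f.1)) q = fderiv ℝ (c • zeroExtend f.1) q :=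
          fderiv_zeroExtend (fun q => by simp [zeroExtend_apply]) q
        simp [restrict, h, fderiv_const_smul (differentiableAt_zeroExtend f q)] }
    fun f g => by
      ext q
      have h : fderiv ℝ (zeroExtend (f.1 * g.1)) q = fderiv ℝ (zeroExtend f.1 * zeroExtend g.1) q :=
        fderiv_zeroExtend (fun q => by simp [zeroExtend_apply]) q
      simp [restrict, h, fderiv_mul (differentiableAt_zeroExtend f q)
        (differentiableAt_zeroExtend g q), zeroExtend_apply]

theorem evalAt_dirDeriv (v : E) (f : smoothFunctions n X) (q : X) :
    evalAt q (dirDeriv v f) = fderiv ℝ (zeroExtend f.1) q v := rfl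

theorem evalAt_dirDeriv_restrict (v : E) {g : E → ℝ} (hg : ContDiffOn ℝ n g X) (q : X) :
    evalAt q (dirDeriv v (restrict hg)) = fderiv ℝ g q v := by
  rw [evalAt_dirDeriv, fderiv_zeroExtend (f := (restrict hg).1) (evalAt_restrict · hg)]

theorem evalAt_dirDeriv_dirDeriv (v w : E) (f : smoothFunctions n X) (q : X) :
    evalAt q (dirDeriv v (dirDeriv w f)) = fderiv ℝ (fderiv ℝ (zeroExtend f.1)) q v w := by
  have hdiff : DifferentiableAt ℝ (fderiv ℝ (zeroExtend f.1)) q :=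
    differentiableAt_of_contDiffOn (contDiffOn_fderiv_zeroExtend f) q
  rw [evalAt_dirDeriv, fderiv_zeroExtend (f := (dirDeriv w f).1)
    (g := fun p => fderiv ℝ (zeroExtend f.1) p w) (evalAt_dirDeriv w f),
    fderiv_clm_apply hdiff (differentiableAt_const w)]
  simp

theorem dirDeriv_comm (v w : E) (f : smoothFunctions n X) :
    dirDeriv v (dirDeriv w f) = dirDeriv w (dirDeriv v f) := by
  refine ext_evalAt fun q => ?_
  rw [evalAt_dirDeriv_dirDeriv, evalAt_dirDeriv_dirDeriv]
  exact (ContDiffOn.contDiffAt f.2 (X.isOpen.mem_nhds q.2)).isSymmSndFDerivAt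
    (by simpa using natCast_le 2) v w

theorem isBigO_zeroExtend_of_mem_span {ι : Type*} [Fintype ι] {Φ : ι → smoothFunctions n X}
    {f : smoothFunctions n X} (hf : f ∈ Ideal.span (Set.range Φ)) (q : X) :
    zeroExtend f.1 =O[𝓝 q.1] fun p i => zeroExtend (Φ i).1 p := by
  obtain ⟨c, rfl⟩ := Ideal.mem_span_range_iff_exists_fun.1 hf
  have hsum : zeroExtend (∑ i, c i * Φ i : smoothFunctions n X).1 =ᶠ[𝓝 q.1]
      fun p => ∑ i, zeroExtend (c i).1 p * zeroExtend (Φ i).1 p :=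
    zeroExtend_eventuallyEq (fun q => by simp [zeroExtend_apply]) q
  refine hsum.trans_isBigO (IsBigO.fun_sum fun i _ => ?_)
  have hΦ : zeroExtend (Φ i).1 =O[𝓝 q.1] fun p i => zeroExtend (Φ i).1 p :=
    isBigO_pi.1 (isBigO_refl (fun p i => zeroExtend (Φ i).1 p) (𝓝 q.1)) i
  have hc : zeroExtend (c i).1 =O[𝓝 q.1] fun _ => (1 : ℝ) :=
    (differentiableAt_zeroExtend (c i) q).continuousAt.isBigO_one ℝ
  exact isBigO_norm_right.1 (by simpa only [one_mul] using hc.mul hΦ.norm_right)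

/-- The hypothesis says that `Φ` solves a homogeneous linear system of first-order equations. -/
theorem eq_zero_of_dirDeriv_mem_span {ι κ : Type*} [Finite ι] [Finite κ]
    (hX : IsPreconnected (X : Set E)) (b : Module.Basis κ ℝ E) {Φ : ι → smoothFunctions n X}
    (hΦ : ∀ k i, dirDeriv (b k) (Φ i) ∈ Ideal.span (Set.range Φ)) {p : X}
    (h0 : ∀ i, evalAt p (Φ i) = 0) : Φ = 0 := by
  cases nonempty_fintype ι
  have hzero := eqOn_zero_of_fderiv_isBigO (Φ := fun p i => zeroExtend (Φ i).1 p) X.isOpen hX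
    (fun q hq => (differentiableAt_pi.2 fun i =>
      differentiableAt_zeroExtend (Φ i) ⟨q, hq⟩).differentiableWithinAt) ?_ p.2
    (funext fun i => (zeroExtend_apply _ p).trans (h0 i))
  · exact funext fun i => ext_evalAt fun q => by
      simpa [zeroExtend_apply] using! congrFun (hzero q.2) i
  intro q hq
  refine isBigO_of_isBigO_basis b fun k => isBigO_pi.2 fun i => ?_
  refine (Filter.EventuallyEq.trans_isBigO ?_ (isBigO_zeroExtend_of_mem_span (hΦ k i) ⟨q, hq⟩))
  refine (zeroExtend_eventuallyEq (fun q => ?_) ⟨q, hq⟩).symm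
  rw [fderiv_pi fun i => differentiableAt_zeroExtend (Φ i) q]
  rfl

end smoothFunctions

end SmoothFunctions

/-! ### Matrices and derivations -/

section MatrixDerivation

variable {k R : Type*} [CommRing k] [CommRing R] [Algebra k R] (D : Derivation k R R)

theorem map_mul_derivation {l m n : Type*} [Fintype m] (M : Matrix l m R) (N : Matrix m n R) :
    (M * N).map D = M.map D * N + M * N.map D := by
  ext i j
  simp only [Matrix.map_apply, Matrix.add_apply, Matrix.mul_apply, map_sum, Derivation.leibniz,
    smul_eq_mul, ← Finset.sum_add_distrib]
  exact Finset.sum_congr rfl fun _ _ => by ring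

theorem map_adjugate_derivation {B C Q : Matrix (Fin 3) (Fin 3) R} (hQ : Q.map D = B * Q + Q * C) :
    Q.adjugate.map D =
      (B.trace + C.trace) • Q.adjugate - Q.adjugate * B - C * Q.adjugate := by
  have hD (i j : Fin 3) : D (Q i j) = (B * Q + Q * C) i j := congrFun (congrFun hQ i) j
  simp only [Matrix.add_apply, Matrix.mul_apply, Fin.sum_univ_three] at hD
  rw [Matrix.adjugate_fin_three]
  ext i j
  simp only [Matrix.map_apply, Matrix.sub_apply, Matrix.smul_apply, Matrix.mul_apply,
    Fin.sum_univ_three, Matrix.trace_fin_three, smul_eq_mul]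
  fin_cases i <;> fin_cases j <;> simp [hD] <;> ring

/-- The infinitesimal form of `(g S gᵀ) adj(g Q gᵀ) (g S gᵀ) = (det g)² g (S adj(Q) S) gᵀ`. -/
theorem map_mul_adjugate_mul_derivation {B Q S : Matrix (Fin 3) (Fin 3) R} (hB : B.trace = 0)
    (hQ : Q.map D = B * Q + Q * Bᵀ) (hS : S.map D = B * S + S * Bᵀ) :
    (S * Q.adjugate * S).map D = B * (S * Q.adjugate * S) + S * Q.adjugate * S * Bᵀ := by
  rw [map_mul_derivation, map_mul_derivation, map_adjugate_derivation D hQ, hS,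
    Matrix.trace_transpose, hB, add_zero, zero_smul, zero_sub]
  noncomm_ring

end MatrixDerivation

theorem exists_eq_of_isSymm_fin_three {R : Type*} {S : Matrix (Fin 3) (Fin 3) R} (hS : S.IsSymm) :
    ∃ s₁₁ s₁₂ s₂₂ m₁ m₂ r, S = !![s₁₁, s₁₂, m₁; s₁₂, s₂₂, m₂; m₁, m₂, r] := by
  refine ⟨S 0 0, S 0 1, S 1 1, S 0 2, S 1 2, S 2 2, ?_⟩
  rw [Matrix.eta_fin_three S, hS.apply 0 1, hS.apply 0 2, hS.apply 1 2]
  simp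

/-! ### The prolonged connection -/

/-- The coefficients of a Liouville system over an algebra with two commuting derivations. Those of
the classical system are `A₀ = a₀`, `A₁ = 3 b₁`, `A₂ = 3 b₂`, `A₃ = a₃`. -/
structure LiouvilleData (k R : Type*) [CommRing k] [CommRing R] [Algebra k R] where
  /-- The derivation playing the role of `∂ₓ`. -/
  D₁ : Derivation k R R
  /-- The derivation playing the role of `∂_y`. -/
  D₂ : Derivation k R R
  comm : ∀ f, D₁ (D₂ f) = D₂ (D₁ f)
  (a₀ b₁ b₂ a₃ : R)

namespace LiouvilleData

variable {k R : Type*} [CommRing k] [CommRing R] [Algebra k R] (L : LiouvilleData k R)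

/-- The component `P₁₁` of the (symmetric) Ricci-type tensor of the projective structure. -/
def p₁₁ : R := L.D₁ L.b₁ - L.D₂ L.a₀ - 2 * L.b₁ ^ 2 + 2 * L.a₀ * L.b₂

/-- The component `P₁₂` of the Ricci-type tensor of the projective structure. -/
def p₁₂ : R := L.D₁ L.b₂ - L.D₂ L.b₁ + L.a₀ * L.a₃ - L.b₁ * L.b₂

/-- The component `P₂₂` of the Ricci-type tensor of the projective structure. -/
def p₂₂ : R := L.D₁ L.a₃ - L.D₂ L.b₂ - 2 * L.b₂ ^ 2 + 2 * L.a₃ * L.b₁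

/-- The first Liouville invariant, a component of the projective Cotton tensor. -/
def y₁ : R :=
  L.D₁ L.p₁₂ - L.D₂ L.p₁₁ - 2 * L.b₁ * L.p₁₂ + L.a₀ * L.p₂₂ + L.b₂ * L.p₁₁

/-- The second Liouville invariant. -/
def y₂ : R :=
  L.D₁ L.p₂₂ - L.D₂ L.p₁₂ - 2 * L.b₂ * L.p₁₂ + L.b₁ * L.p₂₂ + L.a₃ * L.p₁₁

/-- The `D₁`-component of the projective Cartan connection, in the standard representation. -/
def cartan₁ : Matrix (Fin 3) (Fin 3) R :=
  !![-L.b₁, -L.b₂, 1; L.a₀, L.b₁, 0; -L.p₁₁, -L.p₁₂, 0]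

/-- The `D₂`-component of the projective Cartan connection, in the standard representation. -/
def cartan₂ : Matrix (Fin 3) (Fin 3) R :=
  !![-L.b₂, -L.a₃, 0; L.b₁, L.b₂, 1; -L.p₁₂, -L.p₂₂, 0]

theorem trace_cartan₁ : L.cartan₁.trace = 0 := by
  simp [cartan₁, Matrix.trace, Fin.sum_univ_three]

theorem trace_cartan₂ : L.cartan₂.trace = 0 := by
  simp [cartan₂, Matrix.trace, Fin.sum_univ_three]

/-- The parallel sections of the prolonged connection on symmetric matrices: the connection induced
by the Cartan connection, corrected by the Liouville invariants in the last entry. -/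
def parallel : Submodule k (Matrix (Fin 3) (Fin 3) R) where
  carrier := {S | S.IsSymm ∧
    S.map L.D₁ = L.cartan₁ * S + S * L.cartan₁ᵀ
      + Matrix.single 2 2 (L.y₁ * S 0 1 + L.y₂ * S 1 1) ∧
    S.map L.D₂ = L.cartan₂ * S + S * L.cartan₂ᵀ
      - Matrix.single 2 2 (L.y₁ * S 0 0 + L.y₂ * S 0 1)}
  zero_mem' := ⟨Matrix.isSymm_zero, by simp, by simp⟩
  add_mem' := by
    rintro S T ⟨hS, hS₁, hS₂⟩ ⟨hT, hT₁, hT₂⟩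
    refine ⟨hS.add hT, ?_, ?_⟩
    · rw [Matrix.map_add _ (map_add L.D₁), hS₁, hT₁]
      simp only [Matrix.add_apply, mul_add, add_mul, Matrix.single_add]
      abel
    · rw [Matrix.map_add _ (map_add L.D₂), hS₂, hT₂]
      simp only [Matrix.add_apply, mul_add, add_mul, Matrix.single_add]
      abel
  smul_mem' := by
    rintro c S ⟨hS, hS₁, hS₂⟩
    refine ⟨hS.smul c, ?_, ?_⟩
    · rw [Matrix.map_smul _ c (L.D₁.map_smul c), hS₁]
      simp [smul_add, Matrix.smul_single]
    · rw [Matrix.map_smul _ c (L.D₂.map_smul c), hS₂]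
      simp [smul_sub, smul_add, Matrix.smul_single]

variable {L} {s₁₁ s₁₂ s₂₂ m₁ m₂ r ψ₁ ψ₂ ψ₃ : R} {S Q : Matrix (Fin 3) (Fin 3) R}

theorem isSymm_of_mem_parallel (hS : S ∈ L.parallel) : S.IsSymm := hS.1

theorem mul_adjugate_mul_mem_parallel (h₁ : L.y₁ = 0) (h₂ : L.y₂ = 0) (hQ : Q ∈ L.parallel)
    (hS : S ∈ L.parallel) : S * Q.adjugate * S ∈ L.parallel := by
  have hmem (T : Matrix (Fin 3) (Fin 3) R) : T ∈ L.parallel ↔ T.IsSymm ∧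
      T.map L.D₁ = L.cartan₁ * T + T * L.cartan₁ᵀ ∧
      T.map L.D₂ = L.cartan₂ * T + T * L.cartan₂ᵀ := by
    change _ ∧ _ ∧ _ ↔ _
    simp [h₁, h₂]
  rw [hmem] at *
  refine ⟨?_, map_mul_adjugate_mul_derivation L.D₁ L.trace_cartan₁ hQ.2.1 hS.2.1,
    map_mul_adjugate_mul_derivation L.D₂ L.trace_cartan₂ hQ.2.2 hS.2.2⟩
  rw [Matrix.IsSymm, Matrix.transpose_mul, Matrix.transpose_mul, hS.1.eq, Matrix.adjugate_transpose,
    hQ.1.eq, Matrix.mul_assoc]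

/-- The prolonged system, in terms of the entries of the symmetric matrix. -/
structure IsParallel (L : LiouvilleData k R) (s₁₁ s₁₂ s₂₂ m₁ m₂ r : R) : Prop where
  D₁_s₁₁ : L.D₁ s₁₁ = 2 * (m₁ - L.b₁ * s₁₁ - L.b₂ * s₁₂)
  D₁_s₁₂ : L.D₁ s₁₂ = m₂ + L.a₀ * s₁₁ - L.b₂ * s₂₂
  D₁_s₂₂ : L.D₁ s₂₂ = 2 * (L.a₀ * s₁₂ + L.b₁ * s₂₂)
  D₁_m₁ : L.D₁ m₁ = r - L.b₁ * m₁ - L.b₂ * m₂ - L.p₁₁ * s₁₁ - L.p₁₂ * s₁₂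
  D₁_m₂ : L.D₁ m₂ = L.a₀ * m₁ + L.b₁ * m₂ - L.p₁₁ * s₁₂ - L.p₁₂ * s₂₂
  D₁_r : L.D₁ r = L.y₁ * s₁₂ + L.y₂ * s₂₂ - 2 * (L.p₁₁ * m₁ + L.p₁₂ * m₂)
  D₂_s₁₁ : L.D₂ s₁₁ = -(2 * (L.b₂ * s₁₁ + L.a₃ * s₁₂))
  D₂_s₁₂ : L.D₂ s₁₂ = m₁ + L.b₁ * s₁₁ - L.a₃ * s₂₂
  D₂_s₂₂ : L.D₂ s₂₂ = 2 * (m₂ + L.b₁ * s₁₂ + L.b₂ * s₂₂)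
  D₂_m₁ : L.D₂ m₁ = -(L.b₂ * m₁) - L.a₃ * m₂ - L.p₁₂ * s₁₁ - L.p₂₂ * s₁₂
  D₂_m₂ : L.D₂ m₂ = r + L.b₁ * m₁ + L.b₂ * m₂ - L.p₁₂ * s₁₂ - L.p₂₂ * s₂₂
  D₂_r : L.D₂ r = -(L.y₁ * s₁₁) - L.y₂ * s₁₂ - 2 * (L.p₁₂ * m₁ + L.p₂₂ * m₂)

theorem mem_parallel_iff :
    !![s₁₁, s₁₂, m₁; s₁₂, s₂₂, m₂; m₁, m₂, r] ∈ L.parallel ↔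
      L.IsParallel s₁₁ s₁₂ s₂₂ m₁ m₂ r := by
  have hsymm : (!![s₁₁, s₁₂, m₁; s₁₂, s₂₂, m₂; m₁, m₂, r]).IsSymm := by
    ext i j; fin_cases i <;> fin_cases j <;> rfl
  change _ ∧ _ ∧ _ ↔ _
  rw [and_iff_right hsymm]
  simp only [← Matrix.ext_iff, Matrix.map_apply, Matrix.add_apply, Matrix.sub_apply,
    Matrix.mul_apply, Fin.sum_univ_three, Matrix.transpose_apply, Matrix.single_apply]
  constructor
  · rintro ⟨h₁, h₂⟩
    refine ⟨(h₁ 0 0).trans ?_, (h₁ 0 1).trans ?_, (h₁ 1 1).trans ?_, (h₁ 0 2).trans ?_,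
      (h₁ 1 2).trans ?_, (h₁ 2 2).trans ?_, (h₂ 0 0).trans ?_, (h₂ 0 1).trans ?_,
      (h₂ 1 1).trans ?_, (h₂ 0 2).trans ?_, (h₂ 1 2).trans ?_, (h₂ 2 2).trans ?_⟩ <;>
      simp [cartan₁, cartan₂] <;> ring
  · rintro ⟨⟩
    constructor <;> intro i j <;> fin_cases i <;> fin_cases j <;>
      simp [cartan₁, cartan₂, *] <;> ring

theorem exists_isParallel_of_mem_parallel (hS : S ∈ L.parallel) :
    ∃ s₁₁ s₁₂ s₂₂ m₁ m₂ r, S = !![s₁₁, s₁₂, m₁; s₁₂, s₂₂, m₂; m₁, m₂, r] ∧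
      L.IsParallel s₁₁ s₁₂ s₂₂ m₁ m₂ r := by
  obtain ⟨s₁₁, s₁₂, s₂₂, m₁, m₂, r, rfl⟩ := exists_eq_of_isSymm_fin_three hS.1
  exact ⟨s₁₁, s₁₂, s₂₂, m₁, m₂, r, rfl, mem_parallel_iff.1 hS⟩

variable (L) in
/-- The solutions `(ψ₁, ψ₂, ψ₃)` of the Liouville system. -/
def solutions : Submodule k (R × R × R) where
  carrier := {ψ | L.D₁ ψ.1 = 2 * L.b₁ * ψ.1 - 2 * L.a₀ * ψ.2.1 ∧
    L.D₂ ψ.2.2 = 2 * L.a₃ * ψ.2.1 - 2 * L.b₂ * ψ.2.2 ∧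
    L.D₂ ψ.1 + 2 * L.D₁ ψ.2.1
      = 4 * L.b₂ * ψ.1 - 2 * L.b₁ * ψ.2.1 - 2 * L.a₀ * ψ.2.2 ∧
    L.D₁ ψ.2.2 + 2 * L.D₂ ψ.2.1
      = 2 * L.a₃ * ψ.1 - 4 * L.b₁ * ψ.2.2 + 2 * L.b₂ * ψ.2.1}
  zero_mem' := by simp
  add_mem' := by
    rintro ψ φ ⟨hψ₁, hψ₂, hψ₃, hψ₄⟩ ⟨hφ₁, hφ₂, hφ₃, hφ₄⟩
    simp only [Set.mem_ofPred_eq, Prod.fst_add, Prod.snd_add, map_add]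
    exact ⟨by linear_combination hψ₁ + hφ₁, by linear_combination hψ₂ + hφ₂,
      by linear_combination hψ₃ + hφ₃, by linear_combination hψ₄ + hφ₄⟩
  smul_mem' := by
    rintro c ψ ⟨hψ₁, hψ₂, hψ₃, hψ₄⟩
    simp only [Set.mem_ofPred_eq, Prod.smul_fst, Prod.smul_snd, Derivation.map_smul]
    simp only [Algebra.smul_def]
    let c' := algebraMap k R c
    exact ⟨by linear_combination c' * hψ₁, by linear_combination c' * hψ₂,
      by linear_combination c' * hψ₃, by linear_combination c' * hψ₄⟩

theorem IsParallel.mem_solutions (h : L.IsParallel s₁₁ s₁₂ s₂₂ m₁ m₂ r) :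
    (s₂₂, -s₁₂, s₁₁) ∈ L.solutions := by
  refine ⟨?_, ?_, ?_, ?_⟩ <;>
    simp only [map_neg, h.D₁_s₁₁, h.D₁_s₁₂, h.D₁_s₂₂, h.D₂_s₁₁, h.D₂_s₁₂, h.D₂_s₂₂] <;> ring

/-- The remaining equations of the prolonged system follow from commuting the derivatives of
`s₁₁, s₁₂, s₂₂, m₁, m₂`. -/
theorem exists_isParallel_of_forall_eq (h2 : IsLeftRegular (2 : R))
    (x₁₁ : L.D₁ s₁₁ = 2 * (m₁ - L.b₁ * s₁₁ - L.b₂ * s₁₂))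
    (x₁₂ : L.D₁ s₁₂ = m₂ + L.a₀ * s₁₁ - L.b₂ * s₂₂)
    (x₂₂ : L.D₁ s₂₂ = 2 * (L.a₀ * s₁₂ + L.b₁ * s₂₂))
    (y₁₁ : L.D₂ s₁₁ = -(2 * (L.b₂ * s₁₁ + L.a₃ * s₁₂)))
    (y₁₂ : L.D₂ s₁₂ = m₁ + L.b₁ * s₁₁ - L.a₃ * s₂₂)
    (y₂₂ : L.D₂ s₂₂ = 2 * (m₂ + L.b₁ * s₁₂ + L.b₂ * s₂₂)) :
    ∃ r, L.IsParallel s₁₁ s₁₂ s₂₂ m₁ m₂ r := by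
  have D₁_two : L.D₁ (2 : R) = 0 := by simpa using L.D₁.map_natCast 2
  have D₂_two : L.D₂ (2 : R) = 0 := by simpa using L.D₂.map_natCast 2
  have hp₁₁ := p₁₁.eq_def L
  have hp₁₂ := p₁₂.eq_def L
  have hp₂₂ := p₂₂.eq_def L
  have comm₁₁ := L.comm s₁₁
  have comm₁₂ := L.comm s₁₂
  have comm₂₂ := L.comm s₂₂
  simp only [x₁₁, x₁₂, x₂₂, y₁₁, y₁₂, y₂₂, map_add, map_sub, map_neg, Derivation.leibniz,
    smul_eq_mul, D₁_two, D₂_two] at comm₁₁ comm₁₂ comm₂₂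
  obtain ⟨r, hr⟩ : ∃ r, r = L.D₁ m₁ + L.p₁₁ * s₁₁ + L.p₁₂ * s₁₂ + L.b₁ * m₁ + L.b₂ * m₂ := ⟨_, rfl⟩
  have D₁_m₁ : L.D₁ m₁ = r - L.b₁ * m₁ - L.b₂ * m₂ - L.p₁₁ * s₁₁ - L.p₁₂ * s₁₂ := by
    linear_combination -hr
  have D₁_m₂ : L.D₁ m₂ = L.a₀ * m₁ + L.b₁ * m₂ - L.p₁₁ * s₁₂ - L.p₁₂ * s₂₂ := h2 <| by
    linear_combination comm₂₂ + 2 * s₁₂ * hp₁₁ + 2 * s₂₂ * hp₁₂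
  have D₂_m₁ : L.D₂ m₁ = -(L.b₂ * m₁) - L.a₃ * m₂ - L.p₁₂ * s₁₁ - L.p₂₂ * s₁₂ := h2 <| by
    linear_combination -comm₁₁ + 2 * s₁₁ * hp₁₂ + 2 * s₁₂ * hp₂₂
  have D₂_m₂ : L.D₂ m₂ = r + L.b₁ * m₁ + L.b₂ * m₂ - L.p₁₂ * s₁₂ - L.p₂₂ * s₂₂ := by
    linear_combination -comm₁₂ + D₁_m₁ - s₁₁ * hp₁₁ + s₂₂ * hp₂₂
  have comm₁ := L.comm m₁
  have comm₂ := L.comm m₂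
  simp only [x₁₁, x₁₂, x₂₂, y₁₁, y₁₂, y₂₂, D₁_m₁, D₁_m₂, D₂_m₁, D₂_m₂, map_add, map_sub, map_neg,
    Derivation.leibniz, smul_eq_mul] at comm₁ comm₂
  refine ⟨r, x₁₁, x₁₂, x₂₂, D₁_m₁, D₁_m₂, ?_, y₁₁, y₁₂, y₂₂, D₂_m₁, D₂_m₂, ?_⟩
  · linear_combination comm₂ - s₁₂ * y₁.eq_def L - s₂₂ * y₂.eq_def L + m₁ * hp₁₁ + m₂ * hp₁₂
  · linear_combination -comm₁ + s₁₁ * y₁.eq_def L + s₁₂ * y₂.eq_def L + m₁ * hp₁₂ + m₂ * hp₂₂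

theorem exists_isParallel (h2 : IsLeftRegular (2 : R)) (h : (ψ₁, ψ₂, ψ₃) ∈ L.solutions) :
    ∃ m₁ m₂ r, L.IsParallel ψ₃ (-ψ₂) ψ₁ m₁ m₂ r := by
  obtain ⟨h₁, h₂, h₃, h₄⟩ := h
  dsimp only at h₁ h₂ h₃ h₄
  obtain ⟨r, hr⟩ := exists_isParallel_of_forall_eq (L := L) (s₁₁ := ψ₃) (s₁₂ := -ψ₂) (s₂₂ := ψ₁)
    (m₁ := L.D₂ (-ψ₂) + L.a₃ * ψ₁ - L.b₁ * ψ₃) (m₂ := L.D₁ (-ψ₂) + L.b₂ * ψ₁ - L.a₀ * ψ₃) h2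
    (by rw [map_neg]; linear_combination h₄) (by ring) (by linear_combination h₁)
    (by linear_combination h₂) (by ring) (by rw [map_neg]; linear_combination h₃)
  exact ⟨_, _, r, hr⟩

theorem IsParallel.eq_zero (h : L.IsParallel 0 0 0 m₁ m₂ r) : m₁ = 0 ∧ m₂ = 0 ∧ r = 0 := by
  have hm₁ : m₁ = 0 := by simpa using h.D₂_s₁₂.symm
  have hm₂ : m₂ = 0 := by simpa using h.D₁_s₁₂.symm
  subst hm₁ hm₂
  exact ⟨rfl, rfl, by simpa using h.D₁_m₁.symm⟩

variable (L) in
/-- The components `(s₂₂, -s₁₂, s₁₁)` of a parallel section solve the Liouville system, and every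
solution arises from a unique parallel section. -/
noncomputable def parallelEquivSolutions (h2 : IsLeftRegular (2 : R)) :
    L.parallel ≃ₗ[k] L.solutions :=
  LinearEquiv.ofBijective
    (((Matrix.entryLinearMap k R (1 : Fin 3) (1 : Fin 3)).prod
      ((-Matrix.entryLinearMap k R 0 1).prod (Matrix.entryLinearMap k R 0 0))).restrict
      fun S hS => by
        obtain ⟨s₁₁, s₁₂, s₂₂, m₁, m₂, r, rfl, h⟩ := exists_isParallel_of_mem_parallel hS
        exact h.mem_solutions)
    ⟨(injective_iff_map_eq_zero _).2 fun ⟨S, hS⟩ hψ => by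
        obtain ⟨s₁₁, s₁₂, s₂₂, m₁, m₂, r, rfl, h⟩ := exists_isParallel_of_mem_parallel hS
        obtain ⟨rfl, rfl, rfl⟩ : s₂₂ = 0 ∧ s₁₂ = 0 ∧ s₁₁ = 0 := by
          simpa [LinearMap.restrict_apply] using hψ
        obtain ⟨rfl, rfl, rfl⟩ := h.eq_zero
        exact Subtype.ext <| by ext i j; fin_cases i <;> fin_cases j <;> rfl,
      fun ⟨⟨ψ₁, ψ₂, ψ₃⟩, hψ⟩ => by
        obtain ⟨m₁, m₂, r, h⟩ := exists_isParallel h2 hψ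
        exact ⟨⟨_, mem_parallel_iff.2 h⟩, Subtype.ext <| by simp⟩⟩

/-- Equality of the mixed derivatives of `r`: the curvature of the prolonged connection annihilates
its parallel sections. -/
theorem IsParallel.curvature_eq_zero (h : L.IsParallel s₁₁ s₁₂ s₂₂ m₁ m₂ r) :
    (L.D₁ L.y₁ - L.b₁ * L.y₁ + L.a₀ * L.y₂) * s₁₁ +
      (L.D₂ L.y₁ + L.D₁ L.y₂ - 2 * L.b₂ * L.y₁ + 2 * L.b₁ * L.y₂) * s₁₂ +
      (L.D₂ L.y₂ - L.a₃ * L.y₁ + L.b₂ * L.y₂) * s₂₂ + 5 * (L.y₁ * m₁ + L.y₂ * m₂) = 0 := by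
  have D₁_two : L.D₁ (2 : R) = 0 := by simpa using L.D₁.map_natCast 2
  have D₂_two : L.D₂ (2 : R) = 0 := by simpa using L.D₂.map_natCast 2
  have comm := L.comm r
  simp only [h.D₁_r, h.D₂_r, h.D₁_s₁₁, h.D₁_s₁₂, h.D₂_s₁₂, h.D₂_s₂₂, h.D₁_m₁, h.D₁_m₂, h.D₂_m₁,
    h.D₂_m₂, map_add, map_sub, map_neg, Derivation.leibniz, smul_eq_mul, D₁_two, D₂_two] at comm
  linear_combination -comm + 2 * m₁ * y₁.eq_def L + 2 * m₂ * y₂.eq_def L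

theorem IsParallel.map_r_eq_zero {K : Type*} [Field K] [CharZero K] {φ : R →+* K}
    (hφ : φ L.y₁ ≠ 0 ∨ φ L.y₂ ≠ 0) (h : L.IsParallel s₁₁ s₁₂ s₂₂ m₁ m₂ r) (h₁₁ : φ s₁₁ = 0)
    (h₁₂ : φ s₁₂ = 0) (h₂₂ : φ s₂₂ = 0) (h₁ : φ m₁ = 0) (h₂ : φ m₂ = 0) : φ r = 0 := by
  have D₁_five : L.D₁ (5 : R) = 0 := by simpa using L.D₁.map_natCast 5
  have D₂_five : L.D₂ (5 : R) = 0 := by simpa using L.D₂.map_natCast 5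
  have hr₁ := congrArg (fun x => φ (L.D₁ x)) h.curvature_eq_zero
  have hr₂ := congrArg (fun x => φ (L.D₂ x)) h.curvature_eq_zero
  simp only [map_add, Derivation.leibniz, smul_eq_mul, h.D₁_s₁₁, h.D₁_s₁₂, h.D₁_s₂₂, h.D₁_m₁,
    h.D₁_m₂, D₁_five, map_mul, map_sub, map_ofNat, map_zero, h₁₁, h₁₂, h₂₂, h₁, h₂] at hr₁
  simp only [map_add, Derivation.leibniz, smul_eq_mul, h.D₂_s₁₁, h.D₂_s₁₂, h.D₂_s₂₂, h.D₂_m₁,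
    h.D₂_m₂, D₂_five, map_mul, map_sub, map_neg, map_ofNat, map_zero, h₁₁, h₁₂, h₂₂, h₁, h₂] at hr₂
  rcases hφ with hy | hy
  · exact (mul_eq_zero.1 (show φ L.y₁ * φ r = 0 by linear_combination hr₁ / 5)).resolve_left hy
  · exact (mul_eq_zero.1 (show φ L.y₂ * φ r = 0 by linear_combination hr₂ / 5)).resolve_left hy

theorem D₁_apply_mem_of_mem_parallel (hS : S ∈ L.parallel) {I : Ideal R} (hI : ∀ i j, S i j ∈ I)
    (i j : Fin 3) : L.D₁ (S i j) ∈ I := by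
  rw [← Matrix.map_apply (f := L.D₁), hS.2.1, Matrix.add_apply, Matrix.add_apply,
    Matrix.mul_apply, Matrix.mul_apply, Matrix.single_apply]
  refine I.add_mem (I.add_mem (I.sum_mem fun _ _ => I.mul_mem_left _ (hI _ _))
    (I.sum_mem fun _ _ => I.mul_mem_right _ (hI _ _))) ?_
  split_ifs
  exacts [I.add_mem (I.mul_mem_left _ (hI _ _)) (I.mul_mem_left _ (hI _ _)), I.zero_mem]

theorem D₂_apply_mem_of_mem_parallel (hS : S ∈ L.parallel) {I : Ideal R} (hI : ∀ i j, S i j ∈ I)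
    (i j : Fin 3) : L.D₂ (S i j) ∈ I := by
  rw [← Matrix.map_apply (f := L.D₂), hS.2.2, Matrix.sub_apply, Matrix.add_apply,
    Matrix.mul_apply, Matrix.mul_apply, Matrix.single_apply]
  refine I.sub_mem (I.add_mem (I.sum_mem fun _ _ => I.mul_mem_left _ (hI _ _))
    (I.sum_mem fun _ _ => I.mul_mem_right _ (hI _ _))) ?_
  split_ifs
  exacts [I.add_mem (I.mul_mem_left _ (hI _ _)) (I.mul_mem_left _ (hI _ _)), I.zero_mem]

/-! ### The dimension of the space of parallel sections -/

section Field

variable {K R : Type*} [Field K] [CommRing R] [Algebra K R] {L : LiouvilleData K R} {φ : R →ₐ[K] K}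

theorem finrank_parallel_le_card {ι : Type*} [Fintype ι] (I : ι → Fin 3 × Fin 3)
    (hI : ∀ S ∈ L.parallel, (∀ t, φ (S (I t).1 (I t).2) = 0) → S = 0) :
    Module.finrank K L.parallel ≤ Fintype.card ι := by
  let ev : L.parallel →ₗ[K] ι → K := LinearMap.pi fun t =>
    φ.toLinearMap ∘ₗ Matrix.entryLinearMap K R (I t).1 (I t).2 ∘ₗ L.parallel.subtype
  have hev : Function.Injective ev := (injective_iff_map_eq_zero _).2 fun S hS =>
    Subtype.ext <| hI S.1 S.2 fun t => congrFun hS t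
  exact (LinearMap.finrank_le_finrank_of_injective hev).trans_eq
    (Module.finrank_fintype_fun_eq_card K)

theorem finrank_parallel_le_four [CharZero K] (hφ : ∀ S ∈ L.parallel, S.map φ = 0 → S = 0)
    (hy : φ L.y₁ ≠ 0 ∨ φ L.y₂ ≠ 0) : Module.finrank K L.parallel ≤ 4 := by
  have hvanish {s₁₁ s₁₂ s₂₂ m₁ m₂ r : R} (h : L.IsParallel s₁₁ s₁₂ s₂₂ m₁ m₂ r) (h₁₁ : φ s₁₁ = 0)
      (h₁₂ : φ s₁₂ = 0) (h₂₂ : φ s₂₂ = 0) (h₁ : φ m₁ = 0) (h₂ : φ m₂ = 0) :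
      !![s₁₁, s₁₂, m₁; s₁₂, s₂₂, m₂; m₁, m₂, r] = 0 := by
    have hr := h.map_r_eq_zero (φ := (φ : R →+* K)) hy h₁₁ h₁₂ h₂₂ h₁ h₂
    refine hφ _ (mem_parallel_iff.2 h) ?_
    ext i j
    fin_cases i <;> fin_cases j <;> assumption
  have hcurv {s₁₁ s₁₂ s₂₂ m₁ m₂ r : R} (h : L.IsParallel s₁₁ s₁₂ s₂₂ m₁ m₂ r) (h₁₁ : φ s₁₁ = 0)
      (h₁₂ : φ s₁₂ = 0) (h₂₂ : φ s₂₂ = 0) : φ L.y₁ * φ m₁ + φ L.y₂ * φ m₂ = 0 := by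
    simpa [h₁₁, h₁₂, h₂₂, map_ofNat φ 5] using congrArg φ h.curvature_eq_zero
  rcases hy with hy₁ | hy₂
  · refine finrank_parallel_le_card (φ := φ) ![(0, 0), (0, 1), (1, 1), (1, 2)] fun S hS hzero => ?_
    obtain ⟨s₁₁, s₁₂, s₂₂, m₁, m₂, r, rfl, h⟩ := exists_isParallel_of_mem_parallel hS
    obtain ⟨h₁₁, h₁₂, h₂₂, h₂⟩ : φ s₁₁ = 0 ∧ φ s₁₂ = 0 ∧ φ s₂₂ = 0 ∧ φ m₂ = 0 := by
      simpa [Fin.forall_fin_succ] using hzero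
    have h₁ : φ m₁ = 0 := by simpa [h₂, hy₁] using hcurv h h₁₁ h₁₂ h₂₂
    exact hvanish h h₁₁ h₁₂ h₂₂ h₁ h₂
  · refine finrank_parallel_le_card (φ := φ) ![(0, 0), (0, 1), (1, 1), (0, 2)] fun S hS hzero => ?_
    obtain ⟨s₁₁, s₁₂, s₂₂, m₁, m₂, r, rfl, h⟩ := exists_isParallel_of_mem_parallel hS
    obtain ⟨h₁₁, h₁₂, h₂₂, h₁⟩ : φ s₁₁ = 0 ∧ φ s₁₂ = 0 ∧ φ s₂₂ = 0 ∧ φ m₁ = 0 := by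
      simpa [Fin.forall_fin_succ] using hzero
    have h₂ : φ m₂ = 0 := by simpa [h₁, hy₂] using hcurv h h₁₁ h₁₂ h₂₂
    exact hvanish h h₁₁ h₁₂ h₂₂ h₁ h₂

/-- The values of the parallel sections at the point `φ`. -/
def fiber (L : LiouvilleData K R) (φ : R →ₐ[K] K) : Submodule K (Matrix (Fin 3) (Fin 3) K) :=
  L.parallel.map φ.mapMatrix.toLinearMap

theorem fiber_le_symmetricMatrices : L.fiber φ ≤ symmetricMatrices (Fin 3) K := by
  rintro _ ⟨S, hS, rfl⟩
  exact (isSymm_of_mem_parallel hS).map φ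

/-- A parallel section is determined by its value at the point `φ`. -/
noncomputable def parallelEquivFiber (hφ : ∀ S ∈ L.parallel, S.map φ = 0 → S = 0) :
    L.parallel ≃ₗ[K] L.fiber φ :=
  LinearEquiv.ofBijective (φ.mapMatrix.toLinearMap.submoduleMap L.parallel)
    ⟨(injective_iff_map_eq_zero _).2 fun S hS =>
        Subtype.ext <| hφ S.1 S.2 <| congrArg Subtype.val hS,
      LinearMap.submoduleMap_surjective _ _⟩

theorem mul_adjugate_mul_mem_fiber (h₁ : L.y₁ = 0) (h₂ : L.y₂ = 0) {Q S : Matrix (Fin 3) (Fin 3) K}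
    (hQ : Q ∈ L.fiber φ) (hS : S ∈ L.fiber φ) : S * Q.adjugate * S ∈ L.fiber φ := by
  obtain ⟨Q, hQ, rfl⟩ := hQ
  obtain ⟨S, hS, rfl⟩ := hS
  refine ⟨_, mul_adjugate_mul_mem_parallel h₁ h₂ hQ hS, ?_⟩
  change φ.mapMatrix _ = φ.mapMatrix S * (φ.mapMatrix Q).adjugate * φ.mapMatrix S
  rw [map_mul, map_mul, AlgHom.map_adjugate]

theorem finrank_fiber_ne_five [Invertible (2 : K)] (h₁ : L.y₁ = 0) (h₂ : L.y₂ = 0) :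
    Module.finrank K (L.fiber φ) ≠ 5 := by
  intro h5
  have h6 : Module.finrank K (symmetricMatrices (Fin 3) K) = 6 := finrank_symmetricMatrices _ _
  obtain ⟨f, hf⟩ := exists_dual_forall_mem_iff_of_finrank_add_one
    (fiber_le_symmetricMatrices (L := L) (φ := φ)) (by rw [h5, h6])
  have hzero {M : Matrix (Fin 3) (Fin 3) K} (hM : M.IsSymm) : f M = 0 := by
    refine eq_zero_of_ker_closed_mul_adjugate_mul (fun Q S hQ hS hfQ hfS => ?_) hM
    have hmem := mul_adjugate_mul_mem_fiber h₁ h₂ ((hf Q hQ).2 hfQ) ((hf S hS).2 hfS)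
    exact (hf _ (fiber_le_symmetricMatrices hmem)).1 hmem
  have hle : symmetricMatrices (Fin 3) K ≤ L.fiber φ := fun M hM => (hf M hM).2 (hzero hM)
  have := Submodule.finrank_mono hle
  lia

/-- A basis of the space of solutions, transported from the parallel sections. -/
noncomputable def finBasisSolutions [Module.Finite K L.parallel] (h2 : IsLeftRegular (2 : R)) :
    Module.Basis (Fin (Module.finrank K L.parallel)) K L.solutions :=
  (Module.finBasis K L.parallel).map (L.parallelEquivSolutions h2)

end Field

end LiouvilleData

/-! ### Smooth Liouville systems on a planar domain -/

section Planar

open TopologicalSpace smoothFunctions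
open scoped ContDiff

variable {n : WithTop ℕ∞} [Fact (∞ ≤ n)] {X : Opens (ℝ × ℝ)}

/-- The coefficients of a Liouville system with functions of class `C^n` on a planar open set. -/
noncomputable def planarLiouvilleData (a₀ b₁ b₂ a₃ : smoothFunctions n X) :
    LiouvilleData ℝ (smoothFunctions n X) where
  D₁ := dirDeriv (1, 0)
  D₂ := dirDeriv (0, 1)
  comm := dirDeriv_comm _ _
  a₀ := a₀
  b₁ := b₁
  b₂ := b₂
  a₃ := a₃

variable {a₀ b₁ b₂ a₃ : smoothFunctions n X}

theorem eq_zero_of_mem_parallel (hX : IsPreconnected (X : Set (ℝ × ℝ)))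
    {S : Matrix (Fin 3) (Fin 3) (smoothFunctions n X)}
    (hS : S ∈ (planarLiouvilleData a₀ b₁ b₂ a₃).parallel) {q : X} (hq : S.map (evalAt q) = 0) :
    S = 0 := by
  have hmem (i j : Fin 3) : S i j ∈ Ideal.span (Set.range fun t : Fin 3 × Fin 3 => S t.1 t.2) :=
    Ideal.subset_span ⟨(i, j), rfl⟩
  have hzero : (fun t : Fin 3 × Fin 3 => S t.1 t.2) = 0 :=
    eq_zero_of_dirDeriv_mem_span hX (Module.Basis.finTwoProd ℝ)
      (Fin.forall_fin_two.2
        ⟨fun t => by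
          rw [Module.Basis.finTwoProd_zero]
          exact LiouvilleData.D₁_apply_mem_of_mem_parallel hS hmem t.1 t.2,
        fun t => by
          rw [Module.Basis.finTwoProd_one]
          exact LiouvilleData.D₂_apply_mem_of_mem_parallel hS hmem t.1 t.2⟩)
      (fun t => congrFun (congrFun hq t.1) t.2)
  exact Matrix.ext fun i j => congrFun hzero (i, j)

theorem finrank_parallel_mem (hX : IsConnected (X : Set (ℝ × ℝ))) :
    Module.Finite ℝ (planarLiouvilleData a₀ b₁ b₂ a₃).parallel ∧
      Module.finrank ℝ (planarLiouvilleData a₀ b₁ b₂ a₃).parallel ∈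
        ({0, 1, 2, 3, 4, 6} : Set ℕ) := by
  set L := planarLiouvilleData a₀ b₁ b₂ a₃
  have hinj (q : X) : ∀ S ∈ L.parallel, S.map (evalAt q) = 0 → S = 0 := fun S hS =>
    eq_zero_of_mem_parallel hX.isPreconnected hS
  obtain ⟨p, hp⟩ := hX.nonempty
  let e := LiouvilleData.parallelEquivFiber (hinj ⟨p, hp⟩)
  refine ⟨Module.Finite.equiv e.symm, ?_⟩
  have hle : Module.finrank ℝ L.parallel ≤ 6 :=
    calc Module.finrank ℝ L.parallel
      _ = Module.finrank ℝ (L.fiber (evalAt ⟨p, hp⟩)) := e.finrank_eq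
      _ ≤ Module.finrank ℝ (symmetricMatrices (Fin 3) ℝ) :=
        Submodule.finrank_mono LiouvilleData.fiber_le_symmetricMatrices
      _ = 6 := finrank_symmetricMatrices (Fin 3) ℝ
  have hne : Module.finrank ℝ L.parallel ≠ 5 := by
    by_cases hflat : ∀ q : X, evalAt q L.y₁ = 0 ∧ evalAt q L.y₂ = 0
    · rw [e.finrank_eq]
      exact LiouvilleData.finrank_fiber_ne_five
        (ext_evalAt fun q => (hflat q).1.trans (map_zero _).symm)
        (ext_evalAt fun q => (hflat q).2.trans (map_zero _).symm)
    · push Not at hflat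
      obtain ⟨q, hq⟩ := hflat
      have := LiouvilleData.finrank_parallel_le_four (hinj q) (by tauto)
      lia
  simp only [Set.mem_insert_iff, Set.mem_singleton_iff]
  lia

theorem exists_basis_solutions (hX : IsConnected (X : Set (ℝ × ℝ))) :
    ∃ d ∈ ({0, 1, 2, 3, 4, 6} : Set ℕ),
      Nonempty (Module.Basis (Fin d) ℝ (planarLiouvilleData a₀ b₁ b₂ a₃).solutions) := by
  obtain ⟨hfin, hdim⟩ := finrank_parallel_mem (a₀ := a₀) (b₁ := b₁) (b₂ := b₂) (a₃ := a₃) hX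
  exact ⟨_, hdim, ⟨LiouvilleData.finBasisSolutions isLeftRegular_two⟩⟩

end Planar

/-! ### Solutions as functions on the plane -/

section Plane

open TopologicalSpace smoothFunctions
open scoped ContDiff

theorem pdx_eq_fderiv {g : ℝ × ℝ → ℝ} {p : ℝ × ℝ} (hg : DifferentiableAt ℝ g p) :
    pdx g p = fderiv ℝ g p (1, 0) :=
  (hg.hasFDerivAt.comp_hasDerivAt p.1
    ((hasDerivAt_id p.1).prodMk (hasDerivAt_const p.1 p.2))).deriv

theorem pdy_eq_fderiv {g : ℝ × ℝ → ℝ} {p : ℝ × ℝ} (hg : DifferentiableAt ℝ g p) :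
    pdy g p = fderiv ℝ g p (0, 1) :=
  (hg.hasFDerivAt.comp_hasDerivAt p.2
    ((hasDerivAt_const p.2 p.1).prodMk (hasDerivAt_id p.2))).deriv

/-- A solution of class `C^n` of the Liouville linear system on `U`; for `n = ω` this is an
analytic solution. -/
def ContDiffLiouvilleSol (n : WithTop ℕ∞) (U : Set (ℝ × ℝ)) (A0 A1 A2 A3 : ℝ × ℝ → ℝ)
    (Ψ : (ℝ × ℝ → ℝ) × (ℝ × ℝ → ℝ) × (ℝ × ℝ → ℝ)) : Prop :=
  ContDiffOn ℝ n Ψ.1 U ∧ ContDiffOn ℝ n Ψ.2.1 U ∧ ContDiffOn ℝ n Ψ.2.2 U ∧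
    LiouvilleSystem U A0 A1 A2 A3 Ψ.1 Ψ.2.1 Ψ.2.2

theorem contDiffLiouvilleSol_omega_iff {U : Set (ℝ × ℝ)} (hU : IsOpen U)
    {A0 A1 A2 A3 : ℝ × ℝ → ℝ} {Ψ : (ℝ × ℝ → ℝ) × (ℝ × ℝ → ℝ) × (ℝ × ℝ → ℝ)} :
    ContDiffLiouvilleSol ω U A0 A1 A2 A3 Ψ ↔ AnalyticLiouvilleSol U A0 A1 A2 A3 Ψ := by
  simp only [ContDiffLiouvilleSol, AnalyticLiouvilleSol,
    contDiffOn_omega_iff_analyticOn hU.uniqueDiffOn, hU.analyticOn_iff_analyticOnNhd]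

variable {n : WithTop ℕ∞} [Fact (∞ ≤ n)] {X : Opens (ℝ × ℝ)} {A0 A1 A2 A3 g₁ g₂ g₃ : ℝ × ℝ → ℝ}

theorem evalAt_dirDeriv_restrict_eq_pdx {g : ℝ × ℝ → ℝ} (hg : ContDiffOn ℝ n g X) (q : X) :
    evalAt q (dirDeriv (1, 0) (restrict hg)) = pdx g q := by
  rw [evalAt_dirDeriv_restrict, pdx_eq_fderiv]
  exact differentiableAt_of_contDiffOn hg q

theorem evalAt_dirDeriv_restrict_eq_pdy {g : ℝ × ℝ → ℝ} (hg : ContDiffOn ℝ n g X) (q : X) :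
    evalAt q (dirDeriv (0, 1) (restrict hg)) = pdy g q := by
  rw [evalAt_dirDeriv_restrict, pdy_eq_fderiv]
  exact differentiableAt_of_contDiffOn hg q

theorem mem_solutions_iff_liouvilleSystem (hA0 : ContDiffOn ℝ n A0 X) (hA1 : ContDiffOn ℝ n A1 X)
    (hA2 : ContDiffOn ℝ n A2 X) (hA3 : ContDiffOn ℝ n A3 X) (hg₁ : ContDiffOn ℝ n g₁ X)
    (hg₂ : ContDiffOn ℝ n g₂ X) (hg₃ : ContDiffOn ℝ n g₃ X) :
    (restrict hg₁, restrict hg₂, restrict hg₃) ∈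
        (planarLiouvilleData (restrict hA0) ((1 / 3 : ℝ) • restrict hA1)
          ((1 / 3 : ℝ) • restrict hA2) (restrict hA3)).solutions ↔
      LiouvilleSystem X A0 A1 A2 A3 g₁ g₂ g₃ := by
  change _ ∧ _ ∧ _ ∧ _ ↔ _
  simp only [planarLiouvilleData, ← forall_evalAt_eq_iff, ← forall_and, LiouvilleSystem,
    Subtype.forall, map_add, map_sub, map_mul, map_smul, map_ofNat, smul_eq_mul,
    evalAt_dirDeriv_restrict_eq_pdx, evalAt_dirDeriv_restrict_eq_pdy, evalAt_restrict]
  refine forall₂_congr fun p _ => ?_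
  ring_nf

theorem koenigs_dimension_general {n : WithTop ℕ∞} (hn : ∞ ≤ n) {U : Set (ℝ × ℝ)} (hU : IsOpen U)
    (hUconn : IsConnected U) {A0 A1 A2 A3 : ℝ × ℝ → ℝ} (hA0 : ContDiffOn ℝ n A0 U)
    (hA1 : ContDiffOn ℝ n A1 U) (hA2 : ContDiffOn ℝ n A2 U) (hA3 : ContDiffOn ℝ n A3 U) :
    ∃ d : ℕ, (d = 0 ∨ d = 1 ∨ d = 2 ∨ d = 3 ∨ d = 4 ∨ d = 6) ∧
      ∃ b : Fin d → (ℝ × ℝ → ℝ) × (ℝ × ℝ → ℝ) × (ℝ × ℝ → ℝ),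
        (∀ m, ContDiffLiouvilleSol n U A0 A1 A2 A3 (b m)) ∧
        (∀ Ψ, ContDiffLiouvilleSol n U A0 A1 A2 A3 Ψ →
          ∃! c : Fin d → ℝ, ∀ p ∈ U,
            Ψ.1 p = ∑ m, c m * (b m).1 p ∧
            Ψ.2.1 p = ∑ m, c m * (b m).2.1 p ∧
            Ψ.2.2 p = ∑ m, c m * (b m).2.2 p) := by
  have : Fact (∞ ≤ n) := ⟨hn⟩
  obtain ⟨X, rfl⟩ : ∃ X : Opens (ℝ × ℝ), (X : Set (ℝ × ℝ)) = U := ⟨⟨U, hU⟩, rfl⟩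
  obtain ⟨d, hd, ⟨B⟩⟩ := exists_basis_solutions (a₀ := restrict hA0)
    (b₁ := (1 / 3 : ℝ) • restrict hA1) (b₂ := (1 / 3 : ℝ) • restrict hA2) (a₃ := restrict hA3)
    hUconn
  refine ⟨d, hd,
    fun m => (zeroExtend (B m).1.1.1, zeroExtend (B m).1.2.1.1, zeroExtend (B m).1.2.2.1),
    fun m => ⟨(B m).1.1.2, (B m).1.2.1.2, (B m).1.2.2.2, ?_⟩, ?_⟩
  · refine (mem_solutions_iff_liouvilleSystem hA0 hA1 hA2 hA3 (B m).1.1.2 (B m).1.2.1.2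
      (B m).1.2.2.2).1 ?_
    simpa only [restrict_zeroExtend] using (B m).2
  · rintro ⟨Ψ₁, Ψ₂, Ψ₃⟩ ⟨h₁, h₂, h₃, hΨ⟩
    have hmem := (mem_solutions_iff_liouvilleSystem hA0 hA1 hA2 hA3 h₁ h₂ h₃).2 hΨ
    refine (existsUnique_congr fun c => ?_).1 (B.equivFun.symm.bijective.existsUnique ⟨_, hmem⟩)
    simp only [Module.Basis.equivFun_symm_apply, Subtype.ext_iff, Prod.ext_iff,
      Submodule.coe_sum, Submodule.coe_smul, Prod.fst_sum, Prod.snd_sum, Prod.smul_fst,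
      Prod.smul_snd]
    simp only [← Subtype.ext_iff, sum_smul_eq_restrict_iff, ← forall_and, SetLike.mem_coe]

end Plane

/-- **Koenigs' theorem.** The space of real-analytic solutions of the Liouville linear
system on a connected, simply connected `U` is finite dimensional of dimension
`0, 1, 2, 3, 4` or `6` (never `5`, never more than `6`). -/
theorem koenigs_dimension (U : Set (ℝ × ℝ)) (hU : IsOpen U) (hUconn : IsConnected U)
    (hUsc : SimplyConnectedSpace U)
    (A0 A1 A2 A3 : ℝ × ℝ → ℝ)
    (hA0 : AnalyticOnNhd ℝ A0 U) (hA1 : AnalyticOnNhd ℝ A1 U)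
    (hA2 : AnalyticOnNhd ℝ A2 U) (hA3 : AnalyticOnNhd ℝ A3 U) :
    ∃ d : ℕ, (d = 0 ∨ d = 1 ∨ d = 2 ∨ d = 3 ∨ d = 4 ∨ d = 6) ∧
      ∃ b : Fin d → (ℝ × ℝ → ℝ) × (ℝ × ℝ → ℝ) × (ℝ × ℝ → ℝ),
        (∀ m, AnalyticLiouvilleSol U A0 A1 A2 A3 (b m)) ∧
        (∀ Ψ, AnalyticLiouvilleSol U A0 A1 A2 A3 Ψ →
          ∃! c : Fin d → ℝ, ∀ p ∈ U,
            Ψ.1 p = ∑ m, c m * (b m).1 p ∧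
            Ψ.2.1 p = ∑ m, c m * (b m).2.1 p ∧
            Ψ.2.2 p = ∑ m, c m * (b m).2.2 p) := by
  simpa only [contDiffLiouvilleSol_omega_iff hU] using koenigs_dimension_general le_top hU hUconn
    (hA0.contDiffOn hU.uniqueDiffOn) (hA1.contDiffOn hU.uniqueDiffOn)
    (hA2.contDiffOn hU.uniqueDiffOn) (hA3.contDiffOn hU.uniqueDiffOn)
end
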